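/- Let θ > 0 and let Ω ⊂ ℝ² be a bounded open set. Let u ∈ C²(ℝ²) satisfy arctan λ₁(D²u(x)) + arctan λ₂(D²u(x)) = θ + f(x) for all x ∈ ℝ², where f is continuous on ℝ², Lipschitz on ℝ² ∖ closure(Ω), θ + f(x) ∈ (0,π) for all x, and f satisfies the decay condition D(β) relative to u for some β with 1 < β ≤ 2. Then there exist A ∈ 𝒜_θ and b ∈ ℝ² such that for every α ∈ (0,1) there exist C > 0 and R > 1 such that for all |x| ≥ R: |Dᵏ(u(x) − ½ xᵀAx − bᵀx)| ≤ C |x|^{2−β−k} (ln|x|)^{2(⌊β⌋−1)} for k = 0,1,2, and [D²(u − ½ xᵀAx − bᵀx)]_{C^{0,α}(closed ball B̄_{|x|/2}(x))} ≤ C |x|^{−β−α} (ln|x|)^{2(⌊β⌋−1)}, where ⌊β⌋ denotes the integer part of β (so the logarithmic exponent is 0 for 1 < β < 2 and 2 for β = 2). -/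

import Mathlib

/-! The plane is identified with `ℂ`, the gradient of `u` with a map `P : ℂ → ℂ`, and the phase equation
with phase `Θ = θ + f ∈ (0, π)` is rewritten as `det H + q tr H = 1`, `H₁₁ + q > 0`, where `H = D²u`
and `q = cot Θ` (`phase_algebra`).

*The limit phase is below `π`.* If `θ ≥ π`, then `H₁₁ > -q ≳ 1/|f| ≳ (|x| + |Du|)^β` far away, so
that `∂₁u` solves a superlinear differential inequality along a ray and blows up (`theta_lt_pi`).
Hence `q` tends to `q₀ = cot θ` at the rate prescribed for `f` (`core_of`).

*Linearization by a change of variables.* With `σ = √(1+q₀²) + q₀` and `τ = 1/σ`, put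
`Z = Du + σ x` and `Y = Du - τ x`. Were `q` equal to `q₀`, the function `conj Y` would be
holomorphic in `Z`; in general `|∂ conj Y / ∂Z̄| ≤ 3 |q - q₀|` (`trace_bound`, `Core.change_var`).
The equation makes `H + q` positive definite, so `Z` is strongly monotone up to a bounded defect
(`Core.mono`), hence injective near infinity, and its image contains the exterior of a disc. Since the
decay hypothesis is in terms of `|x| + |Du| ≳ |Z|`, the function `w(Z) = conj Y` has linear growth and
`|∂w/∂Z̄| ≲ |Z|^{-β}`. By the Cauchy–Pompeiu formula (`cauchy_pompeiu`) and the decay of the Cauchy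
potential (`pot_bound`), `w(Z) = A Z + B + O(|Z|^{1-β} (ln|Z|)^{⌊β⌋-1})` (`global_structure`).
Monotonicity of `Z` forces `|A| < 1` (`Core.global_result`), so that the relation can be solved for
`Du`, and `|Z|` is comparable to `|x|`.

*Second derivatives.* Around a far-away point `x₀`, the same change of variables is made with `q(x₀)`
in place of `q₀`. Then `∂w/∂Z̄` vanishes linearly at the centre, by the Lipschitz part of the decay
condition, and the kernel `1/(ζ-z) - 1/ζ - z/ζ² = z²/(ζ²(ζ-z))` gives a `C^{1,α}` expansion at the
centre with absolutely convergent integrals (`taylor_scaled`, `Core.local_expansion`). Translating it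
back gives first-order expansions of `Du` at all far-away points, with uniform constants, whose
comparison at nearby points is the Hölder estimate for `D²u` (`Core.holder`).

*Conclusion.* The bounds for `Du` integrate along rays to that for `u`, which costs one more
logarithm for `β = 2` (`growth`); the limit matrix has phase `θ` by continuity (`phase_limit`).
-/

open Real MeasureTheory

noncomputable section

abbrev E2 : Type := EuclideanSpace ℝ (Fin 2)

/-- Entries of the Hessian matrix `D²u(x)`. -/
noncomputable def Hess (u : E2 → ℝ) (x : E2) : Matrix (Fin 2) (Fin 2) ℝ :=
  Matrix.of fun i j =>
    iteratedFDeriv ℝ 2 u x ![EuclideanSpace.single i 1, EuclideanSpace.single j 1]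

/-- Smaller eigenvalue of a symmetric `2×2` real matrix. -/
noncomputable def lam1 (M : Matrix (Fin 2) (Fin 2) ℝ) : ℝ :=
  ((M 0 0 + M 1 1) - Real.sqrt ((M 0 0 - M 1 1) ^ 2 + 4 * M 0 1 ^ 2)) / 2

/-- Larger eigenvalue of a symmetric `2×2` real matrix. -/
noncomputable def lam2 (M : Matrix (Fin 2) (Fin 2) ℝ) : ℝ :=
  ((M 0 0 + M 1 1) + Real.sqrt ((M 0 0 - M 1 1) ^ 2 + 4 * M 0 1 ^ 2)) / 2

/-- The Lagrangian phase `F(M) = arctan λ₁(M) + arctan λ₂(M)`. -/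
noncomputable def Phase (M : Matrix (Fin 2) (Fin 2) ℝ) : ℝ :=
  Real.arctan (lam1 M) + Real.arctan (lam2 M)

/-- `𝒜_θ`: symmetric `2×2` matrices with phase `θ`. -/
def calA (θ : ℝ) : Set (Matrix (Fin 2) (Fin 2) ℝ) := {M | M.IsSymm ∧ Phase M = θ}

/-- The quadratic form `xᵀ A x`. -/
noncomputable def quadForm (A : Matrix (Fin 2) (Fin 2) ℝ) (x : E2) : ℝ :=
  ∑ i, ∑ j, A i j * x i * x j

/-- Hölder seminorm `[g]_{C^{0,a}(U)}`, valued in `ℝ≥0∞`. -/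
noncomputable def hSemi {E F : Type*} [NormedAddCommGroup E] [NormedAddCommGroup F]
    (a : ℝ) (U : Set E) (g : E → F) : ENNReal :=
  ⨆ x ∈ U, ⨆ y ∈ U, ENNReal.ofReal (‖g x - g y‖ / ‖x - y‖ ^ a)

/-- The decay condition `D(β)` of `f` relative to `u`:
`(|x|+|Du(x)|)^β |f(x)| + (|x|+|Du(x)|)^{β+1} [f]_{C^{0,1}(B_{|x|/2}(x))} ≤ C₀` for `|x| ≥ R₀`. -/
def DecayCond (β : ℝ) (u f : E2 → ℝ) : Prop :=
  ∃ C₀ > (0:ℝ), ∃ R₀ > (0:ℝ), ∀ x : E2, R₀ ≤ ‖x‖ →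
    ENNReal.ofReal ((‖x‖ + ‖gradient u x‖) ^ β * |f x|)
      + ENNReal.ofReal ((‖x‖ + ‖gradient u x‖) ^ (β + 1)) *
          hSemi 1 (Metric.ball x (‖x‖ / 2)) f
      ≤ ENNReal.ofReal C₀

/-! ### The Cauchy–Pompeiu formula -/

/-- The Wirtinger derivative `∂φ/∂z̄ = (∂_x φ + i ∂_y φ)/2` of a real-differentiable function. -/
def dbar (φ : ℂ → ℂ) (z : ℂ) : ℂ :=
  (fderiv ℝ φ z 1 + Complex.I * fderiv ℝ φ z Complex.I) / 2

/-- The unit vector `e^{it}`. -/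
def uvec (t : ℝ) : ℂ := (Real.cos t : ℂ) + (Real.sin t : ℂ) * Complex.I

lemma uvec_mul_conj (t : ℝ) :
    ((Real.cos t : ℂ) - (Real.sin t : ℂ) * Complex.I) * uvec t = 1 := by
  have h : ((Real.cos t : ℂ)) ^ 2 + (Real.sin t : ℂ) ^ 2 = 1 := by
    exact_mod_cast Real.cos_sq_add_sin_sq t
  unfold uvec
  linear_combination h - (Real.sin t : ℂ) ^ 2 * Complex.I_sq

lemma uvec_ne_zero (t : ℝ) : uvec t ≠ 0 := by
  intro h
  have := uvec_mul_conj t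
  simp [h] at this

lemma norm_uvec (t : ℝ) : ‖uvec t‖ = 1 := by
  simp [uvec]

lemma continuous_uvec : Continuous uvec := by unfold uvec; fun_prop

lemma hasDerivAt_uvec (t : ℝ) : HasDerivAt uvec (Complex.I * uvec t) t := by
  have h1 : HasDerivAt (fun t : ℝ => ((Real.cos t : ℝ) : ℂ)) ((-Real.sin t : ℝ) : ℂ) t :=
    (Real.hasDerivAt_cos t).ofReal_comp
  have h2 : HasDerivAt (fun t : ℝ => ((Real.sin t : ℝ) : ℂ)) ((Real.cos t : ℝ) : ℂ) t :=
    (Real.hasDerivAt_sin t).ofReal_comp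
  have h3 := h1.add (h2.mul_const Complex.I)
  refine h3.congr_deriv ?_
  unfold uvec
  simp only [Complex.ofReal_neg]
  linear_combination -(Real.sin t : ℂ) * Complex.I_sq

lemma clm_eq (L : ℂ →L[ℝ] ℂ) (v : ℂ) : L v = v.re * L 1 + v.im * L Complex.I := by
  have : v = v.re • (1 : ℂ) + v.im • Complex.I := by
    simp [Complex.re_add_im]
  conv_lhs => rw [this]
  rw [map_add, map_smul, map_smul]
  simp

/-- `∂/∂z̄` in polar coordinates. -/
lemma polar_dbar (φ : ℂ → ℂ) (r t : ℝ) (hr : r ≠ 0) :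
    (r : ℂ) * (dbar φ (r * uvec t) / (r * uvec t)) =
      (fderiv ℝ φ (r * uvec t) (uvec t) +
        Complex.I * fderiv ℝ φ (r * uvec t) (Complex.I * uvec t)) / 2 := by
  have hr' : (r : ℂ) ≠ 0 := by exact_mod_cast hr
  have hu := uvec_mul_conj t
  have hu0 := uvec_ne_zero t
  rw [clm_eq _ (uvec t), clm_eq _ (Complex.I * uvec t)]
  have e1 : (uvec t).re = Real.cos t := by simp [uvec, -Complex.ofReal_cos, -Complex.ofReal_sin]
  have e2 : (uvec t).im = Real.sin t := by simp [uvec, -Complex.ofReal_cos, -Complex.ofReal_sin]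
  have e3 : (Complex.I * uvec t).re = - Real.sin t := by simp [uvec, -Complex.ofReal_cos, -Complex.ofReal_sin]
  have e4 : (Complex.I * uvec t).im = Real.cos t := by simp [uvec, -Complex.ofReal_cos, -Complex.ofReal_sin]
  rw [e1, e2, e3, e4]
  unfold dbar
  generalize fderiv ℝ φ (r * uvec t) 1 = a
  generalize fderiv ℝ φ (r * uvec t) Complex.I = b
  have : (r : ℂ) * ((a + Complex.I * b) / 2 / (r * uvec t)) =
      ((Real.cos t : ℂ) - (Real.sin t : ℂ) * Complex.I) * (a + Complex.I * b) / 2 := by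
    field_simp
    linear_combination (-(a + Complex.I * b)) * hu
  rw [this]
  simp only [Complex.ofReal_neg]
  linear_combination (-(Real.sin t : ℂ) * b / 2) * Complex.I_sq

/-- The Cauchy–Pompeiu formula at the origin, obtained in polar coordinates: there
`∂φ/∂z̄ = e^{it}(∂_r + (i/r)∂_t)φ/2`, the radial part integrates to `-φ 0` along every ray and the
angular part integrates to zero on every circle. -/
lemma cauchy_pompeiu_zero (φ : ℂ → ℂ) (hφ : ContDiff ℝ 1 φ) (hc : HasCompactSupport φ) :
    ∫ ζ, dbar φ ζ / ζ = -π * φ 0 := by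
  have hcd : Continuous (fderiv ℝ φ) := hφ.continuous_fderiv (by norm_num)
  have hdiff : Differentiable ℝ φ := hφ.differentiable (by norm_num)
  obtain ⟨R, hR0, hR⟩ : ∃ R > 0, ∀ z : ℂ, R ≤ ‖z‖ → φ z = 0 ∧ fderiv ℝ φ z = 0 := by
    obtain ⟨R1, h1⟩ := hc.isCompact.isBounded.subset_ball (0 : ℂ)
    refine ⟨max R1 1, by positivity, fun z hz => ?_⟩
    have hz' : z ∉ tsupport φ := fun h => by
      have := h1 h
      simp at this
      exact absurd (le_trans (le_max_left _ _) hz) (not_le.mpr this)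
    exact ⟨image_eq_zero_of_notMem_tsupport hz',
      image_eq_zero_of_notMem_tsupport (fun h => hz' (tsupport_fderiv_subset ℝ h))⟩
  have hcont1 : Continuous (fun p : ℝ × ℝ => fderiv ℝ φ (p.1 * uvec p.2) (uvec p.2)) := by
    have := continuous_uvec
    fun_prop
  have hcont2 : Continuous
      (fun p : ℝ × ℝ => fderiv ℝ φ (p.1 * uvec p.2) (Complex.I * uvec p.2)) := by
    have := continuous_uvec
    fun_prop
  have hbig : ∀ r t : ℝ, R ≤ |r| → fderiv ℝ φ (r * uvec t) = 0 ∧ φ (r * uvec t) = 0 := by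
    intro r t h
    have : R ≤ ‖(r : ℂ) * uvec t‖ := by simpa [norm_uvec] using h
    exact ⟨(hR _ this).2, (hR _ this).1⟩
  have key : ∀ F : ℝ × ℝ → ℂ, Continuous F → (∀ p : ℝ × ℝ, R ≤ |p.1| → F p = 0) →
      IntegrableOn F (Set.Ioi (0 : ℝ) ×ˢ Set.Ioo (-π) π) := by
    intro F hF hz
    have h1 : IntegrableOn F (Set.Icc (0 : ℝ) R ×ˢ Set.Icc (-π) π) :=
      hF.continuousOn.integrableOn_compact (isCompact_Icc.prod isCompact_Icc)
    refine h1.of_forall_sdiff_eq_zero (measurableSet_Ioi.prod measurableSet_Ioo) ?_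
    rintro ⟨r, t⟩ ⟨⟨hr, ht⟩, hn⟩
    apply hz
    simp only [Set.mem_Ioi, Set.mem_Ioo, Set.mem_prod, Set.mem_Icc] at *
    by_contra hlt
    push Not at hlt
    exact hn ⟨⟨hr.le, (le_abs_self r).trans hlt.le⟩, ⟨ht.1.le, ht.2.le⟩⟩
  have hI1 := key _ hcont1 (fun p hp => by rw [(hbig p.1 p.2 hp).1]; rfl)
  have hI2 := key _ hcont2 (fun p hp => by rw [(hbig p.1 p.2 hp).1]; rfl)
  rw [← Complex.integral_comp_polarCoord_symm]
  have htar : polarCoord.target = Set.Ioi (0 : ℝ) ×ˢ Set.Ioo (-π) π := rfl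
  have e1 : ∫ p in polarCoord.target, p.1 •
      (dbar φ (Complex.polarCoord.symm p) / Complex.polarCoord.symm p) =
      ∫ p in Set.Ioi (0 : ℝ) ×ˢ Set.Ioo (-π) π,
        ((1 / 2 : ℂ) * fderiv ℝ φ (p.1 * uvec p.2) (uvec p.2) +
        (Complex.I / 2) * fderiv ℝ φ (p.1 * uvec p.2) (Complex.I * uvec p.2)) := by
    rw [htar]
    refine setIntegral_congr_fun (measurableSet_Ioi.prod measurableSet_Ioo) ?_
    rintro ⟨r, t⟩ ⟨hr, ht⟩
    have hr' : r ≠ 0 := ne_of_gt hr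
    have := polar_dbar φ r t hr'
    simp only [Complex.polarCoord_symm_apply, Complex.real_smul]
    change (r : ℂ) * (dbar φ (r * uvec t) / (r * uvec t)) = _
    rw [this]
    ring
  rw [e1, integral_add (hI1.const_mul _) (hI2.const_mul _), integral_const_mul,
    integral_const_mul]
  have e2 : ∫ p in Set.Ioi (0 : ℝ) ×ˢ Set.Ioo (-π) π,
      fderiv ℝ φ (p.1 * uvec p.2) (uvec p.2) = -(2 * π) * φ 0 := by
    rw [Measure.volume_eq_prod] at hI1 ⊢
    rw [← setIntegral_prod_swap]
    have hsw := hI1.swap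
    refine (setIntegral_prod _ hsw).trans ?_
    have : ∀ t : ℝ, ∫ r in Set.Ioi (0 : ℝ), fderiv ℝ φ (r * uvec t) (uvec t) = - φ 0 := by
      intro t
      have hd : ∀ r ∈ Set.Ici (0 : ℝ), HasDerivAt (fun r : ℝ => φ (r * uvec t))
          (fderiv ℝ φ (r * uvec t) (uvec t)) r := by
        intro r _
        have h1 : HasDerivAt (fun r : ℝ => (r : ℂ) * uvec t) (uvec t) r := by
          have := (Complex.ofRealCLM.hasDerivAt (x := r)).mul_const (uvec t)
          simpa using this
        exact (hdiff _).hasFDerivAt.comp_hasDerivAt r h1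
      have h_int : IntegrableOn (fun r : ℝ => fderiv ℝ φ (r * uvec t) (uvec t)) (Set.Ioi 0) := by
        have hcc : Continuous (fun r : ℝ => fderiv ℝ φ (r * uvec t) (uvec t)) :=
          hcont1.comp (by fun_prop : Continuous fun r : ℝ => (r, t))
        refine (hcc.continuousOn.integrableOn_compact
          (isCompact_Icc (a := (0 : ℝ)) (b := R))).of_forall_sdiff_eq_zero measurableSet_Ioi ?_
        rintro r ⟨hr, hn⟩
        have : R ≤ |r| := by
          by_contra hlt
          push Not at hlt
          exact hn ⟨le_of_lt hr, (le_abs_self r).trans hlt.le⟩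
        simp [(hbig r t this).1]
      have hlim : Filter.Tendsto (fun r : ℝ => φ (r * uvec t)) Filter.atTop (nhds 0) := by
        refine tendsto_const_nhds.congr' ?_
        filter_upwards [Filter.eventually_ge_atTop R] with r hr
        exact ((hbig r t (hr.trans (le_abs_self r))).2).symm
      rw [integral_Ioi_of_hasDerivAt_of_tendsto' hd h_int hlim]
      simp
    have h' : ∀ t : ℝ, ∫ r in Set.Ioi (0 : ℝ),
        (fun p : ℝ × ℝ => fderiv ℝ φ (p.1 * uvec p.2) (uvec p.2)) (Prod.swap (t, r)) =
        - φ 0 := this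
    refine (integral_congr_ae (Filter.Eventually.of_forall h')).trans ?_
    rw [setIntegral_const, measureReal_def, Real.volume_Ioo, ENNReal.toReal_ofReal (by linarith [Real.pi_pos])]
    simp only [Complex.real_smul]
    push_cast
    ring
  have e3 : ∫ p in Set.Ioi (0 : ℝ) ×ˢ Set.Ioo (-π) π,
      fderiv ℝ φ (p.1 * uvec p.2) (Complex.I * uvec p.2) = 0 := by
    rw [Measure.volume_eq_prod] at hI2 ⊢
    rw [setIntegral_prod _ hI2]
    refine setIntegral_eq_zero_of_forall_eq_zero fun r hr => ?_
    have hr0 : (r : ℂ) ≠ 0 := by exact_mod_cast (ne_of_gt hr)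
    have hd : ∀ t ∈ Set.uIcc (-π) π, HasDerivAt (fun t : ℝ => (r : ℂ)⁻¹ * φ (r * uvec t))
        (fderiv ℝ φ (r * uvec t) (Complex.I * uvec t)) t := by
      intro t _
      have h1 : HasDerivAt (fun t : ℝ => (r : ℂ) * uvec t) ((r : ℂ) * (Complex.I * uvec t)) t :=
        (hasDerivAt_uvec t).const_mul _
      have h2 := ((hdiff _).hasFDerivAt.comp_hasDerivAt t h1).const_mul (r : ℂ)⁻¹
      refine h2.congr_deriv ?_
      have : (r : ℂ) * (Complex.I * uvec t) = r • (Complex.I * uvec t) := by simp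
      rw [this, map_smul, Complex.real_smul, inv_mul_cancel_left₀ hr0]
    have hcc : Continuous (fun t : ℝ => fderiv ℝ φ (r * uvec t) (Complex.I * uvec t)) :=
      hcont2.comp (by fun_prop : Continuous fun t : ℝ => (r, t))
    have h3 := intervalIntegral.integral_eq_sub_of_hasDerivAt hd (hcc.intervalIntegrable _ _)
    rw [intervalIntegral.integral_of_le (by linarith [Real.pi_pos]),
      integral_Ioc_eq_integral_Ioo] at h3
    rw [h3]
    simp [uvec]
  rw [e2, e3]
  ring

lemma dbar_comp_add (φ : ℂ → ℂ) (z ζ : ℂ) :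
    dbar (fun ζ => φ (ζ + z)) ζ = dbar φ (ζ + z) := by
  simp [dbar, fderiv_comp_add_right]

/-- **Cauchy–Pompeiu formula** for compactly supported `C¹` functions. -/
lemma cauchy_pompeiu (φ : ℂ → ℂ) (hφ : ContDiff ℝ 1 φ) (hc : HasCompactSupport φ) (z : ℂ) :
    ∫ ζ, dbar φ ζ / (ζ - z) = -π * φ z := by
  have h := cauchy_pompeiu_zero (fun ζ => φ (ζ + z)) (by fun_prop)
    (hc.comp_homeomorph (Homeomorph.addRight z))
  rw [zero_add] at h
  rw [← h, ← integral_add_right_eq_self _ z]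
  simp [dbar_comp_add]

/-! ### Pointwise `C^{1,α}` estimates for the `∂/∂z̄` equation -/

/-- The integrable kernel `|ζ|^{-(1+α)}` cut off to the disc of radius `2`. -/
def kern (α : ℝ) (ζ : ℂ) : ℝ := (Metric.ball (0 : ℂ) 2).indicator (fun ζ => ‖ζ‖ ^ (-(1 + α))) ζ

lemma kern_nonneg (α : ℝ) (ζ : ℂ) : 0 ≤ kern α ζ :=
  Set.indicator_nonneg (fun _ _ => by positivity) _

lemma kern_eq {α : ℝ} {ζ : ℂ} (h : ‖ζ‖ < 2) : kern α ζ = ‖ζ‖ ^ (-(1 + α)) := by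
  rw [kern, Set.indicator_of_mem (by simpa using h)]

lemma integrable_kern {α : ℝ} (h1 : α < 1) : Integrable (kern α) := by
  unfold kern
  rw [integrable_indicator_iff measurableSet_ball,
    integrableOn_fun_norm_addHaar (volume : Measure ℂ) (f := fun y => y ^ (-(1 + α)))]
  have h2 : IntegrableOn (fun y : ℝ => y ^ (-α)) (Set.Ioo 0 2) :=
    (intervalIntegral.integrableOn_Ioo_rpow_iff (by norm_num)).2 (by linarith)
  refine h2.congr_fun (fun y hy => ?_) measurableSet_Ioo
  have hy0 : 0 < y := hy.1
  have e : y ^ (-(1 + α)) = y⁻¹ * y ^ (-α) := by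
    rw [neg_add, Real.rpow_add hy0, Real.rpow_neg_one]
  simp only [Complex.finrank_real_complex, smul_eq_mul, e]
  norm_num
  field_simp

lemma continuous_dbar {φ : ℂ → ℂ} (hφ : ContDiff ℝ 1 φ) : Continuous (dbar φ) := by
  have hcd : Continuous (fderiv ℝ φ) := hφ.continuous_fderiv (by norm_num)
  unfold dbar
  fun_prop

lemma dbar_congr {φ ψ : ℂ → ℂ} {z : ℂ} (h : φ =ᶠ[nhds z] ψ) : dbar φ z = dbar ψ z := by
  simp [dbar, h.fderiv_eq]

lemma dbar_zero_of_support {φ : ℂ → ℂ} {ρ : ℝ} (h0 : ∀ ζ : ℂ, ρ < ‖ζ‖ → φ ζ = 0) {ζ : ℂ}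
    (hζ : ρ < ‖ζ‖) : dbar φ ζ = 0 := by
  have : φ =ᶠ[nhds ζ] fun _ => 0 := by
    filter_upwards [(isOpen_lt continuous_const continuous_norm).mem_nhds hζ] with x hx
    exact h0 x hx
  rw [dbar_congr this]
  simp [dbar]

lemma hasCompactSupport_of_norm {φ : ℂ → ℂ} {ρ : ℝ} (h0 : ∀ ζ : ℂ, ρ < ‖ζ‖ → φ ζ = 0) :
    HasCompactSupport φ :=
  HasCompactSupport.intro (isCompact_closedBall (0 : ℂ) ρ)
    (fun x hx => h0 x (by simpa using hx))

lemma kernel_ineq_aux {α a b c : ℝ} (hα0 : 0 < α) (hα : α < 1) (ha : 0 < a) (hc : 0 < c)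
    (hcab : c ≤ a + b) (hab : a ≤ b) : c ^ (1 - α) / (a * b) ≤ 2 * a ^ (-(1 + α)) := by
  have hb : 0 < b := ha.trans_le hab
  have h1 : c ^ (1 - α) ≤ 2 * b ^ (1 - α) := by
    calc c ^ (1 - α) ≤ (2 * b) ^ (1 - α) :=
          Real.rpow_le_rpow hc.le (by linarith) (by linarith)
      _ = 2 ^ (1 - α) * b ^ (1 - α) := Real.mul_rpow (by norm_num) hb.le
      _ ≤ 2 ^ (1 : ℝ) * b ^ (1 - α) := by
          gcongr
          · norm_num
          · linarith
      _ = _ := by norm_num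
  have h2 : b ^ (-α) ≤ a ^ (-α) := Real.rpow_le_rpow_of_nonpos ha hab (by linarith)
  have e1 : b ^ (1 - α) = b * b ^ (-α) := by
    rw [sub_eq_add_neg, Real.rpow_add hb, Real.rpow_one]
  have e2 : a ^ (-(1 + α)) = a⁻¹ * a ^ (-α) := by
    rw [neg_add, Real.rpow_add ha, Real.rpow_neg_one]
  rw [div_le_iff₀ (by positivity), e2]
  calc c ^ (1 - α) ≤ 2 * (b * b ^ (-α)) := by rw [← e1]; exact h1
    _ ≤ 2 * (b * a ^ (-α)) := by gcongr
    _ = _ := by field_simp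

lemma kernel_ineq {α a b c : ℝ} (hα0 : 0 < α) (hα : α < 1) (ha : 0 < a) (hb : 0 < b) (hc : 0 < c)
    (hcab : c ≤ a + b) :
    c ^ (1 - α) / (a * b) ≤ 2 * (a ^ (-(1 + α)) + b ^ (-(1 + α))) := by
  have hA : 0 ≤ a ^ (-(1 + α)) := by positivity
  have hB : 0 ≤ b ^ (-(1 + α)) := by positivity
  rcases le_total a b with h | h
  · linarith [kernel_ineq_aux hα0 hα ha hc hcab h]
  · have := kernel_ineq_aux hα0 hα hb hc (by linarith) h
    rw [mul_comm b a] at this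
    linarith

/-- Second order Taylor estimate at the origin from `|∂φ/∂z̄| ≤ κ|ζ|`: the kernel
`1/(ζ-z) - 1/ζ - z/ζ² = z²/(ζ²(ζ-z))` gains one power of `|ζ|`, so that everything converges
absolutely and no singular integrals are needed. -/
lemma taylor_compact {α : ℝ} (hα0 : 0 < α) (hα : α < 1) :
    ∃ C > (0 : ℝ), ∀ (φ : ℂ → ℂ) (κ : ℝ), ContDiff ℝ 1 φ → (∀ ζ : ℂ, 1 < ‖ζ‖ → φ ζ = 0) →
      (∀ ζ, ‖dbar φ ζ‖ ≤ κ * ‖ζ‖) →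
      ∃ b : ℂ, ‖b‖ ≤ C * κ ∧
        ∀ z : ℂ, ‖z‖ < 1 → ‖φ z - φ 0 - b * z‖ ≤ C * κ * ‖z‖ ^ (1 + α) := by
  have hIk := integrable_kern hα
  set J := ∫ ζ, kern α ζ with hJ
  have hJ0 : 0 ≤ J := integral_nonneg (kern_nonneg α)
  refine ⟨4 * J + 1, by positivity, ?_⟩
  intro φ κ hφ h0 hκ
  have hκ0 : 0 ≤ κ := by
    have := (norm_nonneg _).trans (hκ 1)
    simpa using this
  have hcs := hasCompactSupport_of_norm h0
  have hcd := continuous_dbar hφ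
  have hmeas : Measurable (dbar φ) := hcd.measurable
  have hd0 : ∀ ζ : ℂ, 1 < ‖ζ‖ → dbar φ ζ = 0 := fun ζ h => dbar_zero_of_support h0 h
  have hπ : (π : ℂ) ≠ 0 := by exact_mod_cast Real.pi_ne_zero
  have hπ1 : 1 ≤ π := by linarith [Real.pi_gt_three]
  have hnπ : ‖(π : ℂ)‖ = π := by simp [abs_of_pos Real.pi_pos]
  -- integrability of the three pieces of the kernel
  have b2 : ∀ ζ : ℂ, ‖dbar φ ζ / ζ ^ 2‖ ≤ κ * kern α ζ := by
    intro ζ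
    rcases lt_or_ge 1 ‖ζ‖ with h | h
    · rw [hd0 ζ h]
      simpa using mul_nonneg hκ0 (kern_nonneg α ζ)
    · rcases eq_or_ne ζ 0 with rfl | hz
      · simpa using mul_nonneg hκ0 (kern_nonneg α 0)
      · have hz' : 0 < ‖ζ‖ := norm_pos_iff.2 hz
        rw [kern_eq (by linarith), norm_div, norm_pow, div_le_iff₀ (by positivity)]
        have e : ‖ζ‖ ^ (-(1 + α)) * ‖ζ‖ ^ 2 = ‖ζ‖ ^ (1 - α) := by
          rw [← Real.rpow_natCast, ← Real.rpow_add hz']; congr 1; push_cast; ring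
        have e2 : ‖ζ‖ ≤ ‖ζ‖ ^ (1 - α) := by
          conv_lhs => rw [← Real.rpow_one ‖ζ‖]
          exact Real.rpow_le_rpow_of_exponent_ge hz' h (by linarith)
        calc _ ≤ κ * ‖ζ‖ := hκ ζ
          _ ≤ κ * ‖ζ‖ ^ (1 - α) := by gcongr
          _ = _ := by rw [← e]; ring
  have i2 : Integrable (fun ζ => dbar φ ζ / ζ ^ 2) :=
    (hIk.const_mul κ).mono' (hmeas.div (by fun_prop)).aestronglyMeasurable
      (Filter.Eventually.of_forall b2)
  have b1 : ∀ z : ℂ, ‖z‖ < 1 → ∀ ζ : ℂ, ‖dbar φ ζ / (ζ - z)‖ ≤ 2 * κ * kern α (ζ - z) := by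
    intro z hz ζ
    have hk := kern_nonneg α (ζ - z)
    rcases lt_or_ge 1 ‖ζ‖ with h | h
    · rw [hd0 ζ h]
      simp only [zero_div, norm_zero]
      positivity
    · rcases eq_or_ne (ζ - z) 0 with h' | h'
      · rw [h'] at hk ⊢
        simp only [div_zero, norm_zero]
        positivity
      · have hz' : 0 < ‖ζ - z‖ := norm_pos_iff.2 h'
        have hlt : ‖ζ - z‖ < 2 := by linarith [norm_sub_le ζ z]
        rw [kern_eq hlt, norm_div, div_le_iff₀ hz']
        have e : ‖ζ - z‖ ^ (-(1 + α)) * ‖ζ - z‖ = ‖ζ - z‖ ^ (-α) := by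
          conv_lhs => rw [← Real.rpow_one ‖ζ - z‖, ← Real.rpow_mul hz'.le, one_mul,
            ← Real.rpow_add hz']
          congr 1; ring
        have e2 : 1 ≤ 2 * ‖ζ - z‖ ^ (-α) := by
          have : (2 : ℝ) ^ (-α) ≤ ‖ζ - z‖ ^ (-α) :=
            Real.rpow_le_rpow_of_nonpos hz' hlt.le (by linarith)
          have h3 : (2 : ℝ) ^ (-1 : ℝ) ≤ 2 ^ (-α) :=
            Real.rpow_le_rpow_of_exponent_le (by norm_num) (by linarith)
          rw [Real.rpow_neg_one] at h3
          linarith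
        calc _ ≤ κ * ‖ζ‖ := hκ ζ
          _ ≤ κ * (2 * ‖ζ - z‖ ^ (-α)) := by gcongr; linarith
          _ = _ := by rw [← e]; ring
  have i1 : ∀ z : ℂ, ‖z‖ < 1 → Integrable (fun ζ => dbar φ ζ / (ζ - z)) := fun z hz =>
    ((hIk.comp_sub_right z).const_mul (2 * κ)).mono' (hmeas.div (by fun_prop)).aestronglyMeasurable
      (Filter.Eventually.of_forall (b1 z hz))
  refine ⟨-(1 / π) * ∫ ζ, dbar φ ζ / ζ ^ 2, ?_, ?_⟩
  · have := norm_integral_le_of_norm_le (hIk.const_mul κ) (Filter.Eventually.of_forall b2)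
    rw [integral_const_mul, ← hJ] at this
    rw [norm_mul, norm_neg, norm_div, norm_one, hnπ]
    calc 1 / π * _ ≤ 1 * (κ * J) := by
          gcongr
          rw [div_le_one (by positivity)]; exact hπ1
      _ ≤ _ := by nlinarith
  · intro z hz
    have hb : 0 ≤ (4 * J + 1) * κ * ‖z‖ ^ (1 + α) := by positivity
    rcases eq_or_ne z 0 with rfl | hz0
    · simpa using hb
    have hzn : 0 < ‖z‖ := norm_pos_iff.2 hz0
    have cz := cauchy_pompeiu φ hφ hcs z
    have c0 := cauchy_pompeiu φ hφ hcs 0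
    have i0 := i1 0 (by simp)
    simp only [sub_zero] at c0 i0
    have i10 : Integrable (fun ζ => dbar φ ζ / (ζ - z) - dbar φ ζ / ζ) := (i1 z hz).sub i0
    have e : φ z - φ 0 - -(1 / π) * (∫ ζ, dbar φ ζ / ζ ^ 2) * z =
        -(1 / π) * ∫ ζ, (dbar φ ζ / (ζ - z) - dbar φ ζ / ζ - z * (dbar φ ζ / ζ ^ 2)) := by
      rw [integral_sub i10 (i2.const_mul z),
        integral_sub (i1 z hz) i0, integral_const_mul, cz, c0]
      field_simp
      ring
    rw [e, norm_mul, norm_neg, norm_div, norm_one, hnπ]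
    have hbd : ∀ᵐ ζ : ℂ, ‖dbar φ ζ / (ζ - z) - dbar φ ζ / ζ - z * (dbar φ ζ / ζ ^ 2)‖ ≤
        κ * ‖z‖ ^ (1 + α) * (2 * (kern α ζ + kern α (ζ - z))) := by
      have a1 : ∀ᵐ ζ : ℂ, ζ ≠ 0 := by simp [ae_iff]
      have a2 : ∀ᵐ ζ : ℂ, ζ ≠ z := by simp [ae_iff]
      filter_upwards [a1, a2] with ζ n1 n2
      have hk1 := kern_nonneg α (ζ - z)
      have hk2 := kern_nonneg α ζ
      rcases lt_or_ge 1 ‖ζ‖ with h | h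
      · rw [hd0 ζ h]
        simp only [zero_div, sub_zero, mul_zero, norm_zero]
        positivity
      have n3 : ζ - z ≠ 0 := sub_ne_zero.2 n2
      have m1 : 0 < ‖ζ‖ := norm_pos_iff.2 n1
      have m3 : 0 < ‖ζ - z‖ := norm_pos_iff.2 n3
      have hlt : ‖ζ - z‖ < 2 := by linarith [norm_sub_le ζ z]
      rw [kern_eq hlt, kern_eq (by linarith)]
      have e1 : dbar φ ζ / (ζ - z) - dbar φ ζ / ζ - z * (dbar φ ζ / ζ ^ 2) =
          dbar φ ζ * z ^ 2 / (ζ ^ 2 * (ζ - z)) := by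
        field_simp
        ring
      rw [e1, norm_div, norm_mul, norm_mul, norm_pow, norm_pow]
      have hk := kernel_ineq hα0 hα m1 m3 hzn (by
        calc ‖z‖ = ‖ζ - (ζ - z)‖ := by congr 1; ring
          _ ≤ _ := norm_sub_le _ _)
      have e2 : ‖z‖ ^ 2 = ‖z‖ ^ (1 + α) * ‖z‖ ^ (1 - α) := by
        rw [← Real.rpow_natCast, ← Real.rpow_add hzn]; congr 1; push_cast; ring
      calc ‖dbar φ ζ‖ * ‖z‖ ^ 2 / (‖ζ‖ ^ 2 * ‖ζ - z‖)
          ≤ κ * ‖ζ‖ * ‖z‖ ^ 2 / (‖ζ‖ ^ 2 * ‖ζ - z‖) := by gcongr; exact hκ ζ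
        _ = κ * ‖z‖ ^ (1 + α) * (‖z‖ ^ (1 - α) / (‖ζ‖ * ‖ζ - z‖)) := by
          rw [e2]; field_simp
        _ ≤ _ := by gcongr
    have hII : Integrable (fun ζ => κ * ‖z‖ ^ (1 + α) * (2 * (kern α ζ + kern α (ζ - z)))) :=
      ((hIk.add (hIk.comp_sub_right z)).const_mul 2).const_mul _
    have := norm_integral_le_of_norm_le hII hbd
    rw [integral_const_mul, integral_const_mul, integral_add hIk (hIk.comp_sub_right z),
      integral_sub_right_eq_self (kern α) z, ← hJ] at this
    calc 1 / π * _ ≤ 1 * (κ * ‖z‖ ^ (1 + α) * (2 * (J + J))) := by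
          gcongr
          rw [div_le_one (by positivity)]; exact hπ1
      _ ≤ _ := by
          have : 0 ≤ κ * ‖z‖ ^ (1 + α) := by positivity
          nlinarith

lemma dbar_mul {φ ψ : ℂ → ℂ} {z : ℂ} (h1 : DifferentiableAt ℝ φ z) (h2 : DifferentiableAt ℝ ψ z) :
    dbar (fun ζ => φ ζ * ψ ζ) z = φ z * dbar ψ z + dbar φ z * ψ z := by
  simp only [dbar, fderiv_fun_mul h1 h2]
  simp
  ring

lemma dbar_scale (v : ℂ → ℂ) (ρ : ℝ) (z : ℂ) :
    dbar (fun ζ => v (ρ • ζ)) z = ρ * dbar v (ρ • z) := by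
  have : fderiv ℝ (fun ζ => v (ρ • ζ)) z = ρ • fderiv ℝ v (ρ • z) := by
    simpa using fderiv_comp_smul (𝕜 := ℝ) (f := v) ρ (x := z)
  simp only [dbar, this]
  simp
  ring

/-- A smooth cutoff on `ℂ`: it equals `1` on the disc of radius `1` and vanishes outside the disc of
radius `2`. -/
def cut : ContDiffBump (0 : ℂ) := ⟨1, 2, by norm_num, by norm_num⟩

/-- The cutoff at scale `N`, as a complex valued function. -/
def cutc (N : ℝ) (ζ : ℂ) : ℂ := ((cut (N⁻¹ • ζ) : ℝ) : ℂ)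

lemma contDiff_cutc (N : ℝ) : ContDiff ℝ 1 (cutc N) := by
  have h : ContDiff ℝ 1 (fun ζ : ℂ => cut (N⁻¹ • ζ)) :=
    (cut.contDiff).comp (contDiff_const_smul _)
  exact Complex.ofRealCLM.contDiff.comp h

lemma cutc_one {N : ℝ} (hN : 0 < N) {ζ : ℂ} (h : ‖ζ‖ ≤ N) : cutc N ζ = 1 := by
  have : cut (N⁻¹ • ζ) = 1 := by
    apply cut.one_of_mem_closedBall
    rw [mem_closedBall_zero_iff, norm_smul, norm_inv, Real.norm_of_nonneg hN.le]
    change _ ≤ (1 : ℝ)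
    rw [inv_mul_le_iff₀ hN]; linarith
  rw [cutc, this]; simp

lemma cutc_zero {N : ℝ} (hN : 0 < N) {ζ : ℂ} (h : 2 * N ≤ ‖ζ‖) : cutc N ζ = 0 := by
  have : cut (N⁻¹ • ζ) = 0 := by
    apply cut.zero_of_le_dist
    rw [dist_zero_right, norm_smul, norm_inv, Real.norm_of_nonneg hN.le]
    change (2 : ℝ) ≤ _
    rw [inv_mul_eq_div, le_div_iff₀ hN]; exact h
  rw [cutc, this]; simp

lemma norm_cutc_le (N : ℝ) (ζ : ℂ) : ‖cutc N ζ‖ ≤ 1 := by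
  rw [cutc, Complex.norm_real, Real.norm_of_nonneg cut.nonneg]
  exact cut.le_one

lemma norm_one_sub_cutc_le (N : ℝ) (ζ : ℂ) : ‖1 - cutc N ζ‖ ≤ 1 := by
  have : 1 - cutc N ζ = ((1 - cut (N⁻¹ • ζ) : ℝ) : ℂ) := by simp [cutc]
  rw [this, Complex.norm_real, Real.norm_of_nonneg (by linarith [cut.le_one (x := N⁻¹ • ζ)])]
  linarith [cut.nonneg (x := N⁻¹ • ζ)]

lemma dbar_cutc_bound : ∃ B > (0 : ℝ), ∀ N > (0 : ℝ), ∀ ζ : ℂ,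
    ‖dbar (cutc N) ζ‖ ≤ B / N ∧ (‖ζ‖ < N → dbar (cutc N) ζ = 0) ∧
      (2 * N < ‖ζ‖ → dbar (cutc N) ζ = 0) := by
  have hc : HasCompactSupport (dbar (cutc 1)) :=
    hasCompactSupport_of_norm (ρ := 2) fun ζ h =>
      dbar_zero_of_support (ρ := 2) (fun ζ h => cutc_zero one_pos (by linarith)) h
  obtain ⟨B, hB⟩ := hc.exists_bound_of_continuous (continuous_dbar (contDiff_cutc 1))
  refine ⟨|B| + 1, by positivity, fun N hN ζ => ⟨?_, fun h => ?_, fun h => ?_⟩⟩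
  · have e : cutc N = fun ζ => cutc 1 (N⁻¹ • ζ) := by
      ext ζ; simp [cutc]
    rw [e, dbar_scale, norm_mul, Complex.norm_real, norm_inv, Real.norm_of_nonneg hN.le,
      div_eq_inv_mul]
    gcongr
    exact (hB _).trans (by linarith [le_abs_self B])
  · have : cutc N =ᶠ[nhds ζ] fun _ => 1 := by
      filter_upwards [(isOpen_lt continuous_norm continuous_const).mem_nhds h] with x hx
      exact cutc_one hN (le_of_lt hx)
    rw [dbar_congr this]
    simp [dbar]
  · exact dbar_zero_of_support (ρ := 2 * N) (fun ζ h => cutc_zero hN (by linarith)) h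

/-- `taylor_compact` applied to a cutoff of a function on the unit disc. The sup bound `M` enters
through the derivative of the cutoff. -/
lemma taylor_unit {α : ℝ} (hα0 : 0 < α) (hα : α < 1) :
    ∃ C > (0 : ℝ), ∀ (v : ℂ → ℂ) (κ M : ℝ), 0 ≤ κ → 0 ≤ M →
      (∀ ζ : ℂ, ‖ζ‖ < 1 → ContDiffAt ℝ 1 v ζ) →
      (∀ ζ : ℂ, ‖ζ‖ < 1 → ‖dbar v ζ‖ ≤ κ * ‖ζ‖) → (∀ ζ : ℂ, ‖ζ‖ < 1 → ‖v ζ‖ ≤ M) →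
      ∃ b : ℂ, ‖b‖ ≤ C * (M + κ) ∧
        ∀ z : ℂ, ‖z‖ < 1 / 4 → ‖v z - v 0 - b * z‖ ≤ C * (M + κ) * ‖z‖ ^ (1 + α) := by
  obtain ⟨C, hC, h⟩ := taylor_compact hα0 hα
  obtain ⟨B, hB, hBd⟩ := dbar_cutc_bound
  refine ⟨C * (1 + 16 * B), by positivity, ?_⟩
  intro v κ M hκ0 hM0 hv hκ hM
  have h4 : (0 : ℝ) < 1 / 4 := by norm_num
  have hz : ∀ ζ : ℂ, 1 / 2 ≤ ‖ζ‖ → cutc (1 / 4) ζ * v ζ = 0 := fun ζ hζ => by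
    rw [cutc_zero h4 (by linarith), zero_mul]
  have hz' : ∀ ζ : ℂ, 1 / 2 < ‖ζ‖ → (fun ζ => cutc (1 / 4) ζ * v ζ) =ᶠ[nhds ζ] fun _ => 0 := by
    intro ζ hζ
    filter_upwards [(isOpen_lt continuous_const continuous_norm).mem_nhds hζ] with x hx
    exact hz x (le_of_lt hx)
  obtain ⟨b, hb, hb2⟩ := h (fun ζ => cutc (1 / 4) ζ * v ζ) (κ + 16 * B * M) (by
      rw [contDiff_iff_contDiffAt]
      intro ζ
      rcases lt_or_ge ‖ζ‖ 1 with h1 | h1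
      · exact (contDiff_cutc _).contDiffAt.mul (hv ζ h1)
      · exact contDiffAt_const.congr_of_eventuallyEq (hz' ζ (by linarith)))
    (fun ζ hζ => hz ζ (by linarith)) (by
      intro ζ
      have hrhs : 0 ≤ (κ + 16 * B * M) * ‖ζ‖ := by positivity
      rcases lt_or_ge ‖ζ‖ 1 with h1 | h1
      · rw [dbar_mul ((contDiff_cutc _).differentiable (by norm_num) ζ)
          ((hv ζ h1).differentiableAt (by norm_num))]
        obtain ⟨B1, B2, -⟩ := hBd (1 / 4) h4 ζ
        have t1 : ‖cutc (1 / 4) ζ * dbar v ζ‖ ≤ κ * ‖ζ‖ := by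
          rw [norm_mul]
          calc _ ≤ 1 * (κ * ‖ζ‖) := by gcongr; exacts [norm_cutc_le _ _, hκ ζ h1]
            _ = _ := one_mul _
        have t2 : ‖dbar (cutc (1 / 4)) ζ * v ζ‖ ≤ 16 * B * M * ‖ζ‖ := by
          rcases lt_or_ge ‖ζ‖ (1 / 4) with h2 | h2
          · rw [B2 h2]
            simp only [zero_mul, norm_zero]
            positivity
          · rw [norm_mul]
            calc _ ≤ B / (1 / 4) * M := by gcongr; exact hM ζ h1
              _ = 16 * B * M * (1 / 4) := by ring
              _ ≤ _ := by gcongr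
        calc _ ≤ _ := norm_add_le _ _
          _ ≤ _ := add_le_add t1 t2
          _ = _ := by ring
      · rw [dbar_congr (hz' ζ (by linarith))]
        simpa [dbar] using hrhs)
  have hle : κ + 16 * B * M ≤ (1 + 16 * B) * (M + κ) := by nlinarith [mul_nonneg hB.le hκ0]
  refine ⟨b, hb.trans ?_, fun z hz => ?_⟩
  · calc C * (κ + 16 * B * M) ≤ C * ((1 + 16 * B) * (M + κ)) := mul_le_mul_of_nonneg_left hle hC.le
      _ = _ := by ring
  · have := hb2 z (by linarith)
    simp only [cutc_one h4 hz.le, cutc_one h4 (show ‖(0 : ℂ)‖ ≤ 1 / 4 by simp),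
      one_mul] at this
    refine this.trans ?_
    rw [mul_assoc C (1 + 16 * B)]
    gcongr

/-- Interior `C^{1,α}` estimate at a point where `∂v/∂z̄` vanishes linearly, at scale `ρ`. -/
lemma taylor_scaled {α : ℝ} (hα0 : 0 < α) (hα : α < 1) :
    ∃ C > (0 : ℝ), ∀ (v : ℂ → ℂ) (ρ κ M : ℝ), 0 < ρ → 0 ≤ κ → 0 ≤ M →
      (∀ ζ : ℂ, ‖ζ‖ < ρ → ContDiffAt ℝ 1 v ζ) →
      (∀ ζ : ℂ, ‖ζ‖ < ρ → ‖dbar v ζ‖ ≤ κ * ‖ζ‖) → (∀ ζ : ℂ, ‖ζ‖ < ρ → ‖v ζ‖ ≤ M) →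
      ∃ b : ℂ, ‖b‖ ≤ C * (M / ρ + κ * ρ) ∧
        ∀ z : ℂ, ‖z‖ < ρ / 4 →
          ‖v z - v 0 - b * z‖ ≤ C * (M / ρ + κ * ρ) * ρ ^ (-α) * ‖z‖ ^ (1 + α) := by
  obtain ⟨C, hC, h⟩ := taylor_unit hα0 hα
  refine ⟨C, hC, ?_⟩
  intro v ρ κ M hρ hκ0 hM0 hv hκ hM
  have hn : ∀ ζ : ℂ, ‖ρ • ζ‖ = ρ * ‖ζ‖ := fun ζ => by
    rw [norm_smul, Real.norm_of_nonneg hρ.le]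
  have hn1 : ∀ ζ : ℂ, ‖ζ‖ < 1 → ‖ρ • ζ‖ < ρ := fun ζ hζ => by
    rw [hn]; nlinarith
  have hρc : (ρ : ℂ) ≠ 0 := by exact_mod_cast hρ.ne'
  obtain ⟨b, hb, hb2⟩ := h (fun ζ => v (ρ • ζ)) (κ * ρ ^ 2) M (by positivity) hM0
    (fun ζ hζ => ContDiffAt.comp (g := v) ζ (hv _ (hn1 ζ hζ)) (contDiff_const_smul ρ).contDiffAt)
    (fun ζ hζ => by
      rw [dbar_scale, norm_mul, Complex.norm_real, Real.norm_of_nonneg hρ.le]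
      calc _ ≤ ρ * (κ * ‖ρ • ζ‖) := by gcongr; exact hκ _ (hn1 ζ hζ)
        _ = _ := by rw [hn]; ring)
    (fun ζ hζ => hM _ (hn1 ζ hζ))
  refine ⟨b / ρ, ?_, fun z hz => ?_⟩
  · rw [norm_div, Complex.norm_real, Real.norm_of_nonneg hρ.le, div_le_iff₀ hρ]
    refine hb.trans (le_of_eq ?_)
    field_simp
  · have h1 := hb2 (ρ⁻¹ • z) (by
      rw [norm_smul, norm_inv, Real.norm_of_nonneg hρ.le, inv_mul_lt_iff₀ hρ]; linarith)
    rw [smul_inv_smul₀ hρ.ne', smul_zero] at h1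
    have e1 : b * ρ⁻¹ • z = b / ρ * z := by
      rw [Complex.real_smul]; push_cast; field_simp
    rw [e1] at h1
    refine h1.trans (le_of_eq ?_)
    rw [norm_smul, norm_inv, Real.norm_of_nonneg hρ.le,
      Real.mul_rpow (by positivity) (norm_nonneg _), Real.inv_rpow hρ.le, Real.rpow_add hρ,
      Real.rpow_one, Real.rpow_neg hρ.le]
    field_simp

/-! ### Decay of the Cauchy potential -/

lemma radial_integral (f : ℝ → ℝ) :
    ∫ ζ : ℂ, f ‖ζ‖ = 2 * π * ∫ y in Set.Ioi (0 : ℝ), y * f y := by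
  have hv : (volume : Measure ℂ).real (Metric.ball 0 1) = π := by
    simp [Measure.real, Complex.volume_ball]
  rw [integral_fun_norm_addHaar (volume : Measure ℂ) f, hv]
  simp [Complex.finrank_real_complex]
  ring

lemma radial_integrable (f : ℝ → ℝ) :
    Integrable (fun ζ : ℂ => f ‖ζ‖) ↔ IntegrableOn (fun y => y * f y) (Set.Ioi 0) := by
  rw [integrable_fun_norm_addHaar (volume : Measure ℂ)]
  simp [Complex.finrank_real_complex]

/-- The logarithmic factor `(ln r)^{⌊β⌋-1}` of the decay rates. -/
def lg (β r : ℝ) : ℝ := (Real.log r) ^ (⌊β⌋₊ - 1)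

lemma lg_lt {β r : ℝ} (h1 : 1 < β) (h2 : β < 2) : lg β r = 1 := by
  have : ⌊β⌋₊ = 1 := by
    rw [Nat.floor_eq_iff (by linarith)]; norm_num; exact ⟨h1.le, by linarith⟩
  simp [lg, this]

lemma lg_two {r : ℝ} : lg 2 r = Real.log r := by
  have : ⌊(2 : ℝ)⌋₊ = 2 := by
    rw [Nat.floor_eq_iff (by norm_num)]; norm_num
  simp [lg]

lemma rad_one {β R : ℝ} (hβ1 : 1 < β) (hβ2 : β ≤ 2) (hR : 2 ≤ R) :
    ∫ y in (1 : ℝ)..(1 + 2 * R), y ^ (1 - β) ≤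
      (if β < 2 then 4 / (2 - β) else 4) * (R ^ (2 - β) * lg β R) := by
  have hR0 : 0 < R := by linarith
  split_ifs with h
  · rw [integral_rpow (Or.inl (by linarith)), lg_lt hβ1 h]
    have e : 1 - β + 1 = 2 - β := by ring
    have hp : 0 < 2 - β := by linarith
    rw [e, div_mul_eq_mul_div, mul_one]
    gcongr
    have : (1 + 2 * R) ^ (2 - β) ≤ (4 * R) ^ (2 - β) := by gcongr; linarith
    rw [Real.mul_rpow (by norm_num) hR0.le] at this
    have h4 : (4 : ℝ) ^ (2 - β) ≤ 4 := by
      calc (4 : ℝ) ^ (2 - β) ≤ 4 ^ (1 : ℝ) := by gcongr; norm_num; linarith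
        _ = 4 := by norm_num
    have : (4 : ℝ) ^ (2 - β) * R ^ (2 - β) ≤ 4 * R ^ (2 - β) := by gcongr
    have : 0 ≤ (1 : ℝ) ^ (2 - β) := by positivity
    linarith
  · have hb : β = 2 := le_antisymm hβ2 (not_lt.1 h)
    subst hb
    rw [lg_two]
    norm_num
    have e : ∫ y in (1 : ℝ)..(1 + 2 * R), y ^ (-1 : ℝ) = Real.log (1 + 2 * R) := by
      have := integral_one_div_of_pos (a := 1) (b := 1 + 2 * R) one_pos (by linarith)
      rw [div_one] at this
      rw [← this]
      simp [Real.rpow_neg_one]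
    rw [e]
    calc Real.log (1 + 2 * R) ≤ Real.log (R ^ 4) := by
          apply Real.log_le_log (by linarith)
          have : R ^ 4 = R * R ^ 3 := by ring
          have h3 : (2 : ℝ) ^ 3 ≤ R ^ 3 := by gcongr
          nlinarith
      _ = _ := by rw [Real.log_pow]; norm_num

/-- Mass of `(1+|ζ|)^{-β}` in a large disc. -/
lemma mass_disc {β R : ℝ} (hβ1 : 1 < β) (hβ2 : β ≤ 2) (hR : 2 ≤ R) :
    ∫ ζ in Metric.closedBall (0 : ℂ) (2 * R), (1 + ‖ζ‖) ^ (-β) ≤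
      2 * π * ((if β < 2 then 4 / (2 - β) else 4) * (R ^ (2 - β) * lg β R)) := by
  rw [← integral_indicator measurableSet_closedBall]
  have e : ∀ ζ : ℂ, (Metric.closedBall (0 : ℂ) (2 * R)).indicator
      (fun ζ => (1 + ‖ζ‖) ^ (-β)) ζ =
      (fun y => (Set.Iic (2 * R)).indicator (fun y : ℝ => (1 + y) ^ (-β)) y) ‖ζ‖ := by
    intro ζ
    classical
    simp [Set.indicator_apply]
  simp_rw [e]
  rw [radial_integral (fun y => (Set.Iic (2 * R)).indicator (fun y : ℝ => (1 + y) ^ (-β)) y)]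
  gcongr
  refine le_trans ?_ (rad_one hβ1 hβ2 hR)
  have e2 : ∫ y in (1 : ℝ)..(1 + 2 * R), y ^ (1 - β) =
      ∫ y in Set.Ioc 0 (2 * R), (1 + y) ^ (1 - β) := by
    rw [← intervalIntegral.integral_of_le (by linarith)]
    have := intervalIntegral.integral_comp_add_left (a := 0) (b := 2 * R)
      (fun y : ℝ => y ^ (1 - β)) 1
    rw [this, add_zero]
  have e3 : ∀ y : ℝ, y * (Set.Iic (2 * R)).indicator (fun y : ℝ => (1 + y) ^ (-β)) y =
      (Set.Iic (2 * R)).indicator (fun y : ℝ => y * (1 + y) ^ (-β)) y := by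
    intro y; simp [Set.indicator_apply]
  simp_rw [e3]
  rw [setIntegral_indicator measurableSet_Iic, Set.Ioi_inter_Iic, e2]
  have cont : ∀ p : ℝ, ContinuousOn (fun y : ℝ => (1 + y) ^ p) (Set.Icc 0 (2 * R)) := by
    intro p
    refine ContinuousOn.rpow_const (by fun_prop) fun y hy => Or.inl ?_
    have := hy.1
    positivity
  have i2 : ∀ p : ℝ, IntegrableOn (fun y : ℝ => (1 + y) ^ p) (Set.Ioc 0 (2 * R)) := fun p =>
    ((cont p).integrableOn_Icc).mono_set Set.Ioc_subset_Icc_self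
  refine setIntegral_mono_on ?_ (i2 _) measurableSet_Ioc ?_
  · exact ((continuousOn_id.mul (cont (-β))).integrableOn_Icc).mono_set Set.Ioc_subset_Icc_self
  · intro y hy
    have hy0 : 0 < y := hy.1
    have : (1 + y) ^ (1 - β) = (1 + y) * (1 + y) ^ (-β) := by
      rw [sub_eq_add_neg, Real.rpow_add (by linarith), Real.rpow_one]
    rw [this]
    gcongr
    linarith

lemma integrable_pot_zero {β : ℝ} (hβ1 : 1 < β) :
    Integrable (fun ζ : ℂ => (1 + ‖ζ‖) ^ (-β) / ‖ζ‖) := by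
  rw [radial_integrable (fun y => (1 + y) ^ (-β) / y)]
  have := integrableOn_add_rpow_Ioi_of_lt (a := -β) (c := 0) (m := 1) (by linarith) (by norm_num)
  refine this.congr_fun (fun y hy => ?_) measurableSet_Ioi
  have : (0 : ℝ) < y := hy
  simp only
  rw [add_comm]; field_simp

lemma integrable_pot {β : ℝ} (hβ1 : 1 < β) (z : ℂ) :
    Integrable (fun ζ : ℂ => (1 + ‖ζ‖) ^ (-β) / ‖ζ - z‖) := by
  have h := ((integrable_pot_zero hβ1).comp_sub_right z).const_mul ((1 + ‖z‖) ^ β)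
  refine h.mono' (Measurable.aestronglyMeasurable (by fun_prop)) (Filter.Eventually.of_forall fun ζ => ?_)
  rw [Real.norm_of_nonneg (by positivity), ← mul_div_assoc]
  gcongr
  have t : ‖ζ - z‖ ≤ ‖ζ‖ + ‖z‖ := norm_sub_le _ _
  have t2 : 1 + ‖ζ - z‖ ≤ (1 + ‖z‖) * (1 + ‖ζ‖) := by
    nlinarith [norm_nonneg ζ, norm_nonneg z]
  rw [Real.rpow_neg (by positivity), Real.rpow_neg (by positivity), ← div_eq_mul_inv,
    inv_eq_one_div, div_le_div_iff₀ (by positivity) (by positivity), one_mul,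
    ← Real.mul_rpow (by positivity) (by positivity)]
  gcongr

lemma integral_near {R : ℝ} (z : ℂ) (hR : 0 < R) :
    Integrable (fun ζ : ℂ => (Set.Iic R).indicator (fun y : ℝ => y⁻¹) ‖ζ - z‖) ∧
    ∫ ζ : ℂ, (Set.Iic R).indicator (fun y : ℝ => y⁻¹) ‖ζ - z‖ = 2 * π * R := by
  have e3 : Set.EqOn (fun y : ℝ => y * (Set.Iic R).indicator (fun y : ℝ => y⁻¹) y)
      (fun y => (Set.Iic R).indicator (fun _ : ℝ => (1 : ℝ)) y) (Set.Ioi 0) := by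
    intro y hy
    have : y ≠ 0 := ne_of_gt hy
    simp only [Set.indicator_apply]
    split_ifs
    · field_simp
    · simp
  constructor
  · refine Integrable.comp_sub_right
      (f := fun ζ : ℂ => (Set.Iic R).indicator (fun y : ℝ => y⁻¹) ‖ζ‖) ?_ z
    rw [radial_integrable ((Set.Iic R).indicator (fun y : ℝ => y⁻¹))]
    refine IntegrableOn.congr_fun ?_ e3.symm measurableSet_Ioi
    rw [IntegrableOn, integrable_indicator_iff measurableSet_Iic, IntegrableOn,
      Measure.restrict_restrict measurableSet_Iic]
    have : Set.Iic R ∩ Set.Ioi 0 = Set.Ioc 0 R := by rw [Set.inter_comm, Set.Ioi_inter_Iic]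
    rw [this]
    exact integrable_const _
  · rw [integral_sub_right_eq_self
      (fun ζ : ℂ => (Set.Iic R).indicator (fun y : ℝ => y⁻¹) ‖ζ‖) z,
      radial_integral ((Set.Iic R).indicator (fun y : ℝ => y⁻¹)),
      setIntegral_congr_fun measurableSet_Ioi e3, setIntegral_indicator measurableSet_Iic,
      Set.Ioi_inter_Iic]
    simp [hR.le]

lemma integral_far {β R : ℝ} (hβ1 : 1 < β) (hR : 0 < R) :
    Integrable (fun ζ : ℂ => (Set.Ioi R).indicator (fun y : ℝ => y ^ (-1 - β)) ‖ζ‖) ∧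
    ∫ ζ : ℂ, (Set.Ioi R).indicator (fun y : ℝ => y ^ (-1 - β)) ‖ζ‖ =
      2 * π * (R ^ (1 - β) / (β - 1)) := by
  have e3 : Set.EqOn (fun y : ℝ => y * (Set.Ioi R).indicator (fun y : ℝ => y ^ (-1 - β)) y)
      (fun y => (Set.Ioi R).indicator (fun y : ℝ => y ^ (-β)) y) (Set.Ioi 0) := by
    intro y hy
    have hy0 : (0 : ℝ) < y := hy
    simp only [Set.indicator_apply]
    split_ifs
    · have : y ^ (-β) = y ^ (1 + (-1 - β)) := by congr 1; ring
      rw [this, Real.rpow_add hy0, Real.rpow_one]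
    · simp
  constructor
  · rw [radial_integrable ((Set.Ioi R).indicator (fun y : ℝ => y ^ (-1 - β)))]
    refine IntegrableOn.congr_fun ?_ e3.symm measurableSet_Ioi
    have := integrableOn_Ioi_rpow_of_lt (a := -β) (by linarith) hR
    exact ((integrable_indicator_iff measurableSet_Ioi).2 this).integrableOn
  · rw [radial_integral ((Set.Ioi R).indicator (fun y : ℝ => y ^ (-1 - β))),
      setIntegral_congr_fun measurableSet_Ioi e3, setIntegral_indicator measurableSet_Ioi,
      Set.Ioi_inter_Ioi, max_eq_right hR.le, integral_Ioi_rpow_of_lt (by linarith) hR]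
    congr 1
    have h1 : β - 1 ≠ 0 := by linarith
    have h2 : -β + 1 ≠ 0 := by intro h; apply h1; linarith
    have e : -β + 1 = 1 - β := by ring
    have h3 : 1 - β ≠ 0 := by rwa [← e]
    rw [e]
    field_simp
    ring

lemma one_le_log {r : ℝ} (hr : 3 ≤ r) : 1 ≤ Real.log r := by
  rw [Real.le_log_iff_exp_le (by linarith)]
  exact Real.exp_one_lt_d9.le.trans (by linarith)

lemma one_le_lg {β r : ℝ} (hr : 3 ≤ r) : 1 ≤ lg β r := one_le_pow₀ (one_le_log hr)

/-- Decay of the Cauchy potential of `(1+|ζ|)^{-β}`. The plane is split into the disc of radius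
`|z|/2` about `z`, the rest of the disc `|ζ| ≤ 2|z|`, and the exterior. -/
lemma pot_bound {β : ℝ} (hβ1 : 1 < β) (hβ2 : β ≤ 2) :
    ∃ C > (0 : ℝ), ∀ z : ℂ, 3 ≤ ‖z‖ →
      ∫ ζ : ℂ, (1 + ‖ζ‖) ^ (-β) / ‖ζ - z‖ ≤ C * (‖z‖ ^ (1 - β) * lg β ‖z‖) := by
  set D : ℝ := if β < 2 then 4 / (2 - β) else 4 with hD
  have hDpos : 0 < D := by
    rw [hD]; split_ifs with h
    · have : 0 < 2 - β := by linarith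
      positivity
    · norm_num
  have hb : 0 < β - 1 := by linarith
  refine ⟨4 * π * D + 4 * π + 4 * π / (β - 1), by positivity, fun z hz => ?_⟩
  set r := ‖z‖ with hr
  have hr0 : 0 < r := by linarith
  obtain ⟨iB, eB⟩ := integral_near z (R := r / 2) (by linarith)
  obtain ⟨iC, eC⟩ := integral_far (β := β) (R := 2 * r) hβ1 (by linarith)
  have iA : Integrable ((Metric.closedBall (0 : ℂ) (2 * r)).indicator
      (fun ζ => (1 + ‖ζ‖) ^ (-β))) := by
    rw [integrable_indicator_iff measurableSet_closedBall]
    refine ContinuousOn.integrableOn_compact (isCompact_closedBall _ _) ?_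
    refine ContinuousOn.rpow_const (by fun_prop) fun y hy => Or.inl (by positivity)
  have eA := mass_disc hβ1 hβ2 (R := r) (by linarith)
  rw [← integral_indicator measurableSet_closedBall] at eA
  have key : ∫ ζ : ℂ, (1 + ‖ζ‖) ^ (-β) / ‖ζ - z‖ ≤ ∫ ζ : ℂ,
      ((2 / r) * (Metric.closedBall (0 : ℂ) (2 * r)).indicator (fun ζ => (1 + ‖ζ‖) ^ (-β)) ζ
      + (r / 2) ^ (-β) * (Set.Iic (r / 2)).indicator (fun y : ℝ => y⁻¹) ‖ζ - z‖
      + 2 * (Set.Ioi (2 * r)).indicator (fun y : ℝ => y ^ (-1 - β)) ‖ζ‖) := by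
    refine integral_mono (integrable_pot hβ1 z)
      (((iA.const_mul _).add (iB.const_mul _)).add (iC.const_mul _)) fun ζ => ?_
    have nA : 0 ≤ (Metric.closedBall (0 : ℂ) (2 * r)).indicator
        (fun ζ => (1 + ‖ζ‖) ^ (-β)) ζ := Set.indicator_nonneg (fun _ _ => by positivity) _
    have nB : 0 ≤ (Set.Iic (r / 2)).indicator (fun y : ℝ => y⁻¹) ‖ζ - z‖ :=
      Set.indicator_apply_nonneg fun _ => by positivity
    have nC : 0 ≤ (Set.Ioi (2 * r)).indicator (fun y : ℝ => y ^ (-1 - β)) ‖ζ‖ :=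
      Set.indicator_apply_nonneg fun _ => by positivity
    have pA : 0 ≤ 2 / r := by positivity
    have pB : 0 ≤ (r / 2) ^ (-β) := by positivity
    have mA := mul_nonneg pA nA
    have mB := mul_nonneg pB nB
    have tri : r ≤ ‖ζ‖ + ‖ζ - z‖ := by
      have := norm_sub_le ζ (ζ - z)
      rwa [sub_sub_cancel] at this
    have tri2 : ‖ζ‖ ≤ ‖ζ - z‖ + r := by
      have := norm_add_le (ζ - z) z
      rwa [sub_add_cancel] at this
    simp only
    rcases le_or_gt ‖ζ - z‖ (r / 2) with h1 | h1
    · have : (1 + ‖ζ‖) ^ (-β) / ‖ζ - z‖ ≤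
          (r / 2) ^ (-β) * (Set.Iic (r / 2)).indicator (fun y : ℝ => y⁻¹) ‖ζ - z‖ := by
        rw [Set.indicator_of_mem (by exact h1), div_eq_mul_inv]
        refine mul_le_mul_of_nonneg_right ?_ (by positivity)
        exact Real.rpow_le_rpow_of_nonpos (by linarith) (by linarith) (by linarith)
      linarith
    · rcases le_or_gt ‖ζ‖ (2 * r) with h2 | h2
      · have : (1 + ‖ζ‖) ^ (-β) / ‖ζ - z‖ ≤ (2 / r) *
            (Metric.closedBall (0 : ℂ) (2 * r)).indicator (fun ζ => (1 + ‖ζ‖) ^ (-β)) ζ := by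
          rw [Set.indicator_of_mem (by simpa using h2), div_mul_eq_mul_div,
            div_le_div_iff₀ (by linarith) hr0]
          have : 0 ≤ (1 + ‖ζ‖) ^ (-β) := by positivity
          nlinarith
        linarith
      · have : (1 + ‖ζ‖) ^ (-β) / ‖ζ - z‖ ≤
            2 * (Set.Ioi (2 * r)).indicator (fun y : ℝ => y ^ (-1 - β)) ‖ζ‖ := by
          have hζ0 : 0 < ‖ζ‖ := by linarith
          rw [Set.indicator_of_mem (by exact h2), sub_eq_add_neg (-1 : ℝ), Real.rpow_add hζ0,
            Real.rpow_neg_one, ← mul_assoc, ← div_eq_mul_inv, div_mul_eq_mul_div,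
            div_le_div_iff₀ (by linarith) hζ0]
          have e1 : (1 + ‖ζ‖) ^ (-β) ≤ ‖ζ‖ ^ (-β) :=
            Real.rpow_le_rpow_of_nonpos hζ0 (by linarith) (by linarith)
          have e2 : ‖ζ‖ ≤ 2 * ‖ζ - z‖ := by linarith
          have e3 : 0 ≤ ‖ζ‖ ^ (-β) := by positivity
          nlinarith
        linarith
  refine key.trans ?_
  have iAB := (iA.const_mul (2 / r)).add (iB.const_mul ((r / 2) ^ (-β)))
  have s1 := integral_add iAB (iC.const_mul 2)
  have s2 := integral_add (iA.const_mul (2 / r)) (iB.const_mul ((r / 2) ^ (-β)))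
  simp only [Pi.add_apply] at s1 s2
  rw [s1, s2, integral_const_mul, integral_const_mul, integral_const_mul, eB, eC]
  have hL : 1 ≤ lg β r := one_le_lg hz
  set ℓ := r ^ (1 - β) with hℓ
  have hℓ0 : 0 < ℓ := by positivity
  have b1 : 2 / r * (2 * π * (D * (r ^ (2 - β) * lg β r))) = 4 * π * D * (ℓ * lg β r) := by
    have : r ^ (2 - β) = r * ℓ := by
      rw [hℓ, show 2 - β = 1 + (1 - β) by ring, Real.rpow_add hr0, Real.rpow_one]
    rw [this]; field_simp; norm_num
  have b2 : (r / 2) ^ (-β) * (2 * π * (r / 2)) ≤ 4 * π * ℓ := by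
    have e1 : (r / 2) ^ (-β) * (r / 2) = (r / 2) ^ (1 - β) := by
      rw [show 1 - β = -β + 1 by ring, Real.rpow_add (by linarith), Real.rpow_one]
    have e2 : (r / 2) ^ (1 - β) ≤ 2 * ℓ := by
      rw [Real.div_rpow hr0.le (by norm_num), div_eq_mul_inv, ← Real.rpow_neg (by norm_num), mul_comm]
      gcongr
      calc (2 : ℝ) ^ (-(1 - β)) ≤ 2 ^ (1 : ℝ) := by gcongr; norm_num; linarith
        _ = 2 := by norm_num
    calc _ = 2 * π * ((r / 2) ^ (-β) * (r / 2)) := by ring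
      _ ≤ 2 * π * (2 * ℓ) := by rw [e1]; gcongr
      _ = _ := by ring
  have b3 : 2 * (2 * π * ((2 * r) ^ (1 - β) / (β - 1))) ≤ 4 * π / (β - 1) * ℓ := by
    have : (2 * r) ^ (1 - β) ≤ ℓ :=
      Real.rpow_le_rpow_of_nonpos hr0 (by linarith) (by linarith)
    calc _ ≤ 2 * (2 * π * (ℓ / (β - 1))) := by gcongr
      _ = _ := by ring
  have b0 : 2 / r * ∫ ζ, (Metric.closedBall (0 : ℂ) (2 * r)).indicator
      (fun ζ => (1 + ‖ζ‖) ^ (-β)) ζ ≤ 4 * π * D * (ℓ * lg β r) := by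
    rw [← b1]
    exact mul_le_mul_of_nonneg_left eA (by positivity)
  have hle : ℓ ≤ ℓ * lg β r := le_mul_of_one_le_right hℓ0.le hL
  have c2 : 4 * π * ℓ ≤ 4 * π * (ℓ * lg β r) := by gcongr
  have c3 : 4 * π / (β - 1) * ℓ ≤ 4 * π / (β - 1) * (ℓ * lg β r) := by gcongr
  rw [add_mul, add_mul]
  linarith

/-! ### Functions of linear growth with decaying `∂/∂z̄` -/

lemma integrable_cauchy {β K : ℝ} (hβ1 : 1 < β) {h : ℂ → ℂ} (hc : Continuous h)
    (hK : ∀ ζ, ‖h ζ‖ ≤ K * (1 + ‖ζ‖) ^ (-β)) (z : ℂ) :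
    Integrable (fun ζ => h ζ / (ζ - z)) := by
  refine ((integrable_pot hβ1 z).const_mul K).mono'
    ((hc.measurable.div (measurable_id.sub_const z)).aestronglyMeasurable)
    (Filter.Eventually.of_forall fun ζ => ?_)
  rw [norm_div, ← mul_div_assoc]
  gcongr
  exact hK ζ

lemma integrable_cauchy_compact {h : ℂ → ℂ} (hc : Continuous h) (hs : HasCompactSupport h)
    (z : ℂ) : Integrable (fun ζ => h ζ / (ζ - z)) := by
  have hp : Continuous fun ζ : ℂ => (((1 + ‖ζ‖) ^ (2 : ℝ) : ℝ) : ℂ) := by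
    refine Complex.continuous_ofReal.comp (Continuous.rpow_const (by fun_prop) ?_)
    exact fun ζ => Or.inl (by positivity)
  obtain ⟨K, hK⟩ := (hs.mul_left (f := fun ζ : ℂ => (((1 + ‖ζ‖) ^ (2 : ℝ) : ℝ) : ℂ))
    ).exists_bound_of_continuous (hp.mul hc)
  refine integrable_cauchy (β := 2) (K := K) (by norm_num) hc (fun ζ => ?_) z
  have := hK ζ
  rw [Pi.mul_apply, norm_mul, Complex.norm_real, Real.norm_of_nonneg (by positivity)] at this
  rw [Real.rpow_neg (by positivity), ← div_eq_mul_inv, le_div_iff₀ (by positivity)]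
  linarith

/-- Subtracting from the Cauchy kernel its affine interpolation at `0` and `1` leaves a kernel decaying
like `|ζ|^{-3}`. -/
lemma kernel_third {z ζ : ℂ} (h0 : ζ ≠ 0) (h1 : ζ ≠ 1) (hz : ζ ≠ z) :
    1 / (ζ - z) - 1 / (ζ - 0) - z * (1 / (ζ - 1) - 1 / (ζ - 0)) =
      z * (z - 1) / (ζ * (ζ - z) * (ζ - 1)) := by
  have h2 : ζ - 1 ≠ 0 := sub_ne_zero.2 h1
  have h3 : ζ - z ≠ 0 := sub_ne_zero.2 hz
  rw [sub_zero]
  field_simp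
  ring

/-- The boundary term of the Cauchy–Pompeiu formula. -/
def RN (w : ℂ → ℂ) (N : ℝ) (z : ℂ) : ℂ := ∫ ζ : ℂ, w ζ * dbar (cutc N) ζ / (ζ - z)

/-- The boundary term at scale `N` is affine in `z` up to an error of size `1/N`. -/
lemma RN_affine {C : ℝ} (hC : 0 ≤ C) {w : ℂ → ℂ} (hw : ContDiff ℝ 1 w)
    (h1 : ∀ z, ‖w z‖ ≤ C * (1 + ‖z‖)) (z : ℂ) :
    ∃ K : ℝ, ∀ N : ℝ, 2 * ‖z‖ + 2 ≤ N →
      ‖RN w N z - RN w N 0 - z * (RN w N 1 - RN w N 0)‖ ≤ K / N := by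
  obtain ⟨B, hB, hBd⟩ := dbar_cutc_bound
  refine ⟨3 * C * B * (‖z * (z - 1)‖ * 4) * (4 * π), fun N hN => ?_⟩
  have hN0 : 0 < N := by linarith [norm_nonneg z]
  have hN2 : 2 ≤ N := by linarith [norm_nonneg z]
  set h : ℂ → ℂ := fun ζ => w ζ * dbar (cutc N) ζ with hh
  have hcont : Continuous h := hw.continuous.mul (continuous_dbar (contDiff_cutc N))
  have hsup : HasCompactSupport h := hasCompactSupport_of_norm (ρ := 2 * N) fun ζ hζ => by
    simp [hh, (hBd N hN0 ζ).2.2 hζ]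
  have hi := integrable_cauchy_compact hcont hsup
  have e : RN w N z - RN w N 0 - z * (RN w N 1 - RN w N 0) =
      ∫ ζ : ℂ, (h ζ / (ζ - z) - h ζ / (ζ - 0) - z * (h ζ / (ζ - 1) - h ζ / (ζ - 0))) := by
    have i1 : Integrable (fun ζ => h ζ / (ζ - z) - h ζ / (ζ - 0)) := (hi z).sub (hi 0)
    have i2 : Integrable (fun ζ => h ζ / (ζ - 1) - h ζ / (ζ - 0)) := (hi 1).sub (hi 0)
    rw [integral_sub i1 (i2.const_mul z), integral_sub (hi z) (hi 0), integral_const_mul,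
      integral_sub (hi 1) (hi 0)]
    rfl
  have bd : ∀ ζ : ℂ, ‖h ζ / (ζ - z) - h ζ / (ζ - 0) - z * (h ζ / (ζ - 1) - h ζ / (ζ - 0))‖ ≤
      3 * C * B * (‖z * (z - 1)‖ * 4 / N ^ 3) := by
    intro ζ
    obtain ⟨B1, B2, B3⟩ := hBd N hN0 ζ
    rcases lt_or_ge ‖ζ‖ N with hl | hl
    · simp only [hh, B2 hl, mul_zero, zero_div, sub_zero, norm_zero]; positivity
    rcases lt_or_ge (2 * N) ‖ζ‖ with hg | hg
    · simp only [hh, B3 hg, mul_zero, zero_div, sub_zero, norm_zero]; positivity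
    have z1 : N / 2 ≤ ‖ζ - z‖ := by
      have := norm_sub_norm_le ζ z
      linarith
    have z2 : N / 2 ≤ ‖ζ - 1‖ := by
      have := norm_sub_norm_le ζ 1
      rw [norm_one] at this
      linarith
    have n0 : ζ ≠ 0 := norm_pos_iff.1 (by linarith)
    have n1 : ζ ≠ 1 := sub_ne_zero.1 (norm_pos_iff.1 (by linarith))
    have n2 : ζ ≠ z := sub_ne_zero.1 (norm_pos_iff.1 (by linarith))
    have : h ζ / (ζ - z) - h ζ / (ζ - 0) - z * (h ζ / (ζ - 1) - h ζ / (ζ - 0)) =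
        h ζ * (z * (z - 1) / (ζ * (ζ - z) * (ζ - 1))) := by
      rw [← kernel_third n0 n1 n2]; ring
    rw [this, norm_mul]
    have hh1 : ‖h ζ‖ ≤ 3 * C * B := by
      rw [hh, norm_mul]
      calc ‖w ζ‖ * ‖dbar (cutc N) ζ‖ ≤ (C * (3 * N)) * (B / N) := by
            gcongr
            refine (h1 ζ).trans ?_
            gcongr
            linarith
        _ = _ := by field_simp
    gcongr
    rw [norm_div]
    have : N ^ 3 / 4 ≤ ‖ζ * (ζ - z) * (ζ - 1)‖ := by
      rw [norm_mul, norm_mul]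
      calc N ^ 3 / 4 = N * (N / 2) * (N / 2) := by ring
        _ ≤ _ := by gcongr
    calc _ ≤ ‖z * (z - 1)‖ / (N ^ 3 / 4) := by gcongr
      _ = _ := by field_simp
  have res : ∀ ζ ∉ Metric.closedBall (0 : ℂ) (2 * N),
      h ζ / (ζ - z) - h ζ / (ζ - 0) - z * (h ζ / (ζ - 1) - h ζ / (ζ - 0)) = 0 := by
    intro ζ hζ
    have : 2 * N < ‖ζ‖ := by simpa using hζ
    simp [hh, (hBd N hN0 ζ).2.2 this]
  rw [e, ← setIntegral_eq_integral_of_forall_compl_eq_zero res]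
  have hvol : (volume : Measure ℂ).real (Metric.closedBall 0 (2 * N)) = 4 * π * N ^ 2 := by
    simp only [Measure.real, Complex.volume_closedBall, ENNReal.toReal_mul, ENNReal.toReal_pow]
    rw [ENNReal.toReal_ofReal (by linarith)]
    simp; ring
  refine (norm_setIntegral_le_of_norm_le_const (by
    exact (isCompact_closedBall (0 : ℂ) (2 * N)).measure_lt_top) fun ζ _ => bd ζ).trans ?_
  rw [hvol]
  apply le_of_eq
  field_simp

/-- A function of at most linear growth whose `∂/∂z̄` is `O(|z|^{-β})` is affine up to
`O(|z|^{1-β})`, with a logarithm when `β = 2`. -/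
lemma global_structure {β C : ℝ} (hβ1 : 1 < β) (hβ2 : β ≤ 2) (hC : 0 ≤ C) {w : ℂ → ℂ}
    (hw : ContDiff ℝ 1 w) (h1 : ∀ z, ‖w z‖ ≤ C * (1 + ‖z‖))
    (h2 : ∀ z, ‖dbar w z‖ ≤ C * (1 + ‖z‖) ^ (-β)) :
    ∃ a b : ℂ, ∃ C' > (0 : ℝ), ∀ z : ℂ, 3 ≤ ‖z‖ →
      ‖w z - a * z - b‖ ≤ C' * (‖z‖ ^ (1 - β) * lg β ‖z‖) := by
  obtain ⟨Cp, hCp, hpot⟩ := pot_bound hβ1 hβ2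
  obtain ⟨B, hB, hBd⟩ := dbar_cutc_bound
  set T : ℂ → ℂ := fun z => ∫ ζ : ℂ, dbar w ζ / (ζ - z) with hT
  have hdc := continuous_dbar hw
  have hRN : ∀ z, Filter.Tendsto (fun n : ℕ => RN w n z) Filter.atTop
      (nhds (-π * w z - T z)) := by
    intro z
    have t1 : Filter.Tendsto (fun n : ℕ => ∫ ζ : ℂ, cutc n ζ * dbar w ζ / (ζ - z))
        Filter.atTop (nhds (T z)) := by
      refine tendsto_integral_of_dominated_convergence
        (fun ζ => C * ((1 + ‖ζ‖) ^ (-β) / ‖ζ - z‖)) (fun n => ?_)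
        ((integrable_pot hβ1 z).const_mul C) (fun n => Filter.Eventually.of_forall fun ζ => ?_)
        (Filter.Eventually.of_forall fun ζ => ?_)
      · exact ((((contDiff_cutc n).continuous.mul hdc).measurable.div
          (measurable_id.sub_const z))).aestronglyMeasurable
      · rw [norm_div, norm_mul, ← mul_div_assoc]
        refine div_le_div_of_nonneg_right ?_ (norm_nonneg _)
        calc _ ≤ 1 * (C * (1 + ‖ζ‖) ^ (-β)) :=
              mul_le_mul (norm_cutc_le _ _) (h2 ζ) (norm_nonneg _) zero_le_one
          _ = _ := one_mul _
      · refine tendsto_const_nhds.congr' ?_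
        filter_upwards [Filter.eventually_ge_atTop (⌈‖ζ‖⌉₊ + 1)] with n hn
        have hn' : ((⌈‖ζ‖⌉₊ + 1 : ℕ) : ℝ) ≤ n := by exact_mod_cast hn
        push_cast at hn'
        have hle := Nat.le_ceil ‖ζ‖
        rw [cutc_one (by linarith [norm_nonneg ζ]) (by linarith), one_mul]
    refine (t1.const_sub (-π * w z)).congr' ?_
    filter_upwards [Filter.eventually_ge_atTop (⌈‖z‖⌉₊ + 1)] with n hn
    have hn' : ((⌈‖z‖⌉₊ + 1 : ℕ) : ℝ) ≤ n := by exact_mod_cast hn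
    push_cast at hn'
    have hle := Nat.le_ceil ‖z‖
    have hn0 : (0 : ℝ) < n := by linarith [norm_nonneg z]
    have hc1 : cutc n z = 1 := cutc_one hn0 (by linarith)
    have hsm : HasCompactSupport fun ζ => cutc n ζ * w ζ :=
      hasCompactSupport_of_norm (ρ := 2 * n) fun ζ hζ => by
        rw [cutc_zero hn0 hζ.le, zero_mul]
    have hcp := cauchy_pompeiu (fun ζ => cutc n ζ * w ζ) ((contDiff_cutc n).mul hw) hsm z
    rw [hc1, one_mul] at hcp
    have hsplit : ∀ ζ, dbar (fun ζ => cutc n ζ * w ζ) ζ / (ζ - z) =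
        cutc n ζ * dbar w ζ / (ζ - z) + w ζ * dbar (cutc n) ζ / (ζ - z) := by
      intro ζ
      rw [dbar_mul ((contDiff_cutc _).differentiable (by norm_num) ζ)
        (hw.differentiable (by norm_num) ζ)]
      ring
    simp_rw [hsplit] at hcp
    have i1 : Integrable fun ζ => cutc n ζ * dbar w ζ / (ζ - z) :=
      integrable_cauchy_compact ((contDiff_cutc n).continuous.mul hdc)
        (hasCompactSupport_of_norm (ρ := 2 * n) fun ζ hζ => by
          rw [Pi.mul_apply, cutc_zero hn0 hζ.le, zero_mul]) z
    have i2 : Integrable fun ζ => w ζ * dbar (cutc n) ζ / (ζ - z) :=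
      integrable_cauchy_compact (hw.continuous.mul (continuous_dbar (contDiff_cutc n)))
        (hasCompactSupport_of_norm (ρ := 2 * n) fun ζ hζ => by
          rw [Pi.mul_apply, (hBd n hn0 ζ).2.2 hζ, mul_zero]) z
    rw [integral_add i1 i2] at hcp
    rw [← hcp, RN]
    ring
  set G : ℂ → ℂ := fun z => -π * w z - T z with hG
  have haff : ∀ z, G z - G 0 - z * (G 1 - G 0) = 0 := by
    intro z
    have t := ((hRN z).sub (hRN 0)).sub (((hRN 1).sub (hRN 0)).const_mul z)
    obtain ⟨K, hK⟩ := RN_affine hC hw h1 z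
    have t0 : Filter.Tendsto (fun n : ℕ => RN w n z - RN w n 0 - z * (RN w n 1 - RN w n 0))
        Filter.atTop (nhds 0) := by
      refine squeeze_zero_norm' ?_ (tendsto_const_div_atTop_nhds_zero_nat K)
      filter_upwards [Filter.eventually_ge_atTop (⌈2 * ‖z‖ + 2⌉₊)] with n hn
      refine hK n ((Nat.le_ceil _).trans ?_)
      exact_mod_cast hn
    exact tendsto_nhds_unique t t0
  have hpi : (π : ℂ) ≠ 0 := by exact_mod_cast Real.pi_ne_zero
  refine ⟨-(G 1 - G 0) / π, -G 0 / π, (C + 1) * Cp / π, by positivity, fun z hz => ?_⟩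
  have e : w z - -(G 1 - G 0) / π * z - -G 0 / π = -(T z) / π := by
    have := haff z
    have hGz : G z = -π * w z - T z := rfl
    rw [hGz] at this
    field_simp
    linear_combination -this
  rw [e, norm_div, norm_neg, Complex.norm_real, Real.norm_of_nonneg Real.pi_pos.le,
    div_mul_eq_mul_div]
  gcongr
  have : ‖T z‖ ≤ ∫ ζ : ℂ, C * ((1 + ‖ζ‖) ^ (-β) / ‖ζ - z‖) := by
    refine norm_integral_le_of_norm_le ((integrable_pot hβ1 z).const_mul C)
      (Filter.Eventually.of_forall fun ζ => ?_)
    rw [norm_div, ← mul_div_assoc]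
    gcongr
    exact h2 ζ
  rw [integral_const_mul] at this
  have hL : 0 ≤ Cp * (‖z‖ ^ (1 - β) * lg β ‖z‖) := by
    have := one_le_lg (β := β) hz
    positivity
  calc _ ≤ _ := this
    _ ≤ C * (Cp * (‖z‖ ^ (1 - β) * lg β ‖z‖)) := mul_le_mul_of_nonneg_left (hpot z hz) hC
    _ ≤ _ := by linarith

/-! ### Algebra and monotonicity for the phase equation -/

/-- The real linear map of `ℂ ≃ ℝ²` with symmetric matrix `((a, b), (b, c))`. -/
def sym (a b c : ℝ) : ℂ →L[ℝ] ℂ :=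
  Complex.reCLM.smulRight (⟨a, b⟩ : ℂ) + Complex.imCLM.smulRight (⟨b, c⟩ : ℂ)

lemma sym_apply (a b c : ℝ) (v : ℂ) :
    sym a b c v = ⟨a * v.re + b * v.im, b * v.re + c * v.im⟩ := by
  apply Complex.ext <;> simp [sym] <;> ring

/-- `σ(q) = √(1+q²) + q`, the shift defining the new independent variable `Du + σ x`. -/
def sg (q : ℝ) : ℝ := √(1 + q ^ 2) + q

/-- `τ(q) = √(1+q²) - q = 1/σ(q)`, the shift defining the new dependent variable `Du - τ x`. -/
def ta (q : ℝ) : ℝ := √(1 + q ^ 2) - q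

lemma sqrt_sq_q (q : ℝ) : √(1 + q ^ 2) ^ 2 = 1 + q ^ 2 := Real.sq_sqrt (by positivity)

lemma sg_mul_ta (q : ℝ) : sg q * ta q = 1 := by
  have := sqrt_sq_q q
  unfold sg ta; linarith [show (√(1 + q ^ 2) + q) * (√(1 + q ^ 2) - q) = √(1 + q ^ 2) ^ 2 - q ^ 2 by ring]

lemma sg_sub_ta (q : ℝ) : sg q - ta q = 2 * q := by unfold sg ta; ring

lemma one_le_sqrt_q (q : ℝ) : 1 ≤ √(1 + q ^ 2) := by
  rw [Real.one_le_sqrt]; nlinarith [sq_nonneg q]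

lemma one_le_sg_sub (q : ℝ) : 1 ≤ sg q - q := by
  unfold sg; linarith [one_le_sqrt_q q]

lemma abs_lt_sqrt_q (q : ℝ) : |q| < √(1 + q ^ 2) := by
  rw [Real.lt_sqrt (abs_nonneg q), sq_abs]; linarith

lemma sg_pos (q : ℝ) : 0 < sg q := by
  unfold sg; linarith [abs_lt_sqrt_q q, neg_abs_le q]

lemma ta_pos (q : ℝ) : 0 < ta q := by
  unfold ta; linarith [abs_lt_sqrt_q q, le_abs_self q]

lemma sqrt_q_lip (q r : ℝ) : |√(1 + q ^ 2) - √(1 + r ^ 2)| ≤ |q - r| := by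
  have hs : 0 < √(1 + q ^ 2) + √(1 + r ^ 2) := by linarith [one_le_sqrt_q q, one_le_sqrt_q r]
  have e : (√(1 + q ^ 2) - √(1 + r ^ 2)) * (√(1 + q ^ 2) + √(1 + r ^ 2)) = (q - r) * (q + r) := by
    linarith [sqrt_sq_q q, sqrt_sq_q r,
      show (√(1 + q ^ 2) - √(1 + r ^ 2)) * (√(1 + q ^ 2) + √(1 + r ^ 2)) =
        √(1 + q ^ 2) ^ 2 - √(1 + r ^ 2) ^ 2 by ring]
  have h1 : |√(1 + q ^ 2) - √(1 + r ^ 2)| * (√(1 + q ^ 2) + √(1 + r ^ 2)) = |q - r| * |q + r| := by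
    rw [← abs_mul, ← e, abs_mul, abs_of_pos hs]
  have h2 : |q + r| ≤ √(1 + q ^ 2) + √(1 + r ^ 2) := by
    linarith [abs_add_le q r, abs_lt_sqrt_q q, abs_lt_sqrt_q r]
  have h3 : |q - r| * |q + r| ≤ |q - r| * (√(1 + q ^ 2) + √(1 + r ^ 2)) := by gcongr
  rw [← h1] at h3
  exact le_of_mul_le_mul_right h3 hs

lemma sg_lip (q r : ℝ) : |sg q - sg r| ≤ 2 * |q - r| := by
  have := sqrt_q_lip q r
  have e : sg q - sg r = (√(1 + q ^ 2) - √(1 + r ^ 2)) + (q - r) := by unfold sg; ring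
  rw [e]
  linarith [abs_add_le (√(1 + q ^ 2) - √(1 + r ^ 2)) (q - r)]

lemma ta_lip (q r : ℝ) : |ta q - ta r| ≤ 2 * |q - r| := by
  have := sqrt_q_lip q r
  have e : ta q - ta r = (√(1 + q ^ 2) - √(1 + r ^ 2)) + -(q - r) := by unfold ta; ring
  rw [e]
  have := abs_add_le (√(1 + q ^ 2) - √(1 + r ^ 2)) (-(q - r))
  rw [abs_neg] at this
  linarith

/-- The equation `det H + q tr H = 1` with `H₁₁ + q > 0` makes `H + q` positive definite, so that
`H + σ` is uniformly positive for nearby parameters. -/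
lemma form_lower {a b c q s : ℝ} (h : a * c - b ^ 2 + q * (a + c) = 1) (hp : 0 < a + q)
    (hs : 1 / 2 ≤ s - q) (v : ℂ) :
    1 / 2 * ‖v‖ ^ 2 ≤ (starRingEnd ℂ v * sym (a + s) b (c + s) v).re := by
  rw [sym_apply, ← Complex.normSq_eq_norm_sq, Complex.normSq_apply]
  simp only [Complex.mul_re, Complex.conj_re, Complex.conj_im]
  set x := v.re
  set y := v.im
  have key : 0 ≤ (a + q) * x ^ 2 + 2 * b * x * y + (c + q) * y ^ 2 := by
    have : 0 ≤ (a + q) * ((a + q) * x ^ 2 + 2 * b * x * y + (c + q) * y ^ 2) := by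
      have : (a + q) * ((a + q) * x ^ 2 + 2 * b * x * y + (c + q) * y ^ 2) =
          ((a + q) * x + b * y) ^ 2 + (1 + q ^ 2) * y ^ 2 := by
        linear_combination y ^ 2 * h
      rw [this]; positivity
    exact nonneg_of_mul_nonneg_right this hp
  nlinarith [sq_nonneg x, sq_nonneg y]

lemma norm_lower_of_form {w v : ℂ} {d : ℝ} (h : d * ‖v‖ ^ 2 ≤ (starRingEnd ℂ v * w).re) :
    d * ‖v‖ ≤ ‖w‖ := by
  have h1 : d * ‖v‖ ^ 2 ≤ ‖v‖ * ‖w‖ := by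
    calc _ ≤ _ := h
      _ ≤ ‖starRingEnd ℂ v * w‖ := Complex.re_le_norm _
      _ = _ := by rw [norm_mul, Complex.norm_conj]
  rcases (norm_nonneg v).eq_or_lt with h0 | h0
  · rw [← h0]; simp
  · have : ‖v‖ * (d * ‖v‖) ≤ ‖v‖ * ‖w‖ := by linarith [show ‖v‖ * (d * ‖v‖) = d * ‖v‖ ^ 2 by ring]
    exact le_of_mul_le_mul_left this h0

/-- In the variables `Z = Du + σ x`, `Y = Du - τ x` the equation says that `conj Y` has small
`∂/∂Z̄`: the differential `L` of `Y` with respect to `Z` is symmetric, and nearly trace free. -/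
lemma trace_bound {a b c q q1 : ℝ} (h : a * c - b ^ 2 + q * (a + c) = 1) (hp : 0 < a + q)
    (hq : |q - q1| ≤ 1 / 2) (L : ℂ →L[ℝ] ℂ)
    (hL : ∀ v, L (sym (a + sg q1) b (c + sg q1) v) = sym (a + -ta q1) b (c + -ta q1) v) :
    ‖L 1 - Complex.I * L Complex.I‖ ≤ 6 * |q - q1| := by
  set s := sg q1 with hs
  set t := ta q1 with ht
  have hst : s * t = 1 := sg_mul_ta q1
  have hst2 : s - t = 2 * q1 := sg_sub_ta q1
  have hs1 : 1 ≤ s - q1 := one_le_sg_sub q1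
  have hsq : 1 / 2 ≤ s - q := by linarith [(abs_le.1 hq).2]
  set D := (a + s) * (c + s) - b ^ 2 with hD
  set T := a + c + 2 * q with hT
  have hTpos : 0 < T := by
    have : 0 < (a + q) * (c + q) := by nlinarith [sq_nonneg b, sq_nonneg q]
    have := pos_of_mul_pos_right this hp.le
    linarith
  have hD2 : D = 1 + q ^ 2 + (s - q) * T + (s - q) ^ 2 := by
    rw [hD, hT]; linear_combination h
  have hDpos : 0 < D := by rw [hD2]; nlinarith [sq_nonneg q, mul_pos (by linarith : 0 < s - q) hTpos]
  have e1 : (D : ℂ) * L 1 = (c + s : ℝ) * sym (a + -t) b (c + -t) 1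
      - (b : ℝ) * sym (a + -t) b (c + -t) Complex.I := by
    rw [← hL, ← hL, ← Complex.real_smul, ← Complex.real_smul, ← Complex.real_smul,
      ← L.map_smul, ← L.map_smul, ← L.map_smul, ← L.map_sub]
    congr 1
    simp only [sym_apply]
    apply Complex.ext <;> simp [hD, pow_two] <;> ring
  have e2 : (D : ℂ) * L Complex.I = (a + s : ℝ) * sym (a + -t) b (c + -t) Complex.I
      - (b : ℝ) * sym (a + -t) b (c + -t) 1 := by
    rw [← hL, ← hL, ← Complex.real_smul, ← Complex.real_smul, ← Complex.real_smul,
      ← L.map_smul, ← L.map_smul, ← L.map_smul, ← L.map_sub]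
    congr 1
    simp only [sym_apply]
    apply Complex.ext <;> simp [hD, pow_two] <;> ring
  have e3 : (D : ℂ) * (L 1 - Complex.I * L Complex.I) = ((2 * (a + c) * (q1 - q) : ℝ) : ℂ) := by
    have : (D : ℂ) * (L 1 - Complex.I * L Complex.I) =
      (D : ℂ) * L 1 - Complex.I * ((D : ℂ) * L Complex.I) := by ring
    rw [this, e1, e2]
    simp only [sym_apply]
    apply Complex.ext
    · simp
      linear_combination 2 * h - 2 * hst + (a + c) * hst2
    · simp; ring
  have e4 : D * ‖L 1 - Complex.I * L Complex.I‖ = 2 * |a + c| * |q - q1| := by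
    have := congrArg norm e3
    rw [norm_mul, Complex.norm_real, Complex.norm_real, Real.norm_of_nonneg hDpos.le, Real.norm_eq_abs,
      abs_mul, abs_mul, abs_sub_comm q1] at this
    simpa using this
  have h3 : |a + c| ≤ 3 * D := by
    rw [hD2, abs_le]
    constructor
    · nlinarith [sq_nonneg (q + 1), sq_nonneg (q - 1), mul_pos (by linarith : 0 < s - q) hTpos, sq_nonneg (s - q)]
    · nlinarith [sq_nonneg (q + 1), sq_nonneg (q - 1), mul_nonneg (by linarith : 0 ≤ s - q - 1 / 2) hTpos.le, sq_nonneg (s - q)]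
  have : D * ‖L 1 - Complex.I * L Complex.I‖ ≤ D * (6 * |q - q1|) := by
    rw [e4]
    nlinarith [abs_nonneg (q - q1)]
  exact le_of_mul_le_mul_left this hDpos

/-- Strong monotonicity along a segment, allowing a defect `m / (1 + |z|²)`. -/
lemma seg_mono {F : ℂ → ℂ} {S : ℂ → ℂ →L[ℝ] ℂ} {x y : ℂ} {m : ℝ} (hm : 0 ≤ m)
    (hF : ∀ z ∈ segment ℝ x y, HasFDerivAt F (S z) z)
    (hS : ∀ z ∈ segment ℝ x y, ∀ v : ℂ,
      (1 / 2 - m / (1 + ‖z‖ ^ 2)) * ‖v‖ ^ 2 ≤ (starRingEnd ℂ v * S z v).re) :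
    1 / 2 * ‖y - x‖ ^ 2 - π * m * ‖y - x‖ ≤ (starRingEnd ℂ (y - x) * (F y - F x)).re := by
  rcases eq_or_ne x y with rfl | hxy
  · simp
  set l := ‖y - x‖ with hl
  have hl0 : 0 < l := norm_pos_iff.2 (sub_ne_zero.2 hxy.symm)
  have hlc : (l : ℂ) ≠ 0 := by exact_mod_cast hl0.ne'
  set e : ℂ := (l⁻¹ : ℝ) * (y - x) with he
  have hen : ‖e‖ = 1 := by
    rw [he, norm_mul, Complex.norm_real, Real.norm_of_nonneg (by positivity), ← hl]
    field_simp
  have hye : y - x = (l : ℂ) * e := by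
    rw [he]; push_cast; field_simp
  have hseg : ∀ t ∈ Set.Icc (0 : ℝ) l, x + t * e ∈ segment ℝ x y := by
    intro t ht
    rw [segment_eq_image']
    refine ⟨t / l, ⟨div_nonneg ht.1 hl0.le, (div_le_one hl0).2 ht.2⟩, ?_⟩
    simp only [Complex.real_smul, hye]
    push_cast; field_simp
  set k : ℝ := (starRingEnd ℂ e * x).re with hk
  have hee : (starRingEnd ℂ e * e).re = 1 := by
    rw [← Complex.normSq_eq_conj_mul_self, Complex.ofReal_re, Complex.normSq_eq_norm_sq, hen]; norm_num
  set g : ℝ → ℝ := fun t => (starRingEnd ℂ e * F (x + t * e)).re + m * Real.arctan (k + t) - t / 2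
    with hg
  have hder : ∀ t ∈ Set.Icc (0 : ℝ) l, HasDerivAt g
      ((starRingEnd ℂ e * S (x + t * e) e).re + m * (1 / (1 + (k + t) ^ 2)) - 1 / 2) t := by
    intro t ht
    have h1 : HasDerivAt (fun t : ℝ => x + t * e) e t := by
      simpa using ((Complex.ofRealCLM.hasDerivAt (x := t)).mul_const e).const_add x
    have h2 : HasDerivAt (fun t : ℝ => F (x + t * e)) (S (x + t * e) e) t :=
      (hF _ (hseg t ht)).comp_hasDerivAt t h1
    have h3 := Complex.reCLM.hasFDerivAt.comp_hasDerivAt t (h2.const_mul (starRingEnd ℂ e))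
    have h4 : HasDerivAt (fun t : ℝ => Real.arctan (k + t)) (1 / (1 + (k + t) ^ 2)) t := by
      simpa using ((hasDerivAt_id t).const_add k).arctan
    exact (h3.add (h4.const_mul m)).sub ((hasDerivAt_id t).div_const 2)
  have hmono : MonotoneOn g (Set.Icc 0 l) := by
    refine monotoneOn_of_deriv_nonneg (convex_Icc 0 l)
      (fun t ht => (hder t ht).continuousAt.continuousWithinAt)
      (fun t ht => (hder t (interior_subset ht)).differentiableAt.differentiableWithinAt) ?_
    intro t ht
    have ht' := interior_subset ht
    rw [(hder t ht').deriv]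
    have h1 := hS _ (hseg t ht') e
    rw [hen] at h1
    have h2 : (k + t) ^ 2 ≤ ‖x + t * e‖ ^ 2 := by
      have : k + t = (starRingEnd ℂ e * (x + t * e)).re := by
        rw [mul_add, Complex.add_re, mul_left_comm, Complex.re_ofReal_mul, hee, mul_one]
      rw [this, ← sq_abs]
      gcongr
      refine (Complex.abs_re_le_norm _).trans ?_
      rw [norm_mul, Complex.norm_conj, hen, one_mul]
    have h3 : m / (1 + ‖x + t * e‖ ^ 2) ≤ m * (1 / (1 + (k + t) ^ 2)) := by
      rw [mul_one_div]; gcongr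
    linarith
  have hfin := hmono (Set.left_mem_Icc.2 hl0.le) (Set.right_mem_Icc.2 hl0.le) hl0.le
  simp only [hg, Complex.ofReal_zero, zero_mul, add_zero, zero_div, sub_zero] at hfin
  rw [← hye, add_sub_cancel] at hfin
  have a1 := Real.arctan_lt_pi_div_two (k + l)
  have a2 := Real.neg_pi_div_two_lt_arctan k
  have h5 : m * (Real.arctan (k + l) - Real.arctan k) ≤ m * π :=
    mul_le_mul_of_nonneg_left (by linarith) hm
  have h6 : l / 2 - m * π ≤ (starRingEnd ℂ e * (F y - F x)).re := by
    rw [mul_sub, Complex.sub_re]; nlinarith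
  have h7 : (starRingEnd ℂ (y - x) * (F y - F x)).re = l * (starRingEnd ℂ e * (F y - F x)).re := by
    rw [hye, map_mul, Complex.conj_ofReal, mul_assoc, Complex.re_ofReal_mul]
  rw [h7]
  nlinarith

/-! ### Change of variables -/

/-- The continuous linear equivalence attached to a bounded below endomorphism of `ℂ`. -/
lemma exists_equiv {S : ℂ →L[ℝ] ℂ} (hS : ∀ v, 1 / 2 * ‖v‖ ≤ ‖S v‖) :
    ∃ e : ℂ ≃L[ℝ] ℂ, (e : ℂ →L[ℝ] ℂ) = S := by
  have hinj : Function.Injective (S : ℂ →ₗ[ℝ] ℂ) := by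
    rw [← LinearMap.ker_eq_bot, LinearMap.ker_eq_bot']
    intro v hv
    have h1 := hS v
    have h2 : S v = 0 := hv
    rw [h2, norm_zero] at h1
    exact norm_le_zero_iff.1 (by linarith)
  refine ⟨(LinearEquiv.ofInjectiveEndo (S : ℂ →ₗ[ℝ] ℂ) hinj).toContinuousLinearEquiv, ?_⟩
  ext v
  simp

/-- An expansive `C¹` map on an open set has open image and a `C¹` inverse. -/
lemma inverse_map {F : ℂ → ℂ} {S : ℂ → ℂ →L[ℝ] ℂ} {U : Set ℂ} (hU : IsOpen U)
    (hF : ∀ x ∈ U, HasFDerivAt F (S x) x) (hSc : ContinuousOn S U)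
    (hS : ∀ x ∈ U, ∀ v, 1 / 2 * ‖v‖ ≤ ‖S x v‖) (hinj : Set.InjOn F U) :
    IsOpen (F '' U) ∧ ∃ g : ℂ → ℂ, (∀ x ∈ U, g (F x) = x) ∧
      ∀ x ∈ U, ContDiffAt ℝ 1 g (F x) ∧ ∀ v, fderiv ℝ g (F x) (S x v) = v := by
  have hCD : ∀ x ∈ U, ContDiffAt ℝ 1 F x := by
    intro x hx
    rw [contDiffAt_one_iff]
    exact ⟨S, U, hU.mem_nhds hx, hSc, hF⟩
  choose! e he using fun x hx => exists_equiv (hS x hx)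
  have hF' : ∀ x ∈ U, HasFDerivAt F (e x : ℂ →L[ℝ] ℂ) x := fun x hx => by
    rw [he x hx]; exact hF x hx
  have hst : ∀ x (hx : x ∈ U), HasStrictFDerivAt F (e x : ℂ →L[ℝ] ℂ) x := fun x hx =>
    (hCD x hx).hasStrictFDerivAt' (hF' x hx) (by norm_num)
  refine ⟨?_, Function.invFunOn F U, fun x hx => hinj.leftInvOn_invFunOn hx, fun x hx => ?_⟩
  · rw [isOpen_iff_mem_nhds]
    rintro _ ⟨x, hx, rfl⟩
    rw [← (hst x hx).map_nhds_eq_of_equiv]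
    exact Filter.image_mem_map (hU.mem_nhds hx)
  · have hCDg : ContDiffAt ℝ 1 (Function.invFunOn F U) (F x) := by
      have h1 := (hCD x hx).to_localInverse (hF' x hx) (by norm_num)
      refine h1.congr_of_eventuallyEq ?_
      have h2 := (hCD x hx).toOpenPartialHomeomorph F (hF' x hx) (by norm_num)
      have hs : ((hCD x hx).localInverse (hF' x hx) (by norm_num)) =
          (hst x hx).localInverse F (e x) x := rfl
      have hcont : Filter.Tendsto ((hst x hx).localInverse F (e x) x) (nhds (F x)) (nhds x) :=
        (hst x hx).localInverse_tendsto
      filter_upwards [(hst x hx).eventually_right_inverse, hcont (hU.mem_nhds hx)] with y h3 h4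
      rw [hs]
      have := hinj.leftInvOn_invFunOn h4
      rwa [h3] at this
    refine ⟨hCDg, fun v => ?_⟩
    have h1 : HasFDerivAt (Function.invFunOn F U ∘ F)
        ((fderiv ℝ (Function.invFunOn F U) (F x)).comp (S x)) x :=
      ((hCDg.differentiableAt (by norm_num)).hasFDerivAt).comp x (hF x hx)
    have h2 : HasFDerivAt (Function.invFunOn F U ∘ F) (ContinuousLinearMap.id ℝ ℂ) x := by
      refine (hasFDerivAt_id x).congr_of_eventuallyEq ?_
      filter_upwards [hU.mem_nhds hx] with y hy
      exact hinj.leftInvOn_invFunOn hy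
    have := h1.unique h2
    exact DFunLike.congr_fun this v

/-- Covering criterion: a connected set meeting the open image of an expansive map, and not meeting
the image of the frontier, lies in the image. -/
lemma image_covers {F : ℂ → ℂ} {U V : Set ℂ} {δ : ℝ} (hδ : 0 < δ) (hF : Continuous F)
    (hopen : IsOpen (F '' U)) (hexp : ∀ x ∈ U, ∀ y ∈ U, δ * ‖x - y‖ ≤ ‖F x - F y‖)
    (hV : IsPreconnected V) (hb : ∀ x ∈ closure U, x ∉ U → F x ∉ V)
    (hne : (V ∩ F '' U).Nonempty) : V ⊆ F '' U := by
  refine hV.subset_of_closure_inter_subset hopen hne ?_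
  rintro ζ ⟨hζ, hζV⟩
  rw [mem_closure_iff_seq_limit] at hζ
  obtain ⟨s, hs, hlim⟩ := hζ
  choose x hxU hx using hs
  have hbd : Bornology.IsBounded (Set.range x) := by
    obtain ⟨B, hB⟩ := (Metric.isBounded_range_of_tendsto s hlim).exists_norm_le
    rw [isBounded_iff_forall_norm_le]
    refine ⟨‖x 0‖ + (2 * B) / δ, ?_⟩
    rintro _ ⟨n, rfl⟩
    have h1 := hexp _ (hxU n) _ (hxU 0)
    rw [hx, hx] at h1
    have h2 : ‖s n - s 0‖ ≤ 2 * B := by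
      linarith [norm_sub_le (s n) (s 0), hB _ (Set.mem_range_self n), hB _ (Set.mem_range_self 0)]
    have h3 : ‖x n - x 0‖ ≤ 2 * B / δ := by
      rw [le_div_iff₀ hδ]; linarith
    have h4 : ‖x n‖ ≤ ‖x 0‖ + ‖x n - x 0‖ := by
      have := norm_add_le (x 0) (x n - x 0)
      rwa [add_sub_cancel] at this
    linarith
  obtain ⟨xs, -, φ, hφ, hxs⟩ := tendsto_subseq_of_bounded hbd (fun n => Set.mem_range_self n)
  have h1 : Filter.Tendsto (fun n => F (x (φ n))) Filter.atTop (nhds (F xs)) :=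
    (hF.tendsto xs).comp hxs
  have h2 : Filter.Tendsto (fun n => F (x (φ n))) Filter.atTop (nhds ζ) := by
    simp only [hx]
    exact hlim.comp hφ.tendsto_atTop
  have h3 := tendsto_nhds_unique h1 h2
  by_cases h4 : xs ∈ U
  · exact ⟨xs, h4, h3⟩
  · exact absurd (h3 ▸ hζV) (hb xs (mem_closure_of_tendsto hxs
      (Filter.Eventually.of_forall fun n => hxU _)) h4)

lemma exterior_preconnected {M : ℝ} (hM : 0 ≤ M) : IsPreconnected {z : ℂ | M < ‖z‖} := by
  have h1 : IsPreconnected (Metric.sphere (0 : ℂ) 1) :=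
    isPreconnected_sphere (by rw [Complex.rank_real_complex]; norm_num) 0 1
  have h2 := (isPreconnected_Ioi (a := M)).prod h1
  have h3 := h2.image (fun p : ℝ × ℂ => (p.1 : ℂ) * p.2) (by fun_prop)
  convert h3 using 1
  ext z
  constructor
  · intro hz
    have hz' : M < ‖z‖ := hz
    have h0 : (‖z‖ : ℂ) ≠ 0 := by exact_mod_cast (hM.trans_lt hz').ne'
    refine ⟨(‖z‖, z / ‖z‖), ⟨hz, ?_⟩, ?_⟩
    · have : ‖z‖ ≠ 0 := (hM.trans_lt hz').ne'
      simp [this]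
    · simp only; field_simp
  · rintro ⟨⟨r, s⟩, ⟨hr, hs⟩, rfl⟩
    have hr' : M < r := hr
    have hs' : ‖s‖ = 1 := by simpa using hs
    simp only [Set.mem_ofPred_eq, norm_mul, Complex.norm_real, hs', mul_one]
    rwa [Real.norm_of_nonneg (by linarith)]

/-- The exterior problem in complex form: `P` is the gradient, `((a, b), (b, c))` the Hessian,
`q` the cotangent of the phase. -/
structure Core (β C0 R0 q0 : ℝ) (P : ℂ → ℂ) (a b c q : ℂ → ℝ) : Prop where
  hβ1 : 1 < β
  hβ2 : β ≤ 2
  hC0 : 0 < C0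
  hR0 : 3 ≤ R0
  hP : ∀ z, HasFDerivAt P (sym (a z) (b z) (c z)) z
  ha : Continuous a
  hb : Continuous b
  hc : Continuous c
  eqn : ∀ z, R0 ≤ ‖z‖ → a z * c z - b z ^ 2 + q z * (a z + c z) = 1
  pos : ∀ z, R0 ≤ ‖z‖ → 0 < a z + q z
  near : ∀ z, R0 ≤ ‖z‖ → |q z - q0| ≤ 1 / 4
  decay : ∀ z, R0 ≤ ‖z‖ → (‖z‖ + ‖P z‖) ^ β * |q z - q0| ≤ C0
  lip : ∀ z, R0 ≤ ‖z‖ → ∀ x ∈ Metric.ball z (‖z‖ / 2), ∀ y ∈ Metric.ball z (‖z‖ / 2),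
    ‖z‖ ^ (β + 1) * |q x - q y| ≤ C0 * ‖x - y‖

/-- The shifted gradient `P + s x`. -/
def shift (P : ℂ → ℂ) (s : ℝ) (x : ℂ) : ℂ := P x + s * x

lemma continuous_sym {a b c : ℂ → ℝ} (ha : Continuous a) (hb : Continuous b) (hc : Continuous c) :
    Continuous fun z => sym (a z) (b z) (c z) := by
  have e : (fun z => sym (a z) (b z) (c z)) = fun z =>
      a z • sym 1 0 0 + b z • sym 0 1 0 + c z • sym 0 0 1 := by
    funext z
    ext v
    simp only [sym_apply, add_apply, smul_apply]
    apply Complex.ext <;> simp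
  rw [e]
  fun_prop

namespace Core
variable {β C0 R0 q0 : ℝ} {P : ℂ → ℂ} {a b c q : ℂ → ℝ}

lemma hasFDerivAt_shift (h : Core β C0 R0 q0 P a b c q) (s : ℝ) (z : ℂ) :
    HasFDerivAt (shift P s) (sym (a z + s) (b z) (c z + s)) z := by
  have h1 := (h.hP z).add ((hasFDerivAt_id (𝕜 := ℝ) z).const_mul (s : ℂ))
  have : sym (a z) (b z) (c z) + (s : ℂ) • ContinuousLinearMap.id ℝ ℂ =
      sym (a z + s) (b z) (c z + s) := by
    ext v
    simp only [sym_apply, add_apply, smul_apply]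
    apply Complex.ext <;> simp <;> ring
  rw [this] at h1
  exact h1

lemma continuous_P (h : Core β C0 R0 q0 P a b c q) : Continuous P :=
  continuous_iff_continuousAt.2 fun z => (h.hP z).continuousAt

lemma continuous_shift (h : Core β C0 R0 q0 P a b c q) (s : ℝ) : Continuous (shift P s) :=
  continuous_iff_continuousAt.2 fun z => (h.hasFDerivAt_shift s z).continuousAt

lemma form (h : Core β C0 R0 q0 P a b c q) {q1 : ℝ} {z : ℂ} (hz : R0 ≤ ‖z‖)
    (hq : |q z - q1| ≤ 1 / 2) (v : ℂ) :
    1 / 2 * ‖v‖ ^ 2 ≤ (starRingEnd ℂ v * sym (a z + sg q1) (b z) (c z + sg q1) v).re :=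
  form_lower (h.eqn z hz) (h.pos z hz) (by linarith [(abs_le.1 hq).2, one_le_sg_sub q1]) v

/-- The change of variables `Z = P + σ x` on an exterior open set where it is injective:
the function `conj Y` of `Z`, where `Y = P - τ x`, is `C¹` with small `∂/∂Z̄`. -/
lemma change_var (h : Core β C0 R0 q0 P a b c q) (q1 : ℝ) {U : Set ℂ} (hU : IsOpen U)
    (hUR : ∀ x ∈ U, R0 ≤ ‖x‖) (hq : ∀ x ∈ U, |q x - q1| ≤ 1 / 2)
    (hinj : Set.InjOn (shift P (sg q1)) U) :
    IsOpen (shift P (sg q1) '' U) ∧ ∃ w : ℂ → ℂ, ∀ x ∈ U,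
      w (shift P (sg q1) x) = starRingEnd ℂ (shift P (-ta q1) x) ∧
      ContDiffAt ℝ 1 w (shift P (sg q1) x) ∧
      ‖dbar w (shift P (sg q1) x)‖ ≤ 3 * |q x - q1| := by
  obtain ⟨ho, g, hg1, hg2⟩ := inverse_map (F := shift P (sg q1)) hU
    (fun x _ => h.hasFDerivAt_shift (sg q1) x)
    (continuous_sym (h.ha.add continuous_const) h.hb (h.hc.add continuous_const)).continuousOn
    (fun x hx v => norm_lower_of_form (h.form (hUR x hx) (hq x hx) v)) hinj
  refine ⟨ho, fun ζ => starRingEnd ℂ (shift P (-ta q1) (g ζ)), fun x hx => ⟨?_, ?_, ?_⟩⟩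
  · simp only [hg1 x hx]
  · have hY : ContDiff ℝ 1 (shift P (-ta q1)) := by
      rw [contDiff_one_iff_hasFDerivAt]
      exact ⟨_, continuous_sym (h.ha.add continuous_const) h.hb (h.hc.add continuous_const),
        fun x => h.hasFDerivAt_shift (-ta q1) x⟩
    exact Complex.conjCLE.contDiff.contDiffAt.comp _ (hY.contDiffAt.comp _ (hg2 x hx).1)
  · obtain ⟨hc1, hc2⟩ := hg2 x hx
    have d1 := (hc1.differentiableAt (by norm_num)).hasFDerivAt
    have d2 := h.hasFDerivAt_shift (-ta q1) (g (shift P (sg q1) x))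
    rw [hg1 x hx] at d2
    set L := (sym (a x + -ta q1) (b x) (c x + -ta q1)).comp (fderiv ℝ g (shift P (sg q1) x))
      with hL
    have d3 : HasFDerivAt (fun ζ => shift P (-ta q1) (g ζ)) L (shift P (sg q1) x) := by
      exact HasFDerivAt.comp (g := shift P (-ta q1)) _ (by rw [hg1 x hx]; exact d2) d1
    have d4 : HasFDerivAt (fun ζ => starRingEnd ℂ (shift P (-ta q1) (g ζ)))
        ((Complex.conjCLE : ℂ →L[ℝ] ℂ).comp L) (shift P (sg q1) x) :=
      HasFDerivAt.comp (𝕜 := ℝ) _ Complex.conjCLE.hasFDerivAt d3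
    have htr := trace_bound (h.eqn x (hUR x hx)) (h.pos x (hUR x hx)) (hq x hx) L
      (fun v => by rw [hL, ContinuousLinearMap.comp_apply, hc2 v])
    have e : dbar (fun ζ => starRingEnd ℂ (shift P (-ta q1) (g ζ))) (shift P (sg q1) x) =
        starRingEnd ℂ (L 1 - Complex.I * L Complex.I) / 2 := by
      rw [dbar, d4.fderiv]
      simp [sub_eq_add_neg]
    rw [e, norm_div, Complex.norm_conj]
    norm_num
    linarith

end Core

/-! ### Behaviour at infinity in the new variables -/

lemma lg_cases (β : ℝ) (h1 : 1 < β) (h2 : β ≤ 2) :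
    (∀ r, lg β r = 1) ∨ (β = 2 ∧ ∀ r, lg β r = Real.log r) := by
  rcases h2.lt_or_eq with h | h
  · exact Or.inl fun r => lg_lt h1 h
  · subst h; exact Or.inr ⟨rfl, fun r => lg_two⟩

lemma rate_le_one {β r : ℝ} (h1 : 1 < β) (h2 : β ≤ 2) (hr : 3 ≤ r) :
    r ^ (1 - β) * lg β r ≤ 1 := by
  have hr0 : 0 < r := by linarith
  rcases lg_cases β h1 h2 with h | ⟨hb, h⟩
  · rw [h, mul_one]
    exact Real.rpow_le_one_of_one_le_of_nonpos (by linarith) (by linarith)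
  · rw [h, hb]
    norm_num
    rw [Real.rpow_neg_one, inv_mul_le_iff₀ hr0, mul_one]
    exact (Real.log_le_sub_one_of_pos hr0).trans (by linarith)

namespace Core
variable {β C0 R0 q0 : ℝ} {P : ℂ → ℂ} {a b c q : ℂ → ℝ}

/-- Global monotonicity of `Z = P + σ x`, up to a defect coming from the interior. -/
lemma mono (h : Core β C0 R0 q0 P a b c q) : ∃ m : ℝ, 0 ≤ m ∧ ∀ x y : ℂ,
    1 / 2 * ‖y - x‖ ^ 2 - m * ‖y - x‖ ≤
      (starRingEnd ℂ (y - x) * (shift P (sg q0) y - shift P (sg q0) x)).re := by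
  obtain ⟨B, hB⟩ := (isCompact_closedBall (0 : ℂ) R0).exists_bound_of_continuousOn
    (continuous_sym (h.ha.add (continuous_const (y := sg q0))) h.hb
      (h.hc.add (continuous_const (y := sg q0)))).continuousOn
  have hR0 := h.hR0
  have hB0 : 0 ≤ B := (norm_nonneg _).trans (hB 0 (by simp; linarith))
  refine ⟨π * ((B + 1 / 2) * (1 + R0 ^ 2)), by positivity, fun x y => ?_⟩
  refine seg_mono (by positivity) (fun z _ => h.hasFDerivAt_shift (sg q0) z) fun z _ v => ?_
  rcases le_or_gt R0 ‖z‖ with hz | hz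
  · refine le_trans ?_ (h.form hz ((h.near z hz).trans (by norm_num)) v)
    gcongr
    have : 0 ≤ (B + 1 / 2) * (1 + R0 ^ 2) / (1 + ‖z‖ ^ 2) := by positivity
    linarith
  · have h1 : B + 1 / 2 ≤ (B + 1 / 2) * (1 + R0 ^ 2) / (1 + ‖z‖ ^ 2) := by
      rw [le_div_iff₀ (by positivity)]
      gcongr
    have h2 : ‖sym (a z + sg q0) (b z) (c z + sg q0)‖ ≤ B := hB z (by simpa using hz.le)
    have h3 : -(B * ‖v‖ ^ 2) ≤ (starRingEnd ℂ v * sym (a z + sg q0) (b z) (c z + sg q0) v).re := by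
      have h4 := Complex.abs_re_le_norm
        (starRingEnd ℂ v * sym (a z + sg q0) (b z) (c z + sg q0) v)
      rw [norm_mul, Complex.norm_conj] at h4
      have h5 : ‖sym (a z + sg q0) (b z) (c z + sg q0) v‖ ≤ B * ‖v‖ :=
        ((sym (a z + sg q0) (b z) (c z + sg q0)).le_opNorm v).trans (mul_le_mul_of_nonneg_right h2 (norm_nonneg _))
      have h6 : ‖v‖ * ‖sym (a z + sg q0) (b z) (c z + sg q0) v‖ ≤ ‖v‖ * (B * ‖v‖) := by gcongr
      linarith [neg_abs_le (starRingEnd ℂ v * sym (a z + sg q0) (b z) (c z + sg q0) v).re]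
    refine le_trans ?_ h3
    nlinarith [sq_nonneg ‖v‖]

/-- The map `Z` is expansive up to an additive constant, and expansive near infinity. -/
lemma expand (h : Core β C0 R0 q0 P a b c q) : ∃ K R1 : ℝ, 0 ≤ K ∧ R0 ≤ R1 ∧
    (∀ x y : ℂ, 1 / 2 * ‖x - y‖ - K ≤ ‖shift P (sg q0) x - shift P (sg q0) y‖) ∧
    (∀ x y : ℂ, R1 ≤ ‖x‖ → R1 ≤ ‖y‖ →
      1 / 4 * ‖x - y‖ ≤ ‖shift P (sg q0) x - shift P (sg q0) y‖) := by
  obtain ⟨m, hm, hmono⟩ := h.mono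
  have key : ∀ x y : ℂ, 1 / 2 * ‖x - y‖ - m ≤ ‖shift P (sg q0) x - shift P (sg q0) y‖ := by
    intro x y
    have h1 := hmono y x
    have h2 : (starRingEnd ℂ (x - y) * (shift P (sg q0) x - shift P (sg q0) y)).re ≤
        ‖x - y‖ * ‖shift P (sg q0) x - shift P (sg q0) y‖ := by
      refine (Complex.re_le_norm _).trans ?_
      rw [norm_mul, Complex.norm_conj]
    rcases (norm_nonneg (x - y)).eq_or_lt with h0 | h0
    · rw [← h0]
      linarith [norm_nonneg (shift P (sg q0) x - shift P (sg q0) y)]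
    · refine le_of_mul_le_mul_left ?_ h0
      linarith [show ‖x - y‖ * (1 / 2 * ‖x - y‖ - m) = 1 / 2 * ‖x - y‖ ^ 2 - m * ‖x - y‖ by ring]
  refine ⟨m, R0 + 4 * m, hm, by linarith, key, fun x y hx hy => ?_⟩
  rcases le_or_gt (4 * m) ‖x - y‖ with h1 | h1
  · linarith [key x y]
  · have hseg : ∀ z ∈ segment ℝ y x, R0 ≤ ‖z‖ := by
      intro z hz
      have h2 : ‖z - y‖ ≤ ‖x - y‖ := by
        rw [segment_eq_image'] at hz
        obtain ⟨t, ht, rfl⟩ := hz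
        rw [add_sub_cancel_left, norm_smul, Real.norm_of_nonneg ht.1]
        exact mul_le_of_le_one_left (norm_nonneg _) ht.2
      have h3 := norm_sub_le z (z - y)
      rw [sub_sub_cancel] at h3
      linarith
    have h2 := seg_mono (F := shift P (sg q0)) (m := 0) le_rfl
      (fun z _ => h.hasFDerivAt_shift (sg q0) z) (x := y) (y := x) (fun z hz v => by
        simpa using h.form (hseg z hz) ((h.near z (hseg z hz)).trans (by norm_num)) v)
    have h3 : 1 / 2 * ‖x - y‖ ^ 2 ≤
      (starRingEnd ℂ (x - y) * (shift P (sg q0) x - shift P (sg q0) y)).re := by linarith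
    linarith [norm_lower_of_form h3, norm_nonneg (x - y)]

/-- Structure at infinity in the new variables: `conj Y` is affine in `Z`, up to the decay rate. -/
lemma global_affine (h : Core β C0 R0 q0 P a b c q) :
    ∃ A B : ℂ, ∃ C M : ℝ, 0 < C ∧ R0 ≤ M ∧ ∀ x : ℂ, M ≤ ‖x‖ →
      3 ≤ ‖shift P (sg q0) x‖ ∧ ‖x‖ / 4 ≤ ‖shift P (sg q0) x‖ ∧
      ‖starRingEnd ℂ (shift P (-ta q0) x) - A * shift P (sg q0) x - B‖ ≤
        C * (‖shift P (sg q0) x‖ ^ (1 - β) * lg β ‖shift P (sg q0) x‖) := by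
  obtain ⟨K, R1, hK, hR1, hexp1, hexp2⟩ := h.expand
  have hβ1 := h.hβ1
  have hβ2 := h.hβ2
  have hC0 := h.hC0
  have hR0 := h.hR0
  set Z := shift P (sg q0) with hZ
  set Y := shift P (-ta q0) with hY
  have hZc : Continuous Z := h.continuous_shift _
  set U : Set ℂ := {x | R1 < ‖x‖} with hUdef
  have hU : IsOpen U := isOpen_lt continuous_const continuous_norm
  have hinj : Set.InjOn Z U := by
    intro x hx y hy hxy
    have h1 := hexp2 x y (le_of_lt hx) (le_of_lt hy)
    rw [hxy, sub_self, norm_zero] at h1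
    exact sub_eq_zero.1 (norm_le_zero_iff.1 (by linarith))
  obtain ⟨ho, w, hw⟩ := h.change_var q0 hU (fun x hx => hR1.trans (le_of_lt hx))
    (fun x hx => (h.near x (hR1.trans (le_of_lt hx))).trans (by norm_num)) hinj
  obtain ⟨M0, hM0⟩ := (isCompact_closedBall (0 : ℂ) R1).exists_bound_of_continuousOn
    hZc.continuousOn
  set M1 := max M0 1 with hM1
  have hM11 : 1 ≤ M1 := le_max_right _ _
  have hM1b : ∀ x, ‖x‖ ≤ R1 → ‖Z x‖ ≤ M1 := fun x hx =>
    (hM0 x (by simpa using hx)).trans (le_max_left _ _)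
  have hlow : ∀ x, 1 / 2 * ‖x‖ - (K + ‖Z 0‖) ≤ ‖Z x‖ := by
    intro x
    have h1 := hexp1 x 0
    rw [sub_zero] at h1
    linarith [norm_sub_le (Z x) (Z 0)]
  have hcov : {ζ : ℂ | M1 < ‖ζ‖} ⊆ Z '' U := by
    refine image_covers (δ := 1 / 4) (by norm_num) hZc ho
      (fun x hx y hy => hexp2 x y (le_of_lt hx) (le_of_lt hy))
      (exterior_preconnected (by linarith)) (fun x _ hxU => ?_) ?_
    · have h1 := hM1b x (not_lt.1 hxU)
      exact fun h2 => absurd h1 (not_le.2 h2)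
    · have hT : 0 < R1 + 1 + 2 * (M1 + 1 + K + ‖Z 0‖) := by linarith [norm_nonneg (Z 0)]
      set T := R1 + 1 + 2 * (M1 + 1 + K + ‖Z 0‖)
      have hTn : ‖((T : ℝ) : ℂ)‖ = T := by
        rw [Complex.norm_real, Real.norm_of_nonneg hT.le]
      refine ⟨Z (T : ℝ), ?_, Set.mem_image_of_mem _ ?_⟩
      · have h1 := hlow (T : ℝ)
        rw [hTn] at h1
        change M1 < _
        have : T = R1 + 1 + 2 * (M1 + 1 + K + ‖Z 0‖) := rfl
        linarith
      · change R1 < _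
        rw [hTn]
        have : T = R1 + 1 + 2 * (M1 + 1 + K + ‖Z 0‖) := rfl
        linarith [norm_nonneg (Z 0)]
  -- `w` is cut off near the origin to get a function on the whole plane
  set N := M1 + 1 with hN
  have hN0 : 0 < N := by linarith
  set wt : ℂ → ℂ := fun ζ => (1 - cutc N ζ) * w ζ with hwt
  have hwt0 : ∀ ζ, ‖ζ‖ ≤ N → wt ζ = 0 := fun ζ hζ => by
    simp only [hwt, cutc_one hN0 hζ, sub_self, zero_mul]
  have hwt1 : ∀ ζ, 2 * N ≤ ‖ζ‖ → wt ζ = w ζ := fun ζ hζ => by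
    simp only [hwt, cutc_zero hN0 hζ, sub_zero, one_mul]
  have hwtC : ContDiff ℝ 1 wt := by
    rw [contDiff_iff_contDiffAt]
    intro ζ
    rcases lt_or_ge ‖ζ‖ N with h1 | h1
    · refine (contDiffAt_const (c := (0 : ℂ))).congr_of_eventuallyEq ?_
      filter_upwards [(isOpen_lt continuous_norm continuous_const).mem_nhds h1] with x hx
      exact hwt0 x (le_of_lt hx)
    · obtain ⟨x, hx, rfl⟩ := hcov (show M1 < ‖ζ‖ by linarith)
      exact (contDiffAt_const.sub (contDiff_cutc N).contDiffAt).mul (hw x hx).2.1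
  set s := sg q0 with hs
  set t := ta q0 with ht
  have hspos : 0 < s := sg_pos q0
  have htpos : 0 < t := ta_pos q0
  set C1 := (1 + 2 * (s + t)) + 2 * (s + t) * (K + ‖Z 0‖) with hC1
  have hC1pos : 0 < C1 := by positivity
  have hb1 : ∀ ζ, ‖wt ζ‖ ≤ C1 * (1 + ‖ζ‖) := by
    intro ζ
    rcases lt_or_ge ‖ζ‖ N with h1 | h1
    · rw [hwt0 ζ h1.le, norm_zero]; positivity
    · obtain ⟨x, hx, rfl⟩ := hcov (show M1 < ‖ζ‖ by linarith)
      have e1 : ‖wt (Z x)‖ ≤ ‖Y x‖ := by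
        simp only [hwt]
        rw [norm_mul, (hw x hx).1, Complex.norm_conj]
        exact mul_le_of_le_one_left (norm_nonneg _) (norm_one_sub_cutc_le _ _)
      have e2 : Y x = Z x - ((s + t : ℝ) : ℂ) * x := by
        simp only [hY, hZ, shift]; push_cast; ring
      have e3 : ‖Y x‖ ≤ ‖Z x‖ + (s + t) * ‖x‖ := by
        rw [e2]
        refine (norm_sub_le _ _).trans ?_
        rw [norm_mul, Complex.norm_real, Real.norm_of_nonneg (by positivity)]
      have e4 : ‖x‖ ≤ 2 * (‖Z x‖ + (K + ‖Z 0‖)) := by linarith [hlow x]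
      have e5 : (s + t) * ‖x‖ ≤ (s + t) * (2 * (‖Z x‖ + (K + ‖Z 0‖))) := by gcongr
      have e6 : 0 ≤ 2 * (s + t) * (K + ‖Z 0‖) * ‖Z x‖ := by positivity
      rw [hC1]
      nlinarith [norm_nonneg (Z x)]
  obtain ⟨B2, hB2⟩ := (isCompact_closedBall (0 : ℂ) (2 * N)).exists_bound_of_continuousOn
    (continuous_dbar hwtC).continuousOn
  have hB20 : 0 ≤ B2 := (norm_nonneg _).trans (hB2 0 (by simp; linarith))
  set C2 := B2 * (1 + 2 * N) ^ β + 3 * C0 * (2 * (1 + s)) ^ β with hC2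
  have hC2pos : 0 ≤ C2 := by positivity
  have hb2 : ∀ ζ, ‖dbar wt ζ‖ ≤ C2 * (1 + ‖ζ‖) ^ (-β) := by
    intro ζ
    rw [Real.rpow_neg (by positivity), ← div_eq_mul_inv, le_div_iff₀ (by positivity)]
    rcases le_or_gt ‖ζ‖ (2 * N) with h1 | h1
    · calc _ ≤ B2 * (1 + 2 * N) ^ β := by
            gcongr
            exact hB2 ζ (by simpa using h1)
        _ ≤ _ := by rw [hC2]; linarith [show 0 ≤ 3 * C0 * (2 * (1 + s)) ^ β by positivity]
    · have e0 : dbar wt ζ = dbar w ζ := by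
        apply dbar_congr
        filter_upwards [(isOpen_lt continuous_const continuous_norm).mem_nhds h1] with x hx
        exact hwt1 x (le_of_lt hx)
      rw [e0]
      obtain ⟨x, hx, rfl⟩ := hcov (show M1 < ‖ζ‖ by linarith)
      have hxR : R0 ≤ ‖x‖ := hR1.trans (le_of_lt hx)
      have e1 := (hw x hx).2.2
      have e2 := h.decay x hxR
      have e3 : 1 + ‖Z x‖ ≤ 2 * (1 + s) * (‖x‖ + ‖P x‖) := by
        have : ‖Z x‖ ≤ ‖P x‖ + s * ‖x‖ := by
          simp only [hZ, shift]
          refine (norm_add_le _ _).trans ?_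
          rw [norm_mul, Complex.norm_real, Real.norm_of_nonneg hspos.le]
        have e7 : 0 ≤ s * ‖P x‖ := by positivity
        nlinarith [norm_nonneg (P x), norm_nonneg x]
      have e4 : (1 + ‖Z x‖) ^ β ≤ (2 * (1 + s)) ^ β * (‖x‖ + ‖P x‖) ^ β := by
        rw [← Real.mul_rpow (by positivity) (by positivity)]
        gcongr
      calc _ ≤ 3 * |q x - q0| * ((2 * (1 + s)) ^ β * (‖x‖ + ‖P x‖) ^ β) := by gcongr
        _ = 3 * (2 * (1 + s)) ^ β * ((‖x‖ + ‖P x‖) ^ β * |q x - q0|) := by ring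
        _ ≤ 3 * (2 * (1 + s)) ^ β * C0 := by gcongr
        _ ≤ C2 := by rw [hC2]; linarith [show 0 ≤ B2 * (1 + 2 * N) ^ β by positivity]
  obtain ⟨A, B, C, hC, hAB⟩ := global_structure (C := C1 + C2) hβ1 hβ2 (by positivity) hwtC
    (fun ζ => (hb1 ζ).trans (by gcongr; linarith))
    (fun ζ => (hb2 ζ).trans (by gcongr; linarith))
  refine ⟨A, B, C, R1 + 1 + 4 * (3 + 2 * N + K + ‖Z 0‖), hC,
    by linarith [norm_nonneg (Z 0)], fun x hx => ?_⟩
  have hl := hlow x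
  have hZ0 := norm_nonneg (Z 0)
  have hxU : x ∈ U := by change R1 < _; linarith
  refine ⟨by linarith, by linarith, ?_⟩
  have := hAB (Z x) (by linarith)
  rwa [hwt1 (Z x) (by linarith), (hw x hxU).1] at this

end Core

/-! ### Asymptotics of the gradient -/

lemma rate_comp {β K r ρ : ℝ} (h1 : 1 < β) (h2 : β ≤ 2) (hK : 1 ≤ K) (hr : 3 ≤ r)
    (hρ : 1 ≤ ρ) (hl : r / 4 ≤ ρ) (hu : ρ ≤ K * r) :
    ρ ^ (1 - β) * lg β ρ ≤ 4 * (1 + Real.log K) * (r ^ (1 - β) * lg β r) := by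
  have hr0 : 0 < r := by linarith
  have hρ0 : 0 < ρ := by linarith
  have hlK : 0 ≤ Real.log K := Real.log_nonneg hK
  have e1 : ρ ^ (1 - β) ≤ 4 * r ^ (1 - β) := by
    calc ρ ^ (1 - β) ≤ (r / 4) ^ (1 - β) :=
          Real.rpow_le_rpow_of_nonpos (by positivity) hl (by linarith)
      _ = r ^ (1 - β) / 4 ^ (1 - β) := Real.div_rpow hr0.le (by norm_num) _
      _ = 4 ^ (β - 1) * r ^ (1 - β) := by
          rw [div_eq_mul_inv, ← Real.rpow_neg (by norm_num), neg_sub, mul_comm]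
      _ ≤ 4 * r ^ (1 - β) := by
          gcongr
          calc (4 : ℝ) ^ (β - 1) ≤ 4 ^ (1 : ℝ) :=
                Real.rpow_le_rpow_of_exponent_le (by norm_num) (by linarith)
            _ = 4 := Real.rpow_one 4
  have e2 : lg β ρ ≤ (1 + Real.log K) * lg β r := by
    rcases lg_cases β h1 h2 with h | ⟨_, h⟩
    · rw [h, h]; linarith
    · rw [h, h]
      have := one_le_log hr
      calc Real.log ρ ≤ Real.log (K * r) := Real.log_le_log hρ0 hu
        _ = Real.log K + Real.log r := Real.log_mul (by positivity) hr0.ne'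
        _ ≤ _ := by nlinarith
  have e3 : 0 ≤ lg β ρ := pow_nonneg (Real.log_nonneg hρ) _
  calc _ ≤ (4 * r ^ (1 - β)) * ((1 + Real.log K) * lg β r) := by gcongr
    _ = _ := by ring

/-- The symmetric real-linear map `H` solving `conj (H v - t v) = α (H v + s v)`: the inverse of
the linear change of variables `P ↦ (P + s x, conj (P - t x))`. -/
def slp (α : ℂ) (s t : ℝ) : ℂ →L[ℝ] ℂ :=
  sym ((t + ‖α‖ ^ 2 * s + (s + t) * α.re) / (1 - ‖α‖ ^ 2)) (-((s + t) * α.im) / (1 - ‖α‖ ^ 2))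
    ((t + ‖α‖ ^ 2 * s - (s + t) * α.re) / (1 - ‖α‖ ^ 2))

lemma slp_spec {α : ℂ} (hα : ‖α‖ < 1) (s t : ℝ) (v : ℂ) :
    starRingEnd ℂ (slp α s t v - t * v) = α * (slp α s t v + s * v) := by
  have h1 : 1 - ‖α‖ ^ 2 ≠ 0 := by nlinarith [norm_nonneg α]
  have h2 : ‖α‖ ^ 2 = α.re * α.re + α.im * α.im := by
    rw [← Complex.normSq_eq_norm_sq, Complex.normSq_apply]
  rw [h2] at h1
  rw [slp, sym_apply, h2]
  simp only [div_eq_mul_inv]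
  have hk := inv_mul_cancel₀ h1
  generalize (1 - (α.re * α.re + α.im * α.im))⁻¹ = k at hk ⊢
  apply Complex.ext
  · simp
    linear_combination (t * v.re + α.re * s * v.re - α.im * s * v.im) * hk
  · simp
    linear_combination (-t * v.im + α.re * s * v.im + α.im * s * v.re) * hk

lemma conj_sub_lower {α F : ℂ} : (1 - ‖α‖) * ‖F‖ ≤ ‖starRingEnd ℂ F - α * F‖ := by
  have h := norm_sub_norm_le (starRingEnd ℂ F) (α * F)
  rw [Complex.norm_conj, norm_mul] at h
  linarith

/-- An approximate solution of the equation defining `slp` is close to it. -/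
lemma slp_near {α D v : ℂ} {s t ε : ℝ} (hα : ‖α‖ < 1)
    (h : ‖starRingEnd ℂ (D - t * v) - α * (D + s * v)‖ ≤ ε) :
    ‖D - slp α s t v‖ ≤ ε / (1 - ‖α‖) := by
  rw [le_div_iff₀ (by linarith), mul_comm]
  refine conj_sub_lower.trans (le_of_eq_of_le ?_ h)
  have := slp_spec hα s t v
  simp only [map_sub] at this ⊢
  refine congrArg norm ?_
  linear_combination -this

/-- Continuity of `slp` in its parameters. -/
lemma slp_sub_le {α α' : ℂ} {s t s' t' : ℝ} (hα : ‖α‖ < 1) (hα' : ‖α'‖ < 1) :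
    ‖slp α' s' t' - slp α s t‖ ≤
      (|t' - t| + ‖α' - α‖ * (‖slp α s t‖ + |s|) + |s' - s|) / (1 - ‖α'‖) := by
  have h0 : 0 < 1 - ‖α'‖ := by linarith
  refine ContinuousLinearMap.opNorm_le_bound _ (by positivity) fun v => ?_
  rw [sub_apply, norm_sub_rev, div_mul_eq_mul_div]
  refine slp_near hα' ?_
  have e : starRingEnd ℂ (slp α s t v - t' * v) - α' * (slp α s t v + s' * v) =
      ((t - t' : ℝ) : ℂ) * starRingEnd ℂ v + (α - α') * (slp α s t v + s * v) +
        α' * (((s - s' : ℝ) : ℂ) * v) := by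
    have := slp_spec hα s t v
    simp only [map_sub, map_mul, Complex.conj_ofReal] at this ⊢
    push_cast
    linear_combination this
  rw [e]
  have n1 : ‖((t - t' : ℝ) : ℂ) * starRingEnd ℂ v‖ = |t' - t| * ‖v‖ := by
    rw [norm_mul, Complex.norm_real, Complex.norm_conj, Real.norm_eq_abs, abs_sub_comm]
  have n2 : ‖(α - α') * (slp α s t v + s * v)‖ ≤
      ‖α' - α‖ * ((‖slp α s t‖ + |s|) * ‖v‖) := by
    rw [norm_mul, norm_sub_rev]
    gcongr
    refine (norm_add_le _ _).trans ?_
    rw [norm_mul, Complex.norm_real, Real.norm_eq_abs, add_mul]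
    gcongr
    exact (slp α s t).le_opNorm v
  have n3 : ‖α' * (((s - s' : ℝ) : ℂ) * v)‖ ≤ |s' - s| * ‖v‖ := by
    rw [norm_mul, norm_mul, Complex.norm_real, Real.norm_eq_abs, abs_sub_comm]
    exact mul_le_of_le_one_left (by positivity) hα'.le
  refine (norm_add₃_le).trans ?_
  rw [n1]
  linarith

namespace Core
variable {β C0 R0 q0 : ℝ} {P : ℂ → ℂ} {a b c q : ℂ → ℝ}

/-- The limiting dilatation is strictly elliptic. Along the ray on which `A` would stretch most,
`(1 - ‖A‖) Re (conj e * Z)` grows linearly with a positive coefficient, while monotonicity of `Z`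
makes `Re (conj e * Z)` positive. -/
lemma global_result (h : Core β C0 R0 q0 P a b c q) : ∃ (A B : ℂ) (C K M : ℝ),
    ‖A‖ < 1 ∧ 0 < C ∧ 0 < K ∧ R0 ≤ M ∧ ∀ x, M ≤ ‖x‖ → ‖P x‖ ≤ K * ‖x‖ ∧
      ‖starRingEnd ℂ (shift P (-ta q0) x) - A * shift P (sg q0) x - B‖ ≤
        C * (‖x‖ ^ (1 - β) * lg β ‖x‖) := by
  obtain ⟨A, B, C, M, hC, hM, hg⟩ := h.global_affine
  obtain ⟨m, hm, hmono⟩ := h.mono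
  set s := sg q0 with hs
  set t := ta q0 with ht
  have hspos : 0 < s := sg_pos q0
  have htpos : 0 < t := ta_pos q0
  have hR0 := h.hR0
  have hYZ : ∀ x, shift P (-t) x = shift P s x - ((s + t : ℝ) : ℂ) * x := fun x => by
    simp only [shift]; push_cast; ring
  have hE : ∀ x, M ≤ ‖x‖ →
      ‖starRingEnd ℂ (shift P (-t) x) - A * shift P s x - B‖ ≤ C := fun x hx =>
    (hg x hx).2.2.trans (mul_le_of_le_one_right hC.le (rate_le_one h.hβ1 h.hβ2 (hg x hx).1))
  have hA : ‖A‖ < 1 := by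
    by_contra hA
    push Not at hA
    set e : ℂ := Complex.exp (((-(A.arg / 2) : ℝ) : ℂ) * Complex.I) with he
    have hen : ‖e‖ = 1 := Complex.norm_exp_ofReal_mul_I _
    have hee : starRingEnd ℂ e * e = 1 := by
      rw [mul_comm, Complex.mul_conj, Complex.normSq_eq_norm_sq, hen]; norm_num
    have hAe : A * e = (‖A‖ : ℂ) * starRingEnd ℂ e := by
      have h1 : A * e * e = (‖A‖ : ℂ) := by
        conv_lhs => rw [← Complex.norm_mul_exp_arg_mul_I A]
        rw [he, mul_assoc, mul_assoc, ← Complex.exp_add, ← Complex.exp_add]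
        have : (A.arg : ℂ) * Complex.I + ((((-(A.arg / 2) : ℝ)) : ℂ) * Complex.I +
            ((((-(A.arg / 2) : ℝ)) : ℂ)) * Complex.I) = 0 := by push_cast; ring
        rw [this, Complex.exp_zero, mul_one]
      calc A * e = A * e * e * starRingEnd ℂ e := by
            rw [mul_assoc, mul_assoc, mul_comm e (starRingEnd ℂ e), hee, mul_one]
        _ = _ := by rw [h1]
    set T := M + 2 * (m + ‖shift P s 0‖) + (‖B‖ + C + 1) / (s + t) with hT
    have hTM : M ≤ T := by
      have : 0 ≤ (‖B‖ + C + 1) / (s + t) := by positivity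
      linarith [norm_nonneg (shift P s 0)]
    have hT0 : 0 < T := by linarith
    have hT1 : 2 * (m + ‖shift P s 0‖) ≤ T := by
      have : 0 ≤ (‖B‖ + C + 1) / (s + t) := by positivity
      linarith
    have hT2 : ‖B‖ + C + 1 ≤ (s + t) * T := by
      have : (s + t) * ((‖B‖ + C + 1) / (s + t)) = ‖B‖ + C + 1 := by field_simp
      have h2 : 0 ≤ (s + t) * (M + 2 * (m + ‖shift P s 0‖)) := by
        have : 0 ≤ M := by linarith
        positivity
      rw [hT]; linarith
    set x : ℂ := (T : ℂ) * e with hx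
    have hxn : ‖x‖ = T := by
      rw [hx, norm_mul, hen, Complex.norm_real, Real.norm_of_nonneg hT0.le, mul_one]
    set p := (starRingEnd ℂ e * shift P s x).re with hp
    have hp0 : 0 ≤ p := by
      have h1 := hmono 0 x
      rw [sub_zero, hxn] at h1
      have h2 : (starRingEnd ℂ x * (shift P s x - shift P s 0)).re =
          T * (p - (starRingEnd ℂ e * shift P s 0).re) := by
        rw [hp, ← Complex.sub_re, ← mul_sub, ← Complex.re_ofReal_mul, hx, map_mul,
          Complex.conj_ofReal, mul_assoc]
      rw [h2] at h1
      have h3 : (starRingEnd ℂ e * shift P s 0).re ≥ -‖shift P s 0‖ := by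
        have := Complex.abs_re_le_norm (starRingEnd ℂ e * shift P s 0)
        rw [norm_mul, Complex.norm_conj, hen, one_mul] at this
        exact (abs_le.1 this).1
      have h4 : T * (1 / 2 * T - m) ≤ T * (p - (starRingEnd ℂ e * shift P s 0).re) := by
        linarith [h1, show T * (1 / 2 * T - m) = 1 / 2 * T ^ 2 - m * T by ring]
      have h5 := le_of_mul_le_mul_left h4 hT0
      linarith
    set E := starRingEnd ℂ (shift P (-t) x) - A * shift P s x - B with hEd
    have hEn : ‖E‖ ≤ C := hE x (by rw [hxn]; exact hTM)
    have h1 : (starRingEnd ℂ (shift P (-t) x) * e).re = p - (s + t) * T := by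
      have : (starRingEnd ℂ (shift P (-t) x) * e) =
          starRingEnd ℂ (starRingEnd ℂ e * shift P s x - (((s + t) * T : ℝ) : ℂ)) := by
        rw [hYZ, hx]
        simp only [map_sub, map_mul, Complex.conj_conj, Complex.conj_ofReal]
        push_cast
        linear_combination (-(s + t : ℂ) * T) * hee
      rw [this, Complex.conj_re, Complex.sub_re, Complex.ofReal_re]
    have h2 : (A * shift P s x * e).re = ‖A‖ * p := by
      rw [hp, ← Complex.re_ofReal_mul]
      congr 1
      linear_combination shift P s x * hAe
    have h3 : (E * e).re = (1 - ‖A‖) * p - (s + t) * T - (B * e).re := by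
      rw [hEd, sub_mul, sub_mul, Complex.sub_re, Complex.sub_re, h1, h2]; ring
    have h4 : -(‖E‖) ≤ (E * e).re := by
      have := Complex.abs_re_le_norm (E * e)
      rw [norm_mul, hen, mul_one] at this
      exact (abs_le.1 this).1
    have h5 : -(‖B‖) ≤ (B * e).re := by
      have := Complex.abs_re_le_norm (B * e)
      rw [norm_mul, hen, mul_one] at this
      exact (abs_le.1 this).1
    nlinarith
  set K1 := ((s + t) + ‖B‖ + C) / (1 - ‖A‖) + 1 with hK1
  have h1A : 0 < 1 - ‖A‖ := by linarith
  have hK1pos : 1 ≤ K1 := by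
    have : 0 ≤ ((s + t) + ‖B‖ + C) / (1 - ‖A‖) := by positivity
    linarith
  have hZ : ∀ x, M ≤ ‖x‖ → ‖shift P s x‖ ≤ K1 * ‖x‖ := by
    intro x hx
    have hx1 : 1 ≤ ‖x‖ := by linarith
    have h1 := hE x hx
    have h2 : (1 - ‖A‖) * ‖shift P s x‖ ≤ ((s + t) + ‖B‖ + C) * ‖x‖ := by
      refine conj_sub_lower.trans ?_
      have e : starRingEnd ℂ (shift P s x) - A * shift P s x =
          (starRingEnd ℂ (shift P (-t) x) - A * shift P s x - B) + B +
            ((s + t : ℝ) : ℂ) * starRingEnd ℂ x := by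
        rw [hYZ]; simp only [map_sub, map_mul, Complex.conj_ofReal]; ring
      rw [e]
      refine norm_add₃_le.trans ?_
      rw [norm_mul, Complex.norm_real, Real.norm_of_nonneg (by positivity), Complex.norm_conj]
      nlinarith [norm_nonneg B]
    have h3 : ‖shift P s x‖ ≤ ((s + t) + ‖B‖ + C) / (1 - ‖A‖) * ‖x‖ := by
      rw [div_mul_eq_mul_div, le_div_iff₀ h1A]; linarith
    rw [hK1]; linarith
  refine ⟨A, B, C * (4 * (1 + Real.log K1)), K1 + s, M, hA, ?_, by linarith, hM, fun x hx => ⟨?_, ?_⟩⟩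
  · have := Real.log_nonneg hK1pos
    positivity
  · have : P x = shift P s x - s * x := by simp [shift]
    rw [this]
    refine (norm_sub_le _ _).trans ?_
    rw [norm_mul, Complex.norm_real, Real.norm_of_nonneg hspos.le]
    linarith [hZ x hx]
  · obtain ⟨g1, g2, g3⟩ := hg x hx
    refine g3.trans ?_
    have h1 := mul_le_mul_of_nonneg_left
      (rate_comp h.hβ1 h.hβ2 hK1pos (by linarith) (by linarith) g2 (hZ x hx)) hC.le
    linarith

end Core

/-! ### Local expansions and Hölder estimates of the Hessian -/

lemma dbar_sub_affine {w : ℂ → ℂ} {z : ℂ} (h : DifferentiableAt ℝ w z) (A B : ℂ) :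
    dbar (fun ζ => w ζ - A * ζ - B) z = dbar w z := by
  have h1 : HasFDerivAt (fun ζ : ℂ => A * ζ) (A • ContinuousLinearMap.id ℝ ℂ) z := by
    simpa using (hasFDerivAt_id (𝕜 := ℝ) z).const_mul A
  have h2 := ((h.hasFDerivAt.sub h1).sub (hasFDerivAt_const B z)).fderiv
  have h3 : fderiv ℝ (fun ζ => w ζ - A * ζ - B) z =
      fderiv ℝ w z - A • ContinuousLinearMap.id ℝ ℂ - 0 := h2
  simp only [dbar, h3]
  simp
  linear_combination (-A) * Complex.I_mul_I

/-- The rate `r ^ (-β) * lg β r` at which `D²u` approaches its limit. -/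
def rt (β r : ℝ) : ℝ := r ^ (-β) * lg β r

lemma rt_pos {β r : ℝ} (hr : 3 ≤ r) : 0 < rt β r :=
  mul_pos (Real.rpow_pos_of_pos (by linarith) _) (by linarith [one_le_lg (β := β) hr])

lemma rpow_le_rt {β r : ℝ} (hr : 3 ≤ r) : r ^ (-β) ≤ rt β r :=
  le_mul_of_one_le_right (Real.rpow_nonneg (by linarith) _) (one_le_lg hr)

lemma rt_mul {β r : ℝ} (hr : 3 ≤ r) : r * rt β r = r ^ (1 - β) * lg β r := by
  rw [rt, ← mul_assoc]
  congr 1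
  rw [sub_eq_add_neg, Real.rpow_add (by linarith), Real.rpow_one]

lemma rt_le_inv {β r : ℝ} (h1 : 1 < β) (h2 : β ≤ 2) (hr : 3 ≤ r) : rt β r ≤ 1 / r := by
  have h := rate_le_one h1 h2 hr
  rw [← rt_mul hr] at h
  rw [le_div_iff₀ (by linarith)]
  linarith

namespace Core
variable {β C0 R0 q0 : ℝ} {P : ℂ → ℂ} {a b c q : ℂ → ℝ}

lemma q_near (h : Core β C0 R0 q0 P a b c q) {z : ℂ} (hz : R0 ≤ ‖z‖) :
    |q z - q0| ≤ C0 * ‖z‖ ^ (-β) := by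
  have hR0 := h.hR0
  have hz0 : 0 < ‖z‖ := by linarith
  have h1 := h.decay z hz
  have h2 : ‖z‖ ^ β ≤ (‖z‖ + ‖P z‖) ^ β :=
    Real.rpow_le_rpow hz0.le (by linarith [norm_nonneg (P z)]) (by linarith [h.hβ1])
  rw [Real.rpow_neg hz0.le, ← div_eq_mul_inv, le_div_iff₀ (by positivity), mul_comm]
  exact (mul_le_mul_of_nonneg_right h2 (abs_nonneg _)).trans h1

lemma expand_half (h : Core β C0 R0 q0 P a b c q) {S : Set ℂ} (hS : Convex ℝ S) {q1 : ℝ}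
    (hR : ∀ z ∈ S, R0 ≤ ‖z‖) (hq : ∀ z ∈ S, |q z - q1| ≤ 1 / 2) {x y : ℂ} (hx : x ∈ S)
    (hy : y ∈ S) : 1 / 2 * ‖y - x‖ ≤ ‖shift P (sg q1) y - shift P (sg q1) x‖ := by
  apply norm_lower_of_form
  have := seg_mono (F := shift P (sg q1)) (x := x) (y := y) le_rfl
    (fun z _ => h.hasFDerivAt_shift (sg q1) z) (fun z hz v => by
      have hzS := hS.segment_subset hx hy hz
      simpa using h.form (hR z hzS) (hq z hzS) v)
  simpa using this

/-- The second-order expansion of `conj Y'` in terms of `Z'` near a far-away point `x₀`, where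
`Z'`, `Y'` are the variables adapted to the value of the phase at `x₀`. -/
lemma local_expansion (h : Core β C0 R0 q0 P a b c q) {α : ℝ} (hα0 : 0 < α) (hα1 : α < 1)
    {A B : ℂ} {C K M : ℝ} (hC : 0 < C) (hM : R0 ≤ M)
    (hg : ∀ x, M ≤ ‖x‖ → ‖P x‖ ≤ K * ‖x‖ ∧
      ‖starRingEnd ℂ (shift P (-ta q0) x) - A * shift P (sg q0) x - B‖ ≤
        C * (‖x‖ ^ (1 - β) * lg β ‖x‖)) (hA : ‖A‖ ≤ 1) :
    ∃ C1 > (0 : ℝ), ∀ x0 : ℂ, 2 * M ≤ ‖x0‖ → ∃ a1 : ℂ, ‖a1 - A‖ ≤ C1 * rt β ‖x0‖ ∧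
      ∀ x : ℂ, ‖x - x0‖ < ‖x0‖ / 2 →
        ‖(P x - P x0) + sg (q x0) * (x - x0)‖ < ‖x0‖ / 16 →
        ‖starRingEnd ℂ ((P x - P x0) - ta (q x0) * (x - x0)) -
            a1 * ((P x - P x0) + sg (q x0) * (x - x0))‖ ≤
          C1 * rt β ‖x0‖ * ‖x0‖ ^ (-α) *
            ‖(P x - P x0) + sg (q x0) * (x - x0)‖ ^ (1 + α) := by
  obtain ⟨CT, hCT, hT⟩ := taylor_scaled hα0 hα1
  have hR0 := h.hR0
  have hC0 := h.hC0
  set Cm := 8 * C + 6 * C0 with hCm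
  refine ⟨CT * (4 * Cm + 2 * C0) * 4, by positivity, fun x0 hx0 => ?_⟩
  set r := ‖x0‖ with hr
  have hr6 : 6 ≤ r := by linarith
  have hr0 : 0 < r := by linarith
  set q1 := q x0 with hq1
  set s' := sg q1 with hs'
  set t' := ta q1 with ht'
  have hx0R : R0 ≤ ‖x0‖ := by linarith
  have hrt : 0 < rt β r := rt_pos (by linarith)
  have hS : ∀ x ∈ Metric.closedBall x0 (r / 2), r / 2 ≤ ‖x‖ ∧ ‖x‖ ≤ 2 * r := by
    intro x hx
    rw [Metric.mem_closedBall, dist_eq_norm] at hx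
    have h1 := norm_sub_norm_le x0 x
    have h2 := norm_sub_norm_le x x0
    rw [norm_sub_rev] at h1
    constructor <;> linarith
  have hSR : ∀ x ∈ Metric.closedBall x0 (r / 2), R0 ≤ ‖x‖ := fun x hx => by
    linarith [(hS x hx).1]
  have hSq : ∀ x ∈ Metric.closedBall x0 (r / 2), |q x - q1| ≤ 1 / 2 := fun x hx => by
    have h1 := h.near x (hSR x hx)
    have h2 := h.near x0 hx0R
    rw [abs_le] at h1 h2 ⊢
    constructor <;> linarith [h1.1, h1.2, h2.1, h2.2]
  have hexp := fun {x y} => h.expand_half (x := x) (y := y) (convex_closedBall x0 (r / 2)) hSR hSq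
  have hUS : Metric.ball x0 (r / 2) ⊆ Metric.closedBall x0 (r / 2) := Metric.ball_subset_closedBall
  set Z := shift P s' with hZ
  have hinj : Set.InjOn Z (Metric.ball x0 (r / 2)) := by
    intro x hx y hy hxy
    have h1 := hexp (hUS hx) (hUS hy)
    rw [hxy, sub_self, norm_zero] at h1
    have h2 : ‖y - x‖ = 0 := le_antisymm (by linarith) (norm_nonneg _)
    exact (sub_eq_zero.1 (norm_eq_zero.1 h2)).symm
  obtain ⟨ho, w, hw⟩ := h.change_var q1 Metric.isOpen_ball (fun x hx => hSR x (hUS hx))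
    (fun x hx => hSq x (hUS hx)) hinj
  have hx0U : x0 ∈ Metric.ball x0 (r / 2) := Metric.mem_ball_self (by linarith)
  have hcov : Metric.ball (Z x0) (r / 4) ⊆ Z '' Metric.ball x0 (r / 2) := by
    refine image_covers (δ := 1 / 2) (by norm_num) (h.continuous_shift s') ho
      (fun x hx y hy => by simpa using hexp (hUS hy) (hUS hx))
      (convex_ball _ _).isPreconnected (fun x hx hxU => ?_)
      ⟨Z x0, Metric.mem_ball_self (by linarith), x0, hx0U, rfl⟩
    have hxS := Metric.closure_ball_subset_closedBall hx
    have h1 := hexp (hUS hx0U) hxS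
    rw [Metric.mem_ball, dist_eq_norm, not_lt] at hxU
    rw [Metric.mem_ball, dist_eq_norm, not_lt]
    linarith [h1]
  have hpre : ∀ ζ : ℂ, ‖ζ‖ < r / 4 → ∃ x ∈ Metric.ball x0 (r / 2), ζ + Z x0 = Z x := by
    intro ζ hζ
    obtain ⟨x, hx, hxe⟩ := hcov (show ζ + Z x0 ∈ _ by simpa [dist_eq_norm] using hζ)
    exact ⟨x, hx, hxe.symm⟩
  set v : ℂ → ℂ := fun ζ => (fun η => w η - A * η - B) (ζ + Z x0) with hv
  have hqd : |q1 - q0| ≤ C0 * r ^ (-β) := h.q_near hx0R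
  have hbd : ∀ x ∈ Metric.ball x0 (r / 2), ‖w (Z x) - A * Z x - B‖ ≤ Cm * (r * rt β r) := by
    intro x hx
    rw [(hw x hx).1]
    obtain ⟨l1, l2⟩ := hS x (hUS hx)
    have g := (hg x (by linarith)).2
    have e : starRingEnd ℂ (shift P (-t') x) - A * Z x - B =
        (starRingEnd ℂ (shift P (-ta q0) x) - A * shift P (sg q0) x - B) +
          ((ta q0 - t' : ℝ) : ℂ) * starRingEnd ℂ x + A * (((sg q0 - s' : ℝ) : ℂ) * x) := by
      simp only [hZ, shift, map_add, map_mul, Complex.conj_ofReal]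
      push_cast
      ring
    rw [e]
    refine norm_add₃_le.trans ?_
    have n1 : ‖((ta q0 - t' : ℝ) : ℂ) * starRingEnd ℂ x‖ ≤ (2 * |q1 - q0|) * (3 / 2 * r) := by
      rw [norm_mul, Complex.norm_real, Complex.norm_conj, Real.norm_eq_abs]
      have h1 := ta_lip q0 q1
      rw [abs_sub_comm q0 q1] at h1
      have h3 : ‖x‖ ≤ 3 / 2 * r := by
        rw [Metric.mem_ball, dist_eq_norm] at hx
        linarith [norm_sub_norm_le x x0]
      gcongr
    have n2 : ‖A * (((sg q0 - s' : ℝ) : ℂ) * x)‖ ≤ (2 * |q1 - q0|) * (3 / 2 * r) := by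
      rw [norm_mul, norm_mul, Complex.norm_real, Real.norm_eq_abs]
      have h1 := sg_lip q0 q1
      rw [abs_sub_comm q0 q1] at h1
      have h3 : ‖x‖ ≤ 3 / 2 * r := by
        rw [Metric.mem_ball, dist_eq_norm] at hx
        linarith [norm_sub_norm_le x x0]
      refine (mul_le_of_le_one_left (by positivity) hA).trans ?_
      gcongr
    have n3 : ‖x‖ ^ (1 - β) * lg β ‖x‖ ≤ 8 * (r * rt β r) := by
      rw [rt_mul (by linarith)]
      have h1 := rate_comp h.hβ1 h.hβ2 one_le_two (show 3 ≤ r by linarith)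
        (show 1 ≤ ‖x‖ by linarith) (by linarith) l2
      have h2 : Real.log 2 ≤ 1 := by linarith [Real.log_two_lt_d9]
      refine h1.trans ?_
      have h3 : 0 ≤ r ^ (1 - β) * lg β r := by rw [← rt_mul (by linarith)]; positivity
      nlinarith
    have n4 : (2 * |q1 - q0|) * (3 / 2 * r) ≤ 3 * C0 * (r * rt β r) := by
      have h1 : |q1 - q0| ≤ C0 * rt β r :=
        hqd.trans (mul_le_mul_of_nonneg_left (rpow_le_rt (by linarith)) hC0.le)
      nlinarith
    have n5 := mul_le_mul_of_nonneg_left n3 hC.le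
    rw [hCm]
    linarith
  obtain ⟨b1, hb1, hb2⟩ := hT v (r / 4) (6 * C0 * r ^ (-β - 1)) (Cm * (r * rt β r))
    (by positivity) (by positivity) (by positivity)
    (fun ζ hζ => by
      obtain ⟨x, hx, hxe⟩ := hpre ζ hζ
      have h1 := (hw x hx).2.1
      rw [← hZ, ← hxe] at h1
      have h2 : ContDiffAt ℝ 1 (fun η => w η - A * η - B) (ζ + Z x0) := by fun_prop
      exact ContDiffAt.comp (g := fun η => w η - A * η - B) (f := fun ζ : ℂ => ζ + Z x0) ζ h2
        (by fun_prop))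
    (fun ζ hζ => by
      obtain ⟨x, hx, hxe⟩ := hpre ζ hζ
      rw [hv, dbar_comp_add (fun η => w η - A * η - B), hxe, dbar_sub_affine ((hw x hx).2.1.differentiableAt one_ne_zero)]
      refine (hw x hx).2.2.trans ?_
      have h1 := h.lip x0 hx0R x hx x0 hx0U
      have h2 : |q x - q1| ≤ C0 * r ^ (-β - 1) * ‖x - x0‖ := by
        have h3 : r ^ (-β - 1) = (r ^ (β + 1))⁻¹ := by
          rw [← Real.rpow_neg hr0.le]; congr 1; ring
        rw [h3, mul_right_comm, ← div_eq_mul_inv, le_div_iff₀ (by positivity), mul_comm]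
        exact h1
      have h3 := hexp (hUS hx0U) (hUS hx)
      rw [← hxe, add_sub_cancel_right] at h3
      have h4 : 0 ≤ C0 * r ^ (-β - 1) := by positivity
      nlinarith)
    (fun ζ hζ => by
      obtain ⟨x, hx, hxe⟩ := hpre ζ hζ
      simp only [hv, hxe]
      exact hbd x hx)
  have hκ : Cm * (r * rt β r) / (r / 4) + 6 * C0 * r ^ (-β - 1) * (r / 4) ≤
      (4 * Cm + 2 * C0) * rt β r := by
    have h1 : Cm * (r * rt β r) / (r / 4) = 4 * Cm * rt β r := by field_simp
    have h2 : r ^ (-β - 1) * r = r ^ (-β) := by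
      rw [Real.rpow_sub_one hr0.ne']; field_simp
    have h3 := rpow_le_rt (β := β) (r := r) (by linarith)
    have h4 : 6 * C0 * r ^ (-β - 1) * (r / 4) = 3 / 2 * C0 * r ^ (-β) := by rw [← h2]; ring
    rw [h1, h4]
    nlinarith
  have hk2 : 0 ≤ (4 * Cm + 2 * C0) * rt β r := by positivity
  refine ⟨A + b1, ?_, fun x hx hxZ => ?_⟩
  · rw [add_sub_cancel_left]
    refine hb1.trans ?_
    have := mul_le_mul_of_nonneg_left hκ hCT.le
    nlinarith
  · have hxU : x ∈ Metric.ball x0 (r / 2) := by simpa [dist_eq_norm] using hx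
    have e1 : (P x - P x0) + s' * (x - x0) = Z x - Z x0 := by simp only [hZ, shift]; ring
    rw [e1] at hxZ ⊢
    have h1 := hb2 (Z x - Z x0) (by linarith)
    have e2 : v (Z x - Z x0) - v 0 - b1 * (Z x - Z x0) =
        starRingEnd ℂ ((P x - P x0) - t' * (x - x0)) - (A + b1) * (Z x - Z x0) := by
      simp only [hv, sub_add_cancel, zero_add]
      rw [(hw x hxU).1, (hw x0 hx0U).1]
      simp only [shift, map_sub, map_add, map_mul, Complex.conj_ofReal]
      push_cast
      ring
    rw [e2] at h1
    refine h1.trans ?_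
    have h4 : (r / 4) ^ (-α) ≤ 4 * r ^ (-α) := by
      rw [Real.div_rpow hr0.le (by norm_num), Real.rpow_neg (by norm_num : (0:ℝ) ≤ 4), div_inv_eq_mul,
        mul_comm]
      gcongr
      calc (4 : ℝ) ^ α ≤ 4 ^ (1 : ℝ) := Real.rpow_le_rpow_of_exponent_le (by norm_num) hα1.le
        _ = 4 := Real.rpow_one 4
    have h5 : (0 : ℝ) ≤ ‖Z x - Z x0‖ ^ (1 + α) := by positivity
    calc _ ≤ CT * ((4 * Cm + 2 * C0) * rt β r) * (4 * r ^ (-α)) * ‖Z x - Z x0‖ ^ (1 + α) := by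
          refine mul_le_mul_of_nonneg_right (mul_le_mul ?_ h4 (by positivity) (by positivity)) h5
          exact mul_le_mul_of_nonneg_left hκ hCT.le
      _ = _ := by ring

end Core

namespace Core
variable {β C0 R0 q0 : ℝ} {P : ℂ → ℂ} {a b c q : ℂ → ℝ}

/-- Convergence rate of `D²u`, by letting `x → x₀` in `local_expansion`, and the first-order expansion
of `Du` with the remainder measured in terms of `Z'`. -/
lemma deriv_close (h : Core β C0 R0 q0 P a b c q) {α : ℝ} (hα0 : 0 < α) (hα1 : α < 1)
    {A B : ℂ} {C K M : ℝ} (hC : 0 < C) (hM : R0 ≤ M)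
    (hg : ∀ x, M ≤ ‖x‖ → ‖P x‖ ≤ K * ‖x‖ ∧
      ‖starRingEnd ℂ (shift P (-ta q0) x) - A * shift P (sg q0) x - B‖ ≤
        C * (‖x‖ ^ (1 - β) * lg β ‖x‖)) (hA : ‖A‖ < 1) :
    ∃ C2 > (0 : ℝ), ∃ M2 : ℝ, R0 ≤ M2 ∧ ∀ x0 : ℂ, M2 ≤ ‖x0‖ →
      ‖sym (a x0) (b x0) (c x0) - slp A (sg q0) (ta q0)‖ ≤ C2 * rt β ‖x0‖ ∧
      ∀ x : ℂ, ‖x - x0‖ < ‖x0‖ / 2 →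
        ‖(P x - P x0) + sg (q x0) * (x - x0)‖ < ‖x0‖ / 16 →
        ‖P x - P x0 - sym (a x0) (b x0) (c x0) (x - x0)‖ ≤
          C2 * rt β ‖x0‖ * ‖x0‖ ^ (-α) *
            ‖(P x - P x0) + sg (q x0) * (x - x0)‖ ^ (1 + α) := by
  obtain ⟨C1, hC1, hloc⟩ := h.local_expansion hα0 hα1 hC hM hg hA.le
  have hR0 := h.hR0
  have hC0 := h.hC0
  set η := (1 - ‖A‖) / 2 with hη
  have hη0 : 0 < η := by rw [hη]; linarith
  set S := slp A (sg q0) (ta q0) with hS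
  have hs0 : 0 < sg q0 := sg_pos q0
  refine ⟨(4 * C0 + C1 * (‖S‖ + sg q0) + C1) / η, by positivity, 2 * M + C1 / η,
    by linarith [show 0 ≤ C1 / η by positivity], fun x0 hx0 => ?_⟩
  have hC1η : 0 < C1 / η := by positivity
  set r := ‖x0‖ with hr
  have hr6 : 6 ≤ r := by linarith
  have hr0 : 0 < r := by linarith
  have hrt : 0 < rt β r := rt_pos (by linarith)
  obtain ⟨a1, ha1, hexp⟩ := hloc x0 (by linarith)
  have hsmall : C1 * rt β r ≤ η := by
    have h1 := rt_le_inv h.hβ1 h.hβ2 (show 3 ≤ r by linarith)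
    have h2 : C1 ≤ η * r := by
      have : C1 / η ≤ r := by linarith
      rwa [div_le_iff₀ hη0, mul_comm] at this
    calc C1 * rt β r ≤ (η * r) * (1 / r) := by gcongr
      _ = η := by field_simp
  have ha1n : ‖a1‖ ≤ 1 - η := by
    have : ‖a1‖ ≤ ‖a1 - A‖ + ‖A‖ := by simpa using norm_add_le (a1 - A) A
    linarith
  have ha1l : ‖a1‖ < 1 := by linarith
  set s' := sg (q x0) with hs'
  set t' := ta (q x0) with ht'
  have hdiv : ∀ e : ℝ, 0 ≤ e → e / (1 - ‖a1‖) ≤ e / η := fun e he => by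
    gcongr
    linarith
  have key : ∀ x : ℂ, ‖x - x0‖ < r / 2 → ‖(P x - P x0) + s' * (x - x0)‖ < r / 16 →
      ‖P x - P x0 - slp a1 s' t' (x - x0)‖ ≤
        C1 / η * rt β r * r ^ (-α) * ‖(P x - P x0) + s' * (x - x0)‖ ^ (1 + α) := by
    intro x h1 h2
    have h3 := slp_near ha1l (hexp x h1 h2)
    refine (h3.trans (hdiv _ (by positivity))).trans (le_of_eq ?_)
    ring
  have hW : HasFDerivAt (fun x => (P x - P x0) + s' * (x - x0))
      (sym (a x0 + s') (b x0) (c x0 + s')) x0 := by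
    refine ((h.hasFDerivAt_shift s' x0).sub_const (shift P s' x0)).congr_of_eventuallyEq ?_
    refine Filter.Eventually.of_forall fun x => ?_
    simp only [shift]; ring
  have hW0 : (fun x => (P x - P x0) + s' * (x - x0)) x0 = 0 := by simp
  have hWt : Filter.Tendsto (fun x => ‖(P x - P x0) + s' * (x - x0)‖) (nhds x0) (nhds 0) := by
    have := hW.continuousAt.norm.tendsto
    simpa using this
  have hD : HasFDerivAt P (slp a1 s' t') x0 := by
    rw [hasFDerivAt_iff_isLittleO]
    have o1 : (fun x => (P x - P x0) + s' * (x - x0)) =O[nhds x0] fun x => x - x0 := by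
      have := hW.isBigO_sub
      simpa using this
    have o2 : (fun x => ‖(P x - P x0) + s' * (x - x0)‖ ^ α) =o[nhds x0] fun _ => (1 : ℝ) := by
      rw [Asymptotics.isLittleO_one_iff]
      have := hWt.rpow_const (p := α) (Or.inr hα0.le)
      rwa [Real.zero_rpow hα0.ne'] at this
    have o3 := (o1.norm_norm).mul_isLittleO o2
    refine Asymptotics.IsLittleO.of_norm_right ?_
    refine Asymptotics.IsBigO.trans_isLittleO (Asymptotics.IsBigO.of_bound
      (C1 / η * rt β r * r ^ (-α)) ?_) (by simpa using o3)
    have e1 : ∀ᶠ x in nhds x0, ‖x - x0‖ < r / 2 := by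
      filter_upwards [Metric.ball_mem_nhds x0 (show 0 < r / 2 by linarith)] with x hx
      simpa [dist_eq_norm] using hx
    filter_upwards [e1, hWt.eventually_lt_const (show 0 < r / 16 by linarith)] with x h1 h2
    refine (key x h1 h2).trans (le_of_eq ?_)
    rw [Real.norm_of_nonneg (by positivity), Real.rpow_add' (norm_nonneg _) (by linarith),
      Real.rpow_one]
  have huniq : sym (a x0) (b x0) (c x0) = slp a1 s' t' := (h.hP x0).unique hD
  rw [huniq]
  have hx0R : R0 ≤ ‖x0‖ := by linarith
  constructor
  · refine (slp_sub_le hA ha1l).trans ((hdiv _ (by positivity)).trans ?_)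
    rw [div_mul_eq_mul_div]
    gcongr
    have h1 : |q x0 - q0| ≤ C0 * rt β r := (h.q_near hx0R).trans
      (mul_le_mul_of_nonneg_left (rpow_le_rt (by linarith)) hC0.le)
    have h2 := sg_lip (q x0) q0
    have h3 := ta_lip (q x0) q0
    have h4 : ‖a1 - A‖ * (‖S‖ + |sg q0|) ≤ C1 * rt β r * (‖S‖ + sg q0) := by
      rw [abs_of_pos hs0]; gcongr
    nlinarith
  · intro x h1 h2
    refine (key x h1 h2).trans ?_
    have : C1 / η ≤ (4 * C0 + C1 * (‖S‖ + sg q0) + C1) / η := by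
      gcongr
      have : 0 ≤ C1 * (‖S‖ + sg q0) := by positivity
      linarith
    gcongr

/-- The first-order expansion of `Du` on a disc whose radius is a fixed fraction of `|x₀|`. -/
lemma expansion (h : Core β C0 R0 q0 P a b c q) {α : ℝ} (hα0 : 0 < α) (hα1 : α < 1)
    {A B : ℂ} {C K M : ℝ} (hC : 0 < C) (hM : R0 ≤ M)
    (hg : ∀ x, M ≤ ‖x‖ → ‖P x‖ ≤ K * ‖x‖ ∧
      ‖starRingEnd ℂ (shift P (-ta q0) x) - A * shift P (sg q0) x - B‖ ≤
        C * (‖x‖ ^ (1 - β) * lg β ‖x‖)) (hA : ‖A‖ < 1) :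
    ∃ C3 > (0 : ℝ), ∃ κ > (0 : ℝ), κ ≤ 1 / 2 ∧ ∃ M3 : ℝ, R0 ≤ M3 ∧ ∀ x0 : ℂ, M3 ≤ ‖x0‖ →
      ‖sym (a x0) (b x0) (c x0) - slp A (sg q0) (ta q0)‖ ≤ C3 * rt β ‖x0‖ ∧
      ∀ x : ℂ, ‖x - x0‖ ≤ κ * ‖x0‖ →
        ‖P x - P x0 - sym (a x0) (b x0) (c x0) (x - x0)‖ ≤
          C3 * rt β ‖x0‖ * ‖x0‖ ^ (-α) * ‖x - x0‖ ^ (1 + α) := by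
  obtain ⟨C2, hC2, M2, hM2, hloc⟩ := h.deriv_close hα0 hα1 hC hM hg hA
  have hR0 := h.hR0
  set S := slp A (sg q0) (ta q0) with hS
  have hs0 : 0 < sg q0 := sg_pos q0
  set L := ‖S‖ + C2 + sg q0 + 1 with hL
  have hL1 : 1 ≤ L := by linarith [norm_nonneg S]
  have hbd : ∀ x, M2 ≤ ‖x‖ → ‖sym (a x) (b x) (c x)‖ ≤ ‖S‖ + C2 := by
    intro x hx
    have h1 := (hloc x hx).1
    have h2 : rt β ‖x‖ ≤ 1 := (rt_le_inv h.hβ1 h.hβ2 (by linarith)).trans (by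
      rw [div_le_one (by linarith)]; linarith)
    have h3 := norm_add_le (sym (a x) (b x) (c x) - S) S
    rw [sub_add_cancel] at h3
    nlinarith
  refine ⟨C2 * L ^ (1 + α), by positivity, 1 / (32 * L), by positivity, ?_, 2 * M2, by linarith,
    fun x0 hx0 => ?_⟩
  · rw [div_le_div_iff₀ (by positivity) (by norm_num)]; linarith
  set r := ‖x0‖ with hr
  have hr0 : 0 < r := by linarith
  have hrt : 0 < rt β r := rt_pos (by linarith)
  obtain ⟨l1, l2⟩ := hloc x0 (by linarith)
  have hLa : 1 ≤ L ^ (1 + α) := Real.one_le_rpow hL1 (by linarith)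
  refine ⟨l1.trans ?_, fun x hx => ?_⟩
  · exact mul_le_mul_of_nonneg_right (by nlinarith) hrt.le
  have hx1 : L * ‖x - x0‖ ≤ r / 32 := by
    have := mul_le_mul_of_nonneg_left hx (show 0 ≤ L by linarith)
    refine this.trans (le_of_eq ?_)
    field_simp
  have hx2 : ‖x - x0‖ ≤ r / 32 := by
    refine le_trans ?_ hx1
    nlinarith [norm_nonneg (x - x0)]
  have hlip : ‖P x - P x0‖ ≤ (‖S‖ + C2) * ‖x - x0‖ := by
    refine Convex.norm_image_sub_le_of_norm_hasFDerivWithin_le (𝕜 := ℝ)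
      (fun z _ => (h.hP z).hasFDerivWithinAt) (fun z hz => hbd z ?_)
      (convex_closedBall x0 (r / 2)) (Metric.mem_closedBall_self (by linarith)) ?_
    · rw [Metric.mem_closedBall, dist_eq_norm] at hz
      have h1 := norm_sub_norm_le x0 z
      rw [norm_sub_rev] at h1
      linarith
    · rw [Metric.mem_closedBall, dist_eq_norm]; linarith
  have hW : ‖(P x - P x0) + sg (q x0) * (x - x0)‖ ≤ L * ‖x - x0‖ := by
    refine (norm_add_le _ _).trans ?_
    rw [norm_mul, Complex.norm_real, Real.norm_of_nonneg (sg_pos _).le]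
    have h1 := sg_lip (q x0) q0
    have h2 := h.near x0 (by linarith)
    have h3 : sg (q x0) ≤ sg q0 + 1 := by linarith [(abs_le.1 h1).2]
    have h4 := mul_le_mul_of_nonneg_right h3 (norm_nonneg (x - x0))
    rw [hL]
    linarith
  refine (l2 x (by linarith) (by linarith)).trans ?_
  calc _ ≤ C2 * rt β r * r ^ (-α) * (L * ‖x - x0‖) ^ (1 + α) := by gcongr
    _ = _ := by
      rw [Real.mul_rpow (by linarith) (norm_nonneg _)]; ring

/-- Decay and Hölder bounds for `D²u`, obtained by comparing first-order expansions of `Du` at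
nearby points. -/
lemma holder (h : Core β C0 R0 q0 P a b c q) {α : ℝ} (hα0 : 0 < α) (hα1 : α < 1)
    {A B : ℂ} {C K M : ℝ} (hC : 0 < C) (hM : R0 ≤ M)
    (hg : ∀ x, M ≤ ‖x‖ → ‖P x‖ ≤ K * ‖x‖ ∧
      ‖starRingEnd ℂ (shift P (-ta q0) x) - A * shift P (sg q0) x - B‖ ≤
        C * (‖x‖ ^ (1 - β) * lg β ‖x‖)) (hA : ‖A‖ < 1) :
    ∃ C4 > (0 : ℝ), ∃ M4 : ℝ, R0 ≤ M4 ∧ ∀ z : ℂ, M4 ≤ ‖z‖ →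
      ‖sym (a z) (b z) (c z) - slp A (sg q0) (ta q0)‖ ≤ C4 * rt β ‖z‖ ∧
      ∀ x ∈ Metric.closedBall z (‖z‖ / 2), ∀ y ∈ Metric.closedBall z (‖z‖ / 2),
        ‖sym (a x) (b x) (c x) - sym (a y) (b y) (c y)‖ ≤
          C4 * rt β ‖z‖ * ‖z‖ ^ (-α) * ‖x - y‖ ^ α := by
  obtain ⟨C3, hC3, κ, hκ, hκ2, M3, hM3, hloc⟩ := h.expansion hα0 hα1 hC hM hg hA
  have hR0 := h.hR0
  set S := slp A (sg q0) (ta q0) with hS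
  have h4κ : 1 ≤ 4 / κ := by rw [le_div_iff₀ hκ]; linarith
  refine ⟨C3 * 192 * (4 / κ), by positivity, 2 * M3, by linarith, fun z hz => ?_⟩
  set r := ‖z‖ with hr
  have hr6 : 6 ≤ r := by linarith
  have hr0 : 0 < r := by linarith
  have hrt : 0 < rt β r := rt_pos (by linarith)
  have hball : ∀ x ∈ Metric.closedBall z (r / 2), r / 2 ≤ ‖x‖ ∧ rt β ‖x‖ ≤ 16 * rt β r ∧
      ‖x‖ ^ (-α) ≤ 2 * r ^ (-α) := by
    intro x hx
    rw [Metric.mem_closedBall, dist_eq_norm] at hx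
    have h1 := norm_sub_norm_le z x
    have h2 := norm_sub_norm_le x z
    rw [norm_sub_rev] at h1
    have hx1 : r / 2 ≤ ‖x‖ := by linarith
    refine ⟨hx1, ?_, ?_⟩
    · have h3 := rate_comp h.hβ1 h.hβ2 one_le_two (show 3 ≤ r by linarith)
        (show 1 ≤ ‖x‖ by linarith) (by linarith) (by linarith)
      have h4 : Real.log 2 ≤ 1 := by linarith [Real.log_two_lt_d9]
      rw [← rt_mul (by linarith), ← rt_mul (by linarith)] at h3
      have h5 : ‖x‖ * rt β ‖x‖ ≤ 8 * (r * rt β r) := by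
        refine h3.trans ?_
        have : 0 ≤ r * rt β r := by positivity
        nlinarith
      have h6 : 0 < rt β ‖x‖ := rt_pos (by linarith)
      have h7 : r / 2 * rt β ‖x‖ ≤ r / 2 * (16 * rt β r) := by nlinarith
      exact le_of_mul_le_mul_left h7 (by linarith)
    · calc ‖x‖ ^ (-α) ≤ (r / 2) ^ (-α) :=
            Real.rpow_le_rpow_of_nonpos (by positivity) hx1 (by linarith)
        _ = 2 ^ α * r ^ (-α) := by
            rw [Real.div_rpow hr0.le (by norm_num), Real.rpow_neg (by norm_num : (0:ℝ) ≤ 2),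
              div_inv_eq_mul, mul_comm]
        _ ≤ 2 * r ^ (-α) := by
            gcongr
            calc (2 : ℝ) ^ α ≤ 2 ^ (1 : ℝ) :=
                  Real.rpow_le_rpow_of_exponent_le (by norm_num) hα1.le
              _ = 2 := Real.rpow_one 2
  have hfar : ∀ x ∈ Metric.closedBall z (r / 2),
      ‖sym (a x) (b x) (c x) - S‖ ≤ C3 * 16 * rt β r := fun x hx => by
    obtain ⟨b1, b2, -⟩ := hball x hx
    have := (hloc x (by linarith)).1
    have h2 := mul_le_mul_of_nonneg_left b2 hC3.le
    linarith
  refine ⟨((hloc z (by linarith)).1).trans ?_, fun x hx y hy => ?_⟩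
  · exact mul_le_mul_of_nonneg_right (by nlinarith) hrt.le
  set d := ‖x - y‖ with hd
  rcases (norm_nonneg (x - y)).eq_or_lt with hd0 | hd0
  · rw [← hd] at hd0
    have : x = y := sub_eq_zero.1 (norm_eq_zero.1 hd0.symm)
    rw [this, sub_self, norm_zero]
    positivity
  rw [← hd] at hd0
  obtain ⟨x1, x2, x3⟩ := hball x hx
  obtain ⟨y1, y2, y3⟩ := hball y hy
  rcases le_or_gt d (κ * r / 4) with hdr | hdr
  · set ε := C3 * (16 * rt β r) * (2 * r ^ (-α)) with hε
    have hε0 : 0 ≤ ε := by positivity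
    have hX : ∀ p, ‖p - x‖ ≤ 2 * d →
        ‖P p - P x - sym (a x) (b x) (c x) (p - x)‖ ≤ ε * (2 * d) ^ (1 + α) := by
      intro p hp
      refine ((hloc x (by linarith)).2 p (by nlinarith)).trans ?_
      refine mul_le_mul ?_ (by gcongr) (by positivity) hε0
      exact mul_le_mul (by gcongr) x3 (by positivity) (by positivity)
    have hY : ∀ p, ‖p - y‖ ≤ d →
        ‖P p - P y - sym (a y) (b y) (c y) (p - y)‖ ≤ ε * d ^ (1 + α) := by
      intro p hp
      refine ((hloc y (by linarith)).2 p (by nlinarith)).trans ?_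
      refine mul_le_mul ?_ (by gcongr) (by positivity) hε0
      exact mul_le_mul (by gcongr) y3 (by positivity) (by positivity)
    have h2d : (2 * d) ^ (1 + α) ≤ 4 * d ^ (1 + α) := by
      rw [Real.mul_rpow (by norm_num) hd0.le]
      gcongr
      calc (2 : ℝ) ^ (1 + α) ≤ 2 ^ (2 : ℝ) :=
            Real.rpow_le_rpow_of_exponent_le (by norm_num) (by linarith)
        _ = 4 := by norm_num
    have h2d' := mul_le_mul_of_nonneg_left h2d hε0
    have hd1 : d ^ (1 + α) = d * d ^ α := by
      rw [Real.rpow_add hd0, Real.rpow_one]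
    refine ContinuousLinearMap.opNorm_le_of_unit_norm (by positivity) fun e he => ?_
    have hv : ‖(d : ℂ) * e‖ = d := by
      rw [norm_mul, he, mul_one, Complex.norm_real, Real.norm_of_nonneg hd0.le]
    have k1 := hX (y + (d : ℂ) * e) (by
      have : y + (d : ℂ) * e - x = (d : ℂ) * e - (x - y) := by ring
      rw [this]
      refine (norm_sub_le _ _).trans ?_
      rw [hv]; linarith)
    have k2 := hX y (by rw [norm_sub_rev]; linarith)
    have k3 := hY (y + (d : ℂ) * e) (by rw [add_sub_cancel_left, hv])
    have e1 : (d : ℂ) * ((sym (a x) (b x) (c x) - sym (a y) (b y) (c y)) e) =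
        (P (y + (d : ℂ) * e) - P y - sym (a y) (b y) (c y) (y + (d : ℂ) * e - y)) -
        (P (y + (d : ℂ) * e) - P x - sym (a x) (b x) (c x) (y + (d : ℂ) * e - x)) +
        (P y - P x - sym (a x) (b x) (c x) (y - x)) := by
      have e2 : ∀ (L : ℂ →L[ℝ] ℂ), L ((d : ℂ) * e) = (d : ℂ) * L e := fun L => by
        rw [← Complex.real_smul, L.map_smul, Complex.real_smul]
      rw [add_sub_cancel_left, sub_apply]
      simp only [map_sub, map_add, e2]
      ring
    have e3 := congrArg norm e1
    rw [norm_mul, Complex.norm_real, Real.norm_of_nonneg hd0.le] at e3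
    have e4 : d * ‖(sym (a x) (b x) (c x) - sym (a y) (b y) (c y)) e‖ ≤ d * (9 * ε * d ^ α) := by
      rw [e3]
      refine (norm_add_le _ _).trans ?_
      refine (_root_.add_le_add (norm_sub_le _ _) le_rfl).trans ?_
      rw [hd1] at h2d' k3
      linarith
    refine (le_of_mul_le_mul_left e4 hd0).trans ?_
    have : 9 * ε ≤ C3 * 192 * (4 / κ) * rt β r * r ^ (-α) := by
      have h8 : 8 ≤ 4 / κ := by rw [le_div_iff₀ hκ]; linarith
      have h9 : 0 ≤ C3 * rt β r * r ^ (-α) := by positivity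
      rw [hε]
      nlinarith
    gcongr
  · have h1 : ‖sym (a x) (b x) (c x) - sym (a y) (b y) (c y)‖ ≤ C3 * 32 * rt β r := by
      have := norm_sub_le (sym (a x) (b x) (c x) - S) (sym (a y) (b y) (c y) - S)
      rw [sub_sub_sub_cancel_right] at this
      linarith [hfar x hx, hfar y hy]
    have h2 : 1 ≤ 4 / κ * (r ^ (-α) * d ^ α) := by
      have h3 : 1 ≤ 4 / κ * (d / r) := by
        rw [div_mul_div_comm, le_div_iff₀ (by positivity)]; linarith
      have h4 : r ^ (-α) * d ^ α = (d / r) ^ α := by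
        rw [Real.div_rpow hd0.le hr0.le, Real.rpow_neg hr0.le]; field_simp
      rw [h4]
      calc (1 : ℝ) ≤ (4 / κ * (d / r)) ^ α := Real.one_le_rpow h3 hα0.le
        _ = (4 / κ) ^ α * (d / r) ^ α := Real.mul_rpow (by positivity) (by positivity)
        _ ≤ _ := by
          gcongr
          exact (Real.rpow_le_rpow_of_exponent_le h4κ hα1.le).trans_eq (Real.rpow_one _)
    refine h1.trans ?_
    have h3 : 0 ≤ C3 * rt β r := by positivity
    calc C3 * 32 * rt β r ≤ C3 * 192 * rt β r * 1 := by nlinarith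
      _ ≤ C3 * 192 * rt β r * (4 / κ * (r ^ (-α) * d ^ α)) := by gcongr
      _ = _ := by ring

end Core

/-! ### Integration along rays, blow-up, and the phase -/

/-- The gradient is asymptotically affine and its derivative converges at the expected rate, in
`C^{0,α}` for every `α`. -/
lemma Core.far {β C0 R0 q0 : ℝ} {P : ℂ → ℂ} {a b c q : ℂ → ℝ}
    (h : Core β C0 R0 q0 P a b c q) : ∃ (a' b' c' : ℝ) (B' : ℂ),
    (∃ C > (0 : ℝ), ∃ M ≥ R0, ∀ z, M ≤ ‖z‖ →
      ‖P z - sym a' b' c' z - B'‖ ≤ C * (‖z‖ ^ (1 - β) * lg β ‖z‖)) ∧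
    ∀ α : ℝ, 0 < α → α < 1 → ∃ C4 > (0 : ℝ), ∃ M4 : ℝ, R0 ≤ M4 ∧ ∀ z : ℂ, M4 ≤ ‖z‖ →
      ‖sym (a z) (b z) (c z) - sym a' b' c'‖ ≤ C4 * rt β ‖z‖ ∧
      ∀ x ∈ Metric.closedBall z (‖z‖ / 2), ∀ y ∈ Metric.closedBall z (‖z‖ / 2),
        ‖sym (a x) (b x) (c x) - sym (a y) (b y) (c y)‖ ≤
          C4 * rt β ‖z‖ * ‖z‖ ^ (-α) * ‖x - y‖ ^ α := by
  obtain ⟨A, B, C, K, M, hA, hC, hK, hM, hg⟩ := h.global_result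
  have hA1 : 0 < 1 - ‖A‖ := by linarith
  have hA2 : (1 : ℂ) - A * starRingEnd ℂ A ≠ 0 := by
    rw [Complex.mul_conj, Complex.normSq_eq_norm_sq]
    have : (1 : ℝ) - ‖A‖ ^ 2 ≠ 0 := by nlinarith [norm_nonneg A]
    exact_mod_cast this
  refine ⟨_, _, _, (starRingEnd ℂ B + starRingEnd ℂ A * B) / (1 - A * starRingEnd ℂ A),
    ⟨C / (1 - ‖A‖), by positivity, M, hM, fun z hz => ?_⟩,
    fun α h0 h1 => h.holder h0 h1 hC hM hg hA⟩
  rw [div_mul_eq_mul_div, le_div_iff₀ hA1, mul_comm]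
  refine conj_sub_lower.trans (le_of_eq_of_le (congrArg norm ?_) (hg z hz).2)
  change starRingEnd ℂ (P z - slp A (sg q0) (ta q0) z - _) - A * (P z - slp A (sg q0) (ta q0) z - _)
    = _
  have h1 := slp_spec hA (sg q0) (ta q0) z
  have h3 : starRingEnd ℂ (1 - A * starRingEnd ℂ A) = 1 - A * starRingEnd ℂ A := by
    simp [mul_comm]
  have h2 : starRingEnd ℂ ((starRingEnd ℂ B + starRingEnd ℂ A * B) / (1 - A * starRingEnd ℂ A)) -
      A * ((starRingEnd ℂ B + starRingEnd ℂ A * B) / (1 - A * starRingEnd ℂ A)) = B := by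
    rw [map_div₀, h3, ← mul_div_assoc, ← sub_div, div_eq_iff hA2]
    simp only [map_add, map_mul, Complex.conj_conj]
    ring
  simp only [map_sub, shift, map_add, map_mul, Complex.conj_ofReal] at h1 h2 ⊢
  push_cast
  linear_combination -h1 - h2

/-- Integration of a gradient bound along rays. -/
lemma growth {E : Type*} [NormedAddCommGroup E] [NormedSpace ℝ E] [ProperSpace E]
    {v : E → ℝ} (hv : Differentiable ℝ v) {β C M : ℝ} (h1 : 1 < β) (h2 : β ≤ 2) (hC : 0 < C)
    (hM : 3 ≤ M) (hG : ∀ x, M ≤ ‖x‖ → ‖fderiv ℝ v x‖ ≤ C * (‖x‖ ^ (1 - β) * lg β ‖x‖)) :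
    ∃ C' > (0 : ℝ), ∀ x, M ≤ ‖x‖ → |v x| ≤ C' * (‖x‖ ^ (2 - β) * (lg β ‖x‖) ^ 2) := by
  obtain ⟨V, hV⟩ := (isCompact_sphere (0 : E) M).exists_bound_of_continuousOn
    hv.continuous.continuousOn
  -- a primitive of the gradient bound
  obtain ⟨F, D, hD, hF0, hF, hFD⟩ : ∃ (F : ℝ → ℝ) (D : ℝ), 0 < D ∧ 0 ≤ F M ∧
      (∀ t, M ≤ t → HasDerivAt F (C * (t ^ (1 - β) * lg β t)) t) ∧
      ∀ t, M ≤ t → F t ≤ D * (t ^ (2 - β) * (lg β t) ^ 2) := by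
    rcases h2.lt_or_eq with hb | hb
    · refine ⟨fun t => C / (2 - β) * t ^ (2 - β), C / (2 - β), ?_, ?_, fun t ht => ?_, fun t ht => ?_⟩
      · have : 0 < 2 - β := by linarith
        positivity
      · have : 0 < 2 - β := by linarith
        have : 0 ≤ M := by linarith
        positivity
      · have e := (Real.hasDerivAt_rpow_const (p := 2 - β) (x := t)
          (Or.inl (by linarith))).const_mul (C / (2 - β))
        refine e.congr_deriv ?_
        rw [lg_lt h1 hb, show 2 - β - 1 = 1 - β by ring]
        have : 2 - β ≠ 0 := by linarith
        field_simp
      · rw [lg_lt h1 hb]; simp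
    · subst hb
      refine ⟨fun t => C / 2 * (Real.log t) ^ 2, C, hC, by positivity, fun t ht => ?_, fun t ht => ?_⟩
      · have ht0 : t ≠ 0 := by linarith
        have e := ((Real.hasDerivAt_log ht0).fun_pow 2).const_mul (C / 2)
        refine e.congr_deriv ?_
        rw [lg_two, show (1 : ℝ) - 2 = -1 by norm_num, Real.rpow_neg_one]
        norm_num
        ring
      · rw [lg_two]
        norm_num
        nlinarith [sq_nonneg (Real.log t)]
  refine ⟨|V| + D, by positivity, fun x hx => ?_⟩
  have hx0 : 0 < ‖x‖ := by linarith
  set e : E := ‖x‖⁻¹ • x with he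
  have hen : ‖e‖ = 1 := by
    rw [he, norm_smul, norm_inv, norm_norm, inv_mul_cancel₀ hx0.ne']
  have hte : ∀ t : ℝ, 0 ≤ t → ‖t • e‖ = t := fun t ht => by
    rw [norm_smul, hen, mul_one, Real.norm_of_nonneg ht]
  have hxe : ‖x‖ • e = x := by rw [he, smul_smul, mul_inv_cancel₀ hx0.ne', one_smul]
  have hg : ∀ t : ℝ, HasDerivAt (fun t : ℝ => v (t • e)) (fderiv ℝ v (t • e) e) t := fun t => by
    have h3 : HasDerivAt (fun t : ℝ => t • e) e t := by
      simpa using (hasDerivAt_id t).smul_const e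
    exact (hv (t • e)).hasFDerivAt.comp_hasDerivAt t h3
  have hmain := image_norm_le_of_norm_deriv_right_le_deriv_boundary' (f := fun t : ℝ => v (t • e))
    (f' := fun t => fderiv ℝ v (t • e) e) (a := M) (b := ‖x‖)
    (fun t _ => (hg t).continuousAt.continuousWithinAt)
    (fun t _ => (hg t).hasDerivWithinAt)
    (B := fun t => |V| + F t) (B' := fun t => C * (t ^ (1 - β) * lg β t))
    (by
      have := hV (M • e) (by simp [hte M (by linarith)])
      linarith [le_abs_self V])
    (fun t ht => ((hF t ht.1).const_add _).continuousAt.continuousWithinAt)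
    (fun t ht => ((hF t ht.1).const_add _).hasDerivWithinAt)
    (fun t ht => by
      have h4 := hG (t • e) (by rw [hte t (by linarith [ht.1])]; exact ht.1)
      rw [hte t (by linarith [ht.1])] at h4
      refine ((fderiv ℝ v (t • e)).le_opNorm e).trans ?_
      rw [hen, mul_one]
      exact h4)
    (Set.right_mem_Icc.2 hx)
  simp only [hxe, Real.norm_eq_abs] at hmain
  refine hmain.trans ?_
  have h5 := hFD ‖x‖ hx
  have h6 : 1 ≤ ‖x‖ ^ (2 - β) * (lg β ‖x‖) ^ 2 :=
    one_le_mul_of_one_le_of_one_le (Real.one_le_rpow (by linarith) (by linarith))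
      (one_le_pow₀ (one_le_lg (by linarith)))
  nlinarith [abs_nonneg V]

/-- Finite-time blow-up for superlinear differential inequalities. -/
lemma no_global {y y' : ℝ → ℝ} {κ β T : ℝ} (hκ : 0 < κ) (hβ : 1 < β)
    (hy : ∀ t, T ≤ t → HasDerivAt y (y' t) t) (hi : ∀ t, T ≤ t → κ * |y t| ^ β + 1 ≤ y' t) :
    False := by
  have hlow : ∀ t, T ≤ t → y T + (t - T) ≤ y t := by
    intro t ht
    have := image_le_of_deriv_right_le_deriv_boundary (f := fun t => y T + (t - T))
      (f' := fun _ => 1) (a := T) (b := t) (by fun_prop)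
      (fun s _ => (((hasDerivAt_id s).sub_const T).const_add (y T)).hasDerivWithinAt)
      (B := y) (B' := y') (by simp)
      (fun s hs => (hy s hs.1).continuousAt.continuousWithinAt)
      (fun s hs => (hy s hs.1).hasDerivWithinAt)
      (fun s hs => by
        have := hi s hs.1
        have : 0 ≤ κ * |y s| ^ β := by positivity
        linarith)
      (Set.right_mem_Icc.2 ht)
    exact this
  set T1 := T + |y T| + 1 with hT1
  have hTT : T ≤ T1 := by linarith [abs_nonneg (y T)]
  have hpos : ∀ t, T1 ≤ t → 1 ≤ y t := fun t ht => by
    have := hlow t (by linarith)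
    linarith [neg_abs_le (y T)]
  have hdec : ∀ t, T1 ≤ t → (y t) ^ (1 - β) ≤ (y T1) ^ (1 - β) - κ * (β - 1) * (t - T1) := by
    intro t ht
    have hd : ∀ s, T1 ≤ s → HasDerivAt (fun s => (y s) ^ (1 - β))
        (y' s * (1 - β) * (y s) ^ (1 - β - 1)) s := fun s hs =>
      (hy s (by linarith)).rpow_const (Or.inl (by linarith [hpos s hs]))
    exact image_le_of_deriv_right_le_deriv_boundary (f := fun s => (y s) ^ (1 - β))
      (f' := fun s => y' s * (1 - β) * (y s) ^ (1 - β - 1)) (a := T1) (b := t)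
      (fun s hs => (hd s hs.1).continuousAt.continuousWithinAt)
      (fun s hs => (hd s hs.1).hasDerivWithinAt)
      (B := fun s => (y T1) ^ (1 - β) - κ * (β - 1) * (s - T1)) (B' := fun _ => -(κ * (β - 1)))
      (by simp) (by fun_prop)
      (fun s _ => by
        have e := (((hasDerivAt_id s).sub_const T1).const_mul (κ * (β - 1))).const_sub
          ((y T1) ^ (1 - β))
        simpa using e.hasDerivWithinAt)
      (fun s hs => by
        have h1 := hpos s hs.1
        have h2 := hi s (by linarith [hs.1])
        rw [abs_of_pos (by linarith)] at h2
        have h3 : (y s) ^ (1 - β - 1) = ((y s) ^ β)⁻¹ := by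
          rw [← Real.rpow_neg (by linarith)]; congr 1; ring
        have h4 : 0 < (y s) ^ β := Real.rpow_pos_of_pos (by linarith) _
        rw [h3, ← div_eq_mul_inv, div_le_iff₀ h4]
        nlinarith)
      (Set.right_mem_Icc.2 ht)
  set D := (y T1) ^ (1 - β) / (κ * (β - 1)) with hD
  have hk : 0 < κ * (β - 1) := mul_pos hκ (by linarith)
  have hy1 : 0 < (y T1) ^ (1 - β) := Real.rpow_pos_of_pos (by linarith [hpos T1 le_rfl]) _
  have hD0 : 0 < D := div_pos hy1 hk
  have h1 := hdec (T1 + D) (by linarith)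
  have h2 : 0 < (y (T1 + D)) ^ (1 - β) :=
    Real.rpow_pos_of_pos (by linarith [hpos (T1 + D) (by linarith)]) _
  have h3 : κ * (β - 1) * (T1 + D - T1) = (y T1) ^ (1 - β) := by
    rw [add_sub_cancel_left, hD, mul_div_cancel₀ _ hk.ne']
  linarith

/-- The phase equation `arctan λ₁ + arctan λ₂ = Θ` in polynomial form. -/
lemma phase_algebra {N : Matrix (Fin 2) (Fin 2) ℝ} {Θ : ℝ} (h : Phase N = Θ) (h0 : 0 < Θ)
    (hπ : Θ < π) :
    N 0 0 * N 1 1 - N 0 1 ^ 2 + Real.cos Θ / Real.sin Θ * (N 0 0 + N 1 1) = 1 ∧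
      0 < N 0 0 + Real.cos Θ / Real.sin Θ := by
  have hs : 0 < Real.sin Θ := Real.sin_pos_of_pos_of_lt_pi h0 hπ
  set D := √((N 0 0 - N 1 1) ^ 2 + 4 * N 0 1 ^ 2) with hD
  have hD2 : D ^ 2 = (N 0 0 - N 1 1) ^ 2 + 4 * N 0 1 ^ 2 := Real.sq_sqrt (by positivity)
  have hDl : |N 0 0 - N 1 1| ≤ D := Real.abs_le_sqrt (by nlinarith [sq_nonneg (N 0 1)])
  set x := lam1 N with hx
  set y := lam2 N with hy
  have ex : x = ((N 0 0 + N 1 1) - D) / 2 := rfl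
  have ey : y = ((N 0 0 + N 1 1) + D) / 2 := rfl
  have hxy : x * y = N 0 0 * N 1 1 - N 0 1 ^ 2 := by
    rw [ex, ey]; linear_combination (-1 / 4) * hD2
  have hsum : x + y = N 0 0 + N 1 1 := by rw [ex, ey]; ring
  have hcx := Real.cos_arctan_pos x
  have hcy := Real.cos_arctan_pos y
  have hsx : Real.sin (Real.arctan x) = x * Real.cos (Real.arctan x) := by
    rw [← Real.tan_mul_cos hcx.ne', Real.tan_arctan]
  have hsy : Real.sin (Real.arctan y) = y * Real.cos (Real.arctan y) := by
    rw [← Real.tan_mul_cos hcy.ne', Real.tan_arctan]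
  have hΘ : Real.arctan x + Real.arctan y = Θ := h
  have hsin : Real.sin Θ = Real.cos (Real.arctan x) * Real.cos (Real.arctan y) * (x + y) := by
    rw [← hΘ, Real.sin_add, hsx, hsy]; ring
  have hcos : Real.cos Θ = Real.cos (Real.arctan x) * Real.cos (Real.arctan y) * (1 - x * y) := by
    rw [← hΘ, Real.cos_add, hsx, hsy]; ring
  constructor
  · rw [← hxy, ← hsum]
    field_simp
    rw [hcos, hsin]; ring
  · have h1 : 0 < x + Real.cos Θ / Real.sin Θ := by
      have h2 : x + Real.cos Θ / Real.sin Θ =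
          Real.cos (Real.arctan x) * Real.cos (Real.arctan y) * (1 + x ^ 2) / Real.sin Θ := by
        field_simp
        rw [hcos, hsin]; ring
      rw [h2]
      positivity
    have h3 : x ≤ N 0 0 := by
      rw [ex]; linarith [(abs_le.1 hDl).1]
    linarith

lemma continuous_phase : Continuous Phase := by
  unfold Phase lam1 lam2
  fun_prop

/-! ### From the real to the complex plane -/

/-- The isometry `x + iy ↦ (x, y)`. -/
def io : ℂ ≃ₗᵢ[ℝ] E2 := Complex.orthonormalBasisOneI.repr

lemma io_one : io 1 = EuclideanSpace.single 0 1 := by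
  have := Complex.orthonormalBasisOneI.repr_self 0
  simpa [io] using this

lemma io_I : io Complex.I = EuclideanSpace.single 1 1 := by
  have := Complex.orthonormalBasisOneI.repr_self 1
  simpa [io] using this

lemma io_zero_apply (z : ℂ) : io z 0 = z.re := by simp [io]

lemma io_one_apply (z : ℂ) : io z 1 = z.im := by simp [io]

/-- The gradient of a function on the plane, as a complex-valued function of a complex variable. -/
def cg (u : E2 → ℝ) (z : ℂ) : ℂ :=
  fderiv ℝ u (io z) (io 1) • (1 : ℂ) + fderiv ℝ u (io z) (io Complex.I) • Complex.I

lemma io_decomp (p : ℂ) : io p = p.re • io 1 + p.im • io Complex.I := by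
  rw [← io.map_smul, ← io.map_smul, ← io.map_add]
  congr 1
  apply Complex.ext <;> simp

lemma fderiv_io (u : E2 → ℝ) (z p : ℂ) : fderiv ℝ u (io z) (io p) = inner ℝ (cg u z) p := by
  rw [io_decomp p, map_add, (fderiv ℝ u (io z)).map_smul, (fderiv ℝ u (io z)).map_smul, Complex.inner]
  simp [cg, smul_eq_mul]

lemma norm_fderiv_io (u : E2 → ℝ) (z : ℂ) : ‖fderiv ℝ u (io z)‖ = ‖cg u z‖ := by
  have e : (fderiv ℝ u (io z)).comp (io.toContinuousLinearEquiv : ℂ →L[ℝ] E2) =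
      innerSL ℝ (cg u z) := by
    ext p
    exact fderiv_io u z p
  rw [← innerSL_apply_norm (𝕜 := ℝ) (cg u z), ← e]
  exact (ContinuousLinearMap.opNorm_comp_linearIsometryEquiv _ io).symm

lemma norm_gradient_io (u : E2 → ℝ) (z : ℂ) : ‖gradient u (io z)‖ = ‖cg u z‖ := by
  rw [← norm_fderiv_io, gradient, LinearIsometryEquiv.norm_map]

lemma hasFDerivAt_fderiv_io {u : E2 → ℝ} (hu : ContDiff ℝ 2 u) (z q : ℂ) :
    HasFDerivAt (fun z : ℂ => fderiv ℝ u (io z) (io q))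
      (((fderiv ℝ (fderiv ℝ u) (io z)).flip (io q)).comp
        (io.toContinuousLinearEquiv : ℂ →L[ℝ] E2)) z := by
  have h1 : HasFDerivAt (fderiv ℝ u) (fderiv ℝ (fderiv ℝ u) (io z)) (io z) :=
    ((hu.fderiv_right (m := 1) (by norm_num)).differentiable (by norm_num) (io z)).hasFDerivAt
  have h2 : HasFDerivAt (fun z : ℂ => io z) (io.toContinuousLinearEquiv : ℂ →L[ℝ] E2) z :=
    io.toContinuousLinearEquiv.hasFDerivAt
  have h3 := (h1.comp z h2).clm_apply (hasFDerivAt_const (io q) z)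
  refine h3.congr_fderiv ?_
  ext p
  simp

/-- The complex gradient carries the second derivative. -/
lemma iteratedFDeriv_two_io {v : E2 → ℝ} (hv : ContDiff ℝ 2 v) {z : ℂ} {L : ℂ →L[ℝ] ℂ}
    (hL : HasFDerivAt (cg v) L z) (m : Fin 2 → E2) :
    iteratedFDeriv ℝ 2 v (io z) m = inner ℝ (L (io.symm (m 0))) (io.symm (m 1)) := by
  rw [iteratedFDeriv_two_apply]
  set p := io.symm (m 0) with hp
  set q := io.symm (m 1) with hq
  have e0 : m 0 = io p := by simp [hp]
  have e1 : m 1 = io q := by simp [hq]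
  rw [e0, e1]
  have h1 := hasFDerivAt_fderiv_io hv z q
  have h2 : HasFDerivAt (fun z : ℂ => fderiv ℝ v (io z) (io q)) ((innerSL ℝ q).comp L) z := by
    have := (innerSL ℝ q).hasFDerivAt.comp z hL
    refine this.congr_of_eventuallyEq (Filter.Eventually.of_forall fun w => ?_)
    change _ = inner ℝ q (cg v w)
    change fderiv ℝ v (io w) (io q) = _
    rw [fderiv_io, real_inner_comm]
  have h3 := congrArg (fun T : ℂ →L[ℝ] ℝ => T p) (h1.unique h2)
  rw [real_inner_comm]
  exact h3

lemma hess_symm {u : E2 → ℝ} (hu : ContDiff ℝ 2 u) (x : E2) : Hess u x 1 0 = Hess u x 0 1 := by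
  have h := (hu.contDiffAt (x := x)).isSymmSndFDerivAt (by simp)
  simp only [Hess, Matrix.of_apply, iteratedFDeriv_two_apply]
  exact h _ _

lemma hasFDerivAt_cg {u : E2 → ℝ} (hu : ContDiff ℝ 2 u) (z : ℂ) :
    HasFDerivAt (cg u) (sym (Hess u (io z) 0 0) (Hess u (io z) 0 1) (Hess u (io z) 1 1)) z := by
  have h := ((hasFDerivAt_fderiv_io hu z 1).smul_const (1 : ℂ)).add
    ((hasFDerivAt_fderiv_io hu z Complex.I).smul_const Complex.I)
  refine h.congr_fderiv ?_
  have e10 := hess_symm hu (io z)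
  ext p
  rw [sym_apply]
  have k : ∀ q : ℂ, fderiv ℝ (fderiv ℝ u) (io z) (io p) (io q) =
      p.re * fderiv ℝ (fderiv ℝ u) (io z) (io 1) (io q) +
      p.im * fderiv ℝ (fderiv ℝ u) (io z) (io Complex.I) (io q) := by
    intro q
    rw [io_decomp p, map_add, (fderiv ℝ (fderiv ℝ u) (io z)).map_smul,
      (fderiv ℝ (fderiv ℝ u) (io z)).map_smul]
    rfl
  have k' : ∀ i j, Hess u (io z) i j = fderiv ℝ (fderiv ℝ u) (io z) (EuclideanSpace.single i 1)
      (EuclideanSpace.single j 1) := fun i j => by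
    simp only [Hess, Matrix.of_apply, iteratedFDeriv_two_apply]
    rfl
  rw [← e10]
  have e : ((((fderiv ℝ (fderiv ℝ u) (io z)).flip (io 1)).comp
      (io.toContinuousLinearEquiv : ℂ →L[ℝ] E2)).smulRight (1 : ℂ) +
      (((fderiv ℝ (fderiv ℝ u) (io z)).flip (io Complex.I)).comp
      (io.toContinuousLinearEquiv : ℂ →L[ℝ] E2)).smulRight Complex.I) p =
      fderiv ℝ (fderiv ℝ u) (io z) (io p) (io 1) • (1 : ℂ) +
      fderiv ℝ (fderiv ℝ u) (io z) (io p) (io Complex.I) • Complex.I := rfl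
  rw [e, k, k, k' 0 0, k' 1 1, k' 1 0, ← io_one, ← io_I]
  have e01 := e10
  rw [k', k', ← io_one, ← io_I] at e01
  apply Complex.ext
  · simp; ring
  · simp [← e01]; ring

lemma continuous_hess {u : E2 → ℝ} (hu : ContDiff ℝ 2 u) (i j : Fin 2) :
    Continuous fun z : ℂ => Hess u (io z) i j := by
  have h : Continuous (iteratedFDeriv ℝ 2 u) := hu.continuous_iteratedFDeriv (by norm_num)
  have h2 : Continuous fun z : ℂ => iteratedFDeriv ℝ 2 u (io z) := h.comp io.continuous
  simp only [Hess, Matrix.of_apply]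
  exact (ContinuousMultilinearMap.apply ℝ (fun _ : Fin 2 => E2) ℝ
    ![EuclideanSpace.single i 1, EuclideanSpace.single j 1]).continuous.comp h2

lemma rem_contDiff {u : E2 → ℝ} (hu : ContDiff ℝ 2 u) (A : Matrix (Fin 2) (Fin 2) ℝ) (b : E2) :
    ContDiff ℝ 2 (fun y => u y - quadForm A y / 2 - ∑ i, b i * y i) := by
  simp only [quadForm]
  fun_prop

/-- The complex gradient of the remainder `u - ½xᵀAx - bᵀx`. -/
lemma cg_rem {u : E2 → ℝ} (hu : ContDiff ℝ 2 u) (a b c : ℝ) (B z : ℂ) :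
    cg (fun y => u y - quadForm !![a, b; b, c] y / 2 - ∑ i, io B i * y i) z =
      cg u z - sym a b c z - B := by
  set w : E2 → ℝ := fun y => quadForm !![a, b; b, c] y / 2 + ∑ i, io B i * y i with hw
  have hwd : Differentiable ℝ w := by
    simp only [hw, quadForm]
    fun_prop
  have hud : Differentiable ℝ u := hu.differentiable (by norm_num)
  have e1 : (fun y => u y - quadForm !![a, b; b, c] y / 2 - ∑ i, io B i * y i) = u - w := by
    funext y
    simp only [hw, Pi.sub_apply]
    ring
  have e2 : fderiv ℝ (u - w) (io z) = fderiv ℝ u (io z) - fderiv ℝ w (io z) :=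
    fderiv_sub (hud _) (hwd _)
  have k0 : HasFDerivAt (fun y : E2 => y 0) (EuclideanSpace.proj (𝕜 := ℝ) (0 : Fin 2)) (io z) :=
    (EuclideanSpace.proj (𝕜 := ℝ) (0 : Fin 2) : E2 →L[ℝ] ℝ).hasFDerivAt
  have k1 : HasFDerivAt (fun y : E2 => y 1) (EuclideanSpace.proj (𝕜 := ℝ) (1 : Fin 2)) (io z) :=
    (EuclideanSpace.proj (𝕜 := ℝ) (1 : Fin 2) : E2 →L[ℝ] ℝ).hasFDerivAt
  have e3 : w = fun y : E2 => (a / 2 * (y 0 * y 0) + b * (y 0 * y 1) + c / 2 * (y 1 * y 1)) +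
      (B.re * y 0 + B.im * y 1) := by
    funext y
    simp [hw, quadForm, Fin.sum_univ_two, io_zero_apply, io_one_apply]
    ring
  have e4 := ((((k0.mul k0).const_mul (a / 2)).add
    ((k0.mul k1).const_mul b)).add ((k1.mul k1).const_mul (c / 2))).add
      ((k0.const_mul B.re).add (k1.const_mul B.im))
  have e5 := HasFDerivAt.congr_of_eventuallyEq e4 (f₁ := w)
    (Filter.Eventually.of_forall fun y => congrFun e3 y)
  rw [e1]
  simp only [cg, e2, e5.fderiv, sym_apply]
  apply Complex.ext <;>
  simp [io_zero_apply, io_one_apply] <;> ring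

/-! ### Reduction to the exterior problem -/

/-- The decay condition in the complex variable. -/
lemma decay_io {β : ℝ} (hβ : 1 < β) {u f : E2 → ℝ} (h : DecayCond β u f) :
    ∃ C > (0 : ℝ), ∃ R > (0 : ℝ), ∀ z : ℂ, R ≤ ‖z‖ →
      (‖z‖ + ‖cg u z‖) ^ β * |f (io z)| ≤ C ∧
      ∀ x ∈ Metric.ball z (‖z‖ / 2), ∀ y ∈ Metric.ball z (‖z‖ / 2),
        ‖z‖ ^ (β + 1) * |f (io x) - f (io y)| ≤ C * ‖x - y‖ := by
  obtain ⟨C, hC, R, hR, h⟩ := h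
  refine ⟨C, hC, R, hR, fun z hz => ?_⟩
  have hz0 : 0 < ‖z‖ := by linarith
  have h1 := h (io z) (by rwa [LinearIsometryEquiv.norm_map])
  rw [norm_gradient_io, LinearIsometryEquiv.norm_map] at h1
  constructor
  · exact (ENNReal.ofReal_le_ofReal_iff hC.le).1 (le_self_add.trans h1)
  · intro x hx y hy
    rcases eq_or_ne x y with rfl | hxy
    · simp
    have hxy0 : 0 < ‖x - y‖ := norm_pos_iff.2 (sub_ne_zero.2 hxy)
    have hb : ∀ w ∈ Metric.ball z (‖z‖ / 2), io w ∈ Metric.ball (io z) (‖z‖ / 2) := fun w hw => by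
      rw [Metric.mem_ball] at hw ⊢
      rwa [LinearIsometryEquiv.dist_map]
    have h2 : ENNReal.ofReal (‖f (io x) - f (io y)‖ / ‖io x - io y‖ ^ (1 : ℝ)) ≤
        hSemi 1 (Metric.ball (io z) (‖z‖ / 2)) f :=
      le_iSup₂_of_le (io x) (hb x hx) (le_iSup₂_of_le (io y) (hb y hy) le_rfl)
    rw [← map_sub, LinearIsometryEquiv.norm_map, Real.rpow_one, Real.norm_eq_abs] at h2
    have h3 := (mul_le_mul_right h2 (ENNReal.ofReal ((‖z‖ + ‖cg u z‖) ^ (β + 1)))).trans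
      (le_add_self.trans h1)
    rw [← ENNReal.ofReal_mul (by positivity), ENNReal.ofReal_le_ofReal_iff hC.le,
      ← mul_div_assoc, div_le_iff₀ hxy0] at h3
    refine le_trans (mul_le_mul_of_nonneg_right ?_ (abs_nonneg _)) h3
    exact Real.rpow_le_rpow hz0.le (by linarith [norm_nonneg (cg u z)]) (by linarith)

lemma decay_f {β : ℝ} (hβ : 1 < β) {r p g C : ℝ} (hr : 1 ≤ r) (hp : 0 ≤ p)
    (h : (r + p) ^ β * |g| ≤ C) : |g| ≤ C / r := by
  rw [le_div_iff₀ (by linarith)]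
  refine le_trans ?_ h
  rw [mul_comm]
  refine mul_le_mul_of_nonneg_right ?_ (abs_nonneg _)
  calc r ≤ r + p := by linarith
    _ = (r + p) ^ (1 : ℝ) := (Real.rpow_one _).symm
    _ ≤ _ := Real.rpow_le_rpow_of_exponent_le (by linarith) hβ.le

/-- The limiting phase is strictly below `π`: otherwise `∂₁₁u` is bounded below by a multiple of
`(|x| + |Du|)^β` along a ray, and `∂₁u` blows up at finite distance. -/
lemma theta_lt_pi {θ β : ℝ} (hβ : 1 < β) {u f : E2 → ℝ} (hu : ContDiff ℝ 2 u)
    (hrange : ∀ x : E2, θ + f x ∈ Set.Ioo 0 π) (heq : ∀ x : E2, Phase (Hess u x) = θ + f x)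
    (hdecay : DecayCond β u f) : θ < π := by
  by_contra! hθ
  obtain ⟨C, hC, R, hR, h⟩ := decay_io hβ hdecay
  set T := max R (max 1 C) with hT
  have hTR : R ≤ T := le_max_left _ _
  have hT1 : 1 ≤ T := (le_max_left _ _).trans (le_max_right _ _)
  have hTC : C ≤ T := (le_max_right _ _).trans (le_max_right _ _)
  refine no_global (y := fun t : ℝ => (cg u (t : ℂ)).re + t)
    (y' := fun t : ℝ => Hess u (io (t : ℂ)) 0 0 + 1) (κ := 1 / (2 * C)) (β := β) (T := T)
    (by positivity) hβ (fun t _ => ?_) (fun t ht => ?_)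
  · have h1 : HasDerivAt (fun t : ℝ => cg u (t : ℂ)) _ t :=
      (hasFDerivAt_cg hu (t : ℂ)).comp_hasDerivAt t (Complex.ofRealCLM.hasDerivAt (x := t))
    have h2 := (Complex.reCLM.hasFDerivAt.comp_hasDerivAt t h1).add (hasDerivAt_id t)
    refine h2.congr_deriv ?_
    simp [sym_apply]
  · have htn : ‖(t : ℂ)‖ = t := by
      rw [Complex.norm_real, Real.norm_of_nonneg (by linarith)]
    have h1 := (h (t : ℂ) (by rw [htn]; linarith)).1
    rw [htn] at h1
    obtain ⟨hr0, hr1⟩ := hrange (io (t : ℂ))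
    have h2 := (phase_algebra (heq (io (t : ℂ))) hr0 hr1).2
    set Θ := θ + f (io (t : ℂ)) with hΘ
    set g := π - Θ with hg
    have hg0 : 0 < g := by linarith
    have hgf : g ≤ |f (io (t : ℂ))| := by linarith [neg_abs_le (f (io (t : ℂ)))]
    have hg1 : g ≤ 1 := by
      refine hgf.trans ((decay_f hβ (by linarith) (norm_nonneg _) h1).trans ?_)
      rw [div_le_one (by linarith)]; linarith
    have e1 : Real.cos Θ = -Real.cos g := by rw [hg, Real.cos_pi_sub, neg_neg]
    have e2 : Real.sin Θ = Real.sin g := by rw [hg, Real.sin_pi_sub]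
    rw [e1, e2] at h2
    have hs0 : 0 < Real.sin g := e2 ▸ Real.sin_pos_of_pos_of_lt_pi hr0 hr1
    have hs1 : Real.sin g ≤ g := Real.sin_le hg0.le
    have hc : 1 / 2 ≤ Real.cos g := by
      have := Real.one_sub_sq_div_two_le_cos (x := g)
      nlinarith
    have h3 : 1 / (2 * g) ≤ Real.cos g / Real.sin g := by
      rw [div_le_div_iff₀ (by positivity) hs0]
      nlinarith
    have h4 : |(cg u (t : ℂ)).re + t| ≤ t + ‖cg u (t : ℂ)‖ := by
      refine (abs_add_le _ _).trans ?_
      rw [abs_of_nonneg (show 0 ≤ t by linarith)]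
      linarith [Complex.abs_re_le_norm (cg u (t : ℂ))]
    have h5 : |(cg u (t : ℂ)).re + t| ^ β ≤ (t + ‖cg u (t : ℂ)‖) ^ β :=
      Real.rpow_le_rpow (abs_nonneg _) h4 (by linarith)
    have h6 : 1 / (2 * C) * |(cg u (t : ℂ)).re + t| ^ β ≤ 1 / (2 * g) := by
      rw [div_mul_eq_mul_div, one_mul, div_le_div_iff₀ (by positivity) (by positivity)]
      have h7 : (t + ‖cg u (t : ℂ)‖) ^ β * g ≤ C :=
        le_trans (mul_le_mul_of_nonneg_left hgf (Real.rpow_nonneg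
          (by linarith [norm_nonneg (cg u (t : ℂ))]) _)) h1
      have h8 := mul_le_mul_of_nonneg_right h5 hg0.le
      nlinarith
    have h9 : -Real.cos g / Real.sin g = -(Real.cos g / Real.sin g) := neg_div _ _
    rw [h9] at h2
    linarith

lemma cot_sub {m s t : ℝ} (hm : 0 < m) (hs : m / 2 ≤ Real.sin s) (ht : m / 2 ≤ Real.sin t) :
    |Real.cos s / Real.sin s - Real.cos t / Real.sin t| ≤ 4 / m ^ 2 * |s - t| := by
  have hs0 : 0 < Real.sin s := by linarith
  have ht0 : 0 < Real.sin t := by linarith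
  have e : Real.cos s / Real.sin s - Real.cos t / Real.sin t =
      Real.sin (t - s) / (Real.sin s * Real.sin t) := by
    rw [Real.sin_sub]
    field_simp
  rw [e, abs_div, abs_of_pos (mul_pos hs0 ht0), div_mul_eq_mul_div]
  have h1 : |Real.sin (t - s)| ≤ |s - t| := by
    rw [abs_sub_comm s t]; exact Real.abs_sin_le_abs
  have h2 : m ^ 2 ≤ 4 * (Real.sin s * Real.sin t) := by nlinarith
  rw [div_le_div_iff₀ (mul_pos hs0 ht0) (by positivity)]
  calc |Real.sin (t - s)| * m ^ 2 ≤ |s - t| * (4 * (Real.sin s * Real.sin t)) :=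
        mul_le_mul h1 h2 (by positivity) (abs_nonneg _)
    _ = _ := by ring

/-- The hypotheses of the exterior problem hold for the cotangent of the phase. -/
lemma core_of {θ β : ℝ} (hθ : 0 < θ) (hβ1 : 1 < β) (hβ2 : β ≤ 2) {u f : E2 → ℝ}
    (hu : ContDiff ℝ 2 u) (hrange : ∀ x : E2, θ + f x ∈ Set.Ioo 0 π)
    (heq : ∀ x : E2, Phase (Hess u x) = θ + f x) (hdecay : DecayCond β u f) :
    ∃ C0 R0 : ℝ, Core β C0 R0 (Real.cos θ / Real.sin θ) (cg u) (fun z => Hess u (io z) 0 0)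
      (fun z => Hess u (io z) 0 1) (fun z => Hess u (io z) 1 1)
      (fun z => Real.cos (θ + f (io z)) / Real.sin (θ + f (io z))) := by
  have hπ := theta_lt_pi hβ1 hu hrange heq hdecay
  obtain ⟨C, hC, R, hR, h⟩ := decay_io hβ1 hdecay
  set m := Real.sin θ with hm
  have hm0 : 0 < m := Real.sin_pos_of_pos_of_lt_pi hθ hπ
  have hm1 : m ≤ 1 := Real.sin_le_one θ
  set R1 := max (max R 1) (16 * C / m ^ 2) with hR1
  have hRR : R ≤ R1 := (le_max_left _ _).trans (le_max_left _ _)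
  have hR11 : 1 ≤ R1 := (le_max_right _ _).trans (le_max_left _ _)
  have hRC : 16 * C / m ^ 2 ≤ R1 := le_max_right _ _
  have hf : ∀ z : ℂ, R1 ≤ ‖z‖ → |f (io z)| ≤ m ^ 2 / 16 := by
    intro z hz
    refine (decay_f hβ1 (by linarith) (norm_nonneg _) (h z (by linarith)).1).trans ?_
    have h1 : 16 * C / m ^ 2 ≤ ‖z‖ := hRC.trans hz
    rw [div_le_iff₀ (by positivity)] at h1
    rw [div_le_div_iff₀ (by linarith) (by norm_num)]
    linarith
  have hsin : ∀ z : ℂ, R1 ≤ ‖z‖ → m / 2 ≤ Real.sin (θ + f (io z)) := by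
    intro z hz
    have h1 : |Real.sin (θ + f (io z)) - Real.sin θ| ≤ |f (io z)| := by
      have := Real.abs_sin_sub_sin_le (θ + f (io z)) θ
      simpa using this
    have h2 := (abs_le.1 (h1.trans (hf z hz))).1
    nlinarith
  have hcot0 : ∀ z : ℂ, R1 ≤ ‖z‖ → |Real.cos (θ + f (io z)) / Real.sin (θ + f (io z)) -
      Real.cos θ / m| ≤ 4 / m ^ 2 * |f (io z)| := by
    intro z hz
    have h1 := cot_sub hm0 (hsin z hz) (t := θ) (by linarith)
    rwa [add_sub_cancel_left] at h1
  have hK : 0 < 4 / m ^ 2 := by positivity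
  refine ⟨4 / m ^ 2 * C, max 3 (2 * R1), hβ1, hβ2, by positivity, le_max_left _ _,
    hasFDerivAt_cg hu, continuous_hess hu 0 0, continuous_hess hu 0 1, continuous_hess hu 1 1,
    fun z hz => ?_, fun z hz => ?_, fun z hz => ?_, fun z hz => ?_, fun z hz x hx y hy => ?_⟩
  · exact (phase_algebra (heq _) (hrange _).1 (hrange _).2).1
  · exact (phase_algebra (heq _) (hrange _).1 (hrange _).2).2
  all_goals have hz1 : 2 * R1 ≤ ‖z‖ := (le_max_right _ _).trans hz
  · refine (hcot0 z (by linarith)).trans ?_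
    refine (mul_le_mul_of_nonneg_left (hf z (by linarith)) hK.le).trans (le_of_eq ?_)
    field_simp
    norm_num
  · have h1 := mul_le_mul_of_nonneg_left (hcot0 z (by linarith))
      (show 0 ≤ (‖z‖ + ‖cg u z‖) ^ β by positivity)
    refine h1.trans ?_
    have h2 := mul_le_mul_of_nonneg_left (h z (by linarith)).1 hK.le
    linarith
  · have hb : ∀ w ∈ Metric.ball z (‖z‖ / 2), R1 ≤ ‖w‖ := fun w hw => by
      rw [Metric.mem_ball, dist_eq_norm] at hw
      have := norm_sub_norm_le z w
      rw [norm_sub_rev] at this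
      linarith
    have h1 := cot_sub hm0 (hsin x (hb x hx)) (hsin y (hb y hy))
    rw [add_sub_add_left_eq_sub] at h1
    have h2 := mul_le_mul_of_nonneg_left h1 (show 0 ≤ ‖z‖ ^ (β + 1) by positivity)
    have h3 := mul_le_mul_of_nonneg_left ((h z (by linarith)).2 x hx y hy) hK.le
    refine h2.trans ?_
    linarith

/-! ### The expansion at infinity -/

/-- Second derivatives are controlled by the derivative of the complex gradient. -/
lemma norm_two_sub_le {v : E2 → ℝ} (hv : ContDiff ℝ 2 v) {z w : ℂ} {L L' : ℂ →L[ℝ] ℂ}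
    (hL : HasFDerivAt (cg v) L z) (hL' : HasFDerivAt (cg v) L' w) :
    ‖iteratedFDeriv ℝ 2 v (io z) - iteratedFDeriv ℝ 2 v (io w)‖ ≤ ‖L - L'‖ := by
  refine ContinuousMultilinearMap.opNorm_le_bound (norm_nonneg _) fun m => ?_
  rw [sub_apply, iteratedFDeriv_two_io hv hL, iteratedFDeriv_two_io hv hL',
    ← inner_sub_left, ← sub_apply, Fin.prod_univ_two, ← mul_assoc]
  refine (norm_inner_le_norm _ _).trans ?_
  rw [LinearIsometryEquiv.norm_map]
  refine mul_le_mul_of_nonneg_right ?_ (norm_nonneg _)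
  refine ((L - L').le_opNorm _).trans (le_of_eq ?_)
  rw [LinearIsometryEquiv.norm_map]

lemma norm_two_le {v : E2 → ℝ} (hv : ContDiff ℝ 2 v) {z : ℂ} {L : ℂ →L[ℝ] ℂ}
    (hL : HasFDerivAt (cg v) L z) : ‖iteratedFDeriv ℝ 2 v (io z)‖ ≤ ‖L‖ := by
  refine ContinuousMultilinearMap.opNorm_le_bound (norm_nonneg _) fun m => ?_
  rw [iteratedFDeriv_two_io hv hL, Fin.prod_univ_two, ← mul_assoc]
  refine (norm_inner_le_norm _ _).trans ?_
  rw [LinearIsometryEquiv.norm_map]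
  refine mul_le_mul_of_nonneg_right ?_ (norm_nonneg _)
  refine (L.le_opNorm _).trans (le_of_eq ?_)
  rw [LinearIsometryEquiv.norm_map]

lemma sym_entries_le (a b c a' b' c' : ℝ) : |a - a'| ≤ ‖sym a b c - sym a' b' c'‖ ∧
    |b - b'| ≤ ‖sym a b c - sym a' b' c'‖ ∧ |c - c'| ≤ ‖sym a b c - sym a' b' c'‖ := by
  have h1 := (sym a b c - sym a' b' c').le_opNorm 1
  have h2 := (sym a b c - sym a' b' c').le_opNorm Complex.I
  rw [sub_apply, sym_apply, sym_apply, norm_one, mul_one] at h1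
  rw [sub_apply, sym_apply, sym_apply, Complex.norm_I, mul_one] at h2
  have e1 := (Complex.abs_re_le_norm _).trans h1
  have e2 := (Complex.abs_im_le_norm _).trans h1
  have e3 := (Complex.abs_im_le_norm _).trans h2
  simp at e1 e2 e3
  exact ⟨e1, e2, e3⟩

/-- The limit Hessian has phase `θ`. -/
lemma phase_limit {θ β C4 M4 : ℝ} (hβ1 : 1 < β) (hβ2 : β ≤ 2) {u f : E2 → ℝ}
    (hu : ContDiff ℝ 2 u) (heq : ∀ x : E2, Phase (Hess u x) = θ + f x)
    (hdecay : DecayCond β u f) {a' b' c' : ℝ} (hC4 : 0 < C4)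
    (h : ∀ z : ℂ, M4 ≤ ‖z‖ → ‖sym (Hess u (io z) 0 0) (Hess u (io z) 0 1) (Hess u (io z) 1 1) -
      sym a' b' c'‖ ≤ C4 * rt β ‖z‖) : Phase !![a', b'; b', c'] = θ := by
  obtain ⟨C, hC, R, hR, hd⟩ := decay_io hβ1 hdecay
  have hn : ∀ t : ℝ, 0 ≤ t → ‖(t : ℂ)‖ = t := fun t ht => by
    rw [Complex.norm_real, Real.norm_of_nonneg ht]
  have lim : ∀ (g : ℝ → ℝ) (l K T : ℝ), (∀ t, T ≤ t → |g t - l| ≤ K / t) →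
      Filter.Tendsto g Filter.atTop (nhds l) := by
    intro g l K T hg
    rw [tendsto_iff_norm_sub_tendsto_zero]
    refine squeeze_zero' (Filter.Eventually.of_forall fun _ => norm_nonneg _)
      ((Filter.eventually_ge_atTop T).mono fun t ht => hg t ht)
      (Filter.Tendsto.div_atTop tendsto_const_nhds Filter.tendsto_id)
  have hs : ∀ t : ℝ, max 3 M4 ≤ t →
      ‖sym (Hess u (io (t : ℂ)) 0 0) (Hess u (io (t : ℂ)) 0 1) (Hess u (io (t : ℂ)) 1 1) -
      sym a' b' c'‖ ≤ C4 / t := by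
    intro t ht
    have h3 : 3 ≤ t := (le_max_left _ _).trans ht
    have h4 : M4 ≤ t := (le_max_right _ _).trans ht
    have h5 := h (t : ℂ) (by rwa [hn t (by linarith)])
    rw [hn t (by linarith)] at h5
    refine h5.trans ((mul_le_mul_of_nonneg_left (rt_le_inv hβ1 hβ2 h3) hC4.le).trans
      (le_of_eq (by ring)))
  have la := lim (fun t => Hess u (io (t : ℂ)) 0 0) a' C4 _
    fun t ht => (sym_entries_le _ _ _ _ _ _).1.trans (hs t ht)
  have lb := lim (fun t => Hess u (io (t : ℂ)) 0 1) b' C4 _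
    fun t ht => (sym_entries_le _ _ _ _ _ _).2.1.trans (hs t ht)
  have lc := lim (fun t => Hess u (io (t : ℂ)) 1 1) c' C4 _
    fun t ht => (sym_entries_le _ _ _ _ _ _).2.2.trans (hs t ht)
  have lH : Filter.Tendsto (fun t : ℝ => Hess u (io (t : ℂ))) Filter.atTop
      (nhds !![a', b'; b', c']) := by
    refine tendsto_pi_nhds.2 fun i => tendsto_pi_nhds.2 fun j => ?_
    fin_cases i <;> fin_cases j
    · exact la
    · exact lb
    · simpa [hess_symm hu] using lb
    · exact lc
  have l1 : Filter.Tendsto (fun t : ℝ => Phase (Hess u (io (t : ℂ)))) Filter.atTop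
      (nhds (Phase !![a', b'; b', c'])) := (continuous_phase.tendsto _).comp lH
  have l2 : Filter.Tendsto (fun t : ℝ => Phase (Hess u (io (t : ℂ)))) Filter.atTop (nhds θ) := by
    refine lim _ _ C (max 1 R) fun t ht => ?_
    have h1 : 1 ≤ t := (le_max_left _ _).trans ht
    have h4 : R ≤ t := (le_max_right _ _).trans ht
    rw [heq, add_sub_cancel_left]
    have h5 := (hd (t : ℂ) (by rwa [hn t (by linarith)])).1
    rw [hn t (by linarith)] at h5
    exact decay_f hβ1 h1 (norm_nonneg _) h5
  exact tendsto_nhds_unique l1 l2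

theorem statement3
    (θ β : ℝ) (hθ : 0 < θ) (hβ1 : 1 < β) (hβ2 : β ≤ 2)
    (Ω : Set E2) (hΩo : IsOpen Ω) (hΩb : Bornology.IsBounded Ω)
    (u f : E2 → ℝ) (hu : ContDiff ℝ 2 u)
    (hfc : Continuous f) (hfl : ∃ K : NNReal, LipschitzOnWith K f (closure Ω)ᶜ)
    (hrange : ∀ x : E2, θ + f x ∈ Set.Ioo 0 π)
    (heq : ∀ x : E2, Phase (Hess u x) = θ + f x)
    (hdecay : DecayCond β u f) :
    ∃ A ∈ calA θ, ∃ b : E2, ∀ α ∈ Set.Ioo (0:ℝ) 1, ∃ C > (0:ℝ), ∃ R > (1:ℝ),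
      ∀ x : E2, R ≤ ‖x‖ →
      (∀ k : ℕ, k ≤ 2 →
        ‖iteratedFDeriv ℝ k (fun y => u y - quadForm A y / 2 - ∑ i, b i * y i) x‖
          ≤ C * ‖x‖ ^ (2 - β - k) * (Real.log ‖x‖) ^ (2 * (⌊β⌋₊ - 1)))
      ∧ hSemi α (Metric.closedBall x (‖x‖ / 2))
          (iteratedFDeriv ℝ 2 (fun y => u y - quadForm A y / 2 - ∑ i, b i * y i))
          ≤ ENNReal.ofReal (C * ‖x‖ ^ (-β - α) * (Real.log ‖x‖) ^ (2 * (⌊β⌋₊ - 1))) := by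
  obtain ⟨C0, R0, hcore⟩ := core_of hθ hβ1 hβ2 hu hrange heq hdecay
  have hR03 := hcore.hR0
  obtain ⟨a', b', c', B', ⟨C1, hC1, M1, hM1, hg1⟩, hfar⟩ := hcore.far
  have hphase : Phase !![a', b'; b', c'] = θ := by
    obtain ⟨C4, hC4, M4, -, h4⟩ := hfar (1 / 2) (by norm_num) (by norm_num)
    exact phase_limit hβ1 hβ2 hu heq hdecay hC4 fun z hz => (h4 z hz).1
  refine ⟨!![a', b'; b', c'], ⟨?_, hphase⟩, io B', fun α hα => ?_⟩
  · ext i j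
    fin_cases i <;> fin_cases j <;> rfl
  obtain ⟨C4, hC4, M4, hM4, h4⟩ := hfar α hα.1 hα.2
  set v : E2 → ℝ := fun y => u y - quadForm !![a', b'; b', c'] y / 2 - ∑ i, io B' i * y i with hv
  have hvC : ContDiff ℝ 2 v := rem_contDiff hu _ _
  have hcg : cg v = fun z => cg u z - sym a' b' c' z - B' := funext (cg_rem hu a' b' c' B')
  have hD : ∀ z, HasFDerivAt (cg v) (sym (Hess u (io z) 0 0) (Hess u (io z) 0 1)
      (Hess u (io z) 1 1) - sym a' b' c') z := fun z => by
    rw [hcg]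
    exact ((hasFDerivAt_cg hu z).sub (sym a' b' c').hasFDerivAt).sub_const B'
  have hG : ∀ x : E2, M1 ≤ ‖x‖ → ‖fderiv ℝ v x‖ ≤ C1 * (‖x‖ ^ (1 - β) * lg β ‖x‖) := by
    intro x hx
    obtain ⟨z, rfl⟩ := io.surjective x
    rw [LinearIsometryEquiv.norm_map] at hx ⊢
    rw [norm_fderiv_io, hcg]
    exact hg1 z hx
  obtain ⟨C', hC', hV⟩ := growth (hvC.differentiable (by norm_num)) hβ1 hβ2 hC1
    (hR03.trans hM1) hG
  refine ⟨C' + C1 + C4, by positivity, max M1 M4, ?_, fun x hx => ?_⟩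
  · exact lt_of_lt_of_le (by linarith) (le_max_left M1 M4)
  have hx1 : M1 ≤ ‖x‖ := (le_max_left _ _).trans hx
  have hx4 : M4 ≤ ‖x‖ := (le_max_right _ _).trans hx
  have hx3 : 3 ≤ ‖x‖ := by linarith
  have hx0 : 0 < ‖x‖ := by linarith
  have hlg1 : 1 ≤ lg β ‖x‖ := one_le_lg hx3
  have hlgs : (Real.log ‖x‖) ^ (2 * (⌊β⌋₊ - 1)) = lg β ‖x‖ ^ 2 := by
    rw [lg, mul_comm, pow_mul]
  have hlg2 : lg β ‖x‖ ≤ lg β ‖x‖ ^ 2 := by nlinarith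
  rw [hlgs]
  obtain ⟨z, rfl⟩ := io.surjective x
  rw [LinearIsometryEquiv.norm_map] at *
  obtain ⟨h41, h42⟩ := h4 z hx4
  -- every estimate is of the form `K * r ^ e * lg ^ i` with `K ≤ C' + C1 + C4` and `i ≤ 2`
  have fin : ∀ (K e : ℝ), K ≤ C' + C1 + C4 → K * ‖z‖ ^ e * lg β ‖z‖ ^ 2 ≤
      (C' + C1 + C4) * ‖z‖ ^ e * lg β ‖z‖ ^ 2 := fun K e hK => by
    refine mul_le_mul_of_nonneg_right (mul_le_mul_of_nonneg_right hK ?_) (by positivity)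
    exact (Real.rpow_pos_of_pos hx0 _).le
  have fin2 : ∀ (K e : ℝ), 0 < K → K ≤ C' + C1 + C4 → K * ‖z‖ ^ e * lg β ‖z‖ ≤
      (C' + C1 + C4) * ‖z‖ ^ e * lg β ‖z‖ ^ 2 := fun K e hK0 hK => by
    refine le_trans (mul_le_mul_of_nonneg_left hlg2 ?_) (fin K e hK)
    exact mul_nonneg hK0.le (Real.rpow_pos_of_pos hx0 _).le
  constructor
  · intro k hk
    interval_cases k
    · rw [norm_iteratedFDeriv_zero, Real.norm_eq_abs, Nat.cast_zero, sub_zero]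
      have h5 := hV (io z) (by rwa [LinearIsometryEquiv.norm_map])
      rw [LinearIsometryEquiv.norm_map, ← mul_assoc] at h5
      exact h5.trans (fin _ _ (by linarith))
    · rw [norm_iteratedFDeriv_one, Nat.cast_one]
      have h5 := hG (io z) (by rwa [LinearIsometryEquiv.norm_map])
      rw [LinearIsometryEquiv.norm_map, ← mul_assoc] at h5
      rw [show 2 - β - 1 = 1 - β by ring]
      exact h5.trans (fin2 _ _ hC1 (by linarith))
    · refine (norm_two_le hvC (hD z)).trans (h41.trans ?_)
      rw [rt, ← mul_assoc, Nat.cast_ofNat, show 2 - β - 2 = -β by ring]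
      exact fin2 _ _ hC4 (by linarith)
  · refine iSup₂_le fun x hx => iSup₂_le fun y hy => ENNReal.ofReal_le_ofReal ?_
    obtain ⟨x, rfl⟩ := io.surjective x
    obtain ⟨y, rfl⟩ := io.surjective y
    rw [Metric.mem_closedBall, LinearIsometryEquiv.dist_map] at hx hy
    rcases eq_or_ne x y with rfl | hxy
    · rw [sub_self, norm_zero, zero_div]
      exact mul_nonneg (mul_nonneg (by positivity) (Real.rpow_pos_of_pos hx0 _).le) (by positivity)
    have hxy0 : 0 < ‖x - y‖ := norm_pos_iff.2 (sub_ne_zero.2 hxy)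
    rw [← map_sub, LinearIsometryEquiv.norm_map, div_le_iff₀ (Real.rpow_pos_of_pos hxy0 _)]
    refine (norm_two_sub_le hvC (hD x) (hD y)).trans ?_
    rw [sub_sub_sub_cancel_right]
    refine (h42 x hx y hy).trans (mul_le_mul_of_nonneg_right ?_ (Real.rpow_pos_of_pos hxy0 _).le)
    refine le_trans (le_of_eq ?_) (fin2 C4 (-β - α) hC4 (by linarith))
    rw [rt, sub_eq_add_neg, Real.rpow_add hx0]
    ring
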